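/- Under the stated parameter constraints, there exist k₀ > 0 and C > 0 such that for every k ≥ k₀ there is a function W : [0,∞) → ℂ, continuous on [0,∞), twice differentiable on (0,∞), satisfying W''(t) = k²(c t^α − μ) W(t) for all t > 0, with ∫₀^∞ |W(t)|² dt < ∞, and such that: |W(t)| ≤ C·|q(t)|^{−1/4}·(e^{k(Re S(t) − 2R₀)} + e^{−k·Re S(t)}) for all t ∈ [0, Z₀]; |W(t)| ≤ C·|q(t)|^{−1/4}·e^{k(Re S(t) − 2R₀)} for all t > Z₀; and |W(0)| ≥ 1/C. -/

import Mathlib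

open MeasureTheory Set

/-- `t₀(α) = 2πα/(α+2)`. -/
noncomputable def t0 (α : ℝ) : ℝ := 2 * Real.pi * α / (α + 2)

/-! ### Energy estimates for the Liouville–Green system -/

/-- A weighted arithmetic-geometric inequality used for the energy estimates. -/
theorem two_mul_mul_mul_le {n m c b X p : ℝ} (hn : 0 ≤ n) (hm : 0 ≤ m)
    (hX : X ^ 2 ≤ 5 * p) (hnm : 5 * c ^ 2 ≤ m * n) :
    2 * c * b * X ≤ n * b ^ 2 + m * p := by
  have h1 : n * b ^ 2 + m * (X ^ 2 / 5) ≤ n * b ^ 2 + m * p := by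
    gcongr; linarith
  refine le_trans ?_ h1
  have h2 : 0 ≤ n * b ^ 2 + m * (X ^ 2 / 5) := by positivity
  refine (le_abs_self _).trans (abs_le_of_sq_le_sq ?_ h2)
  nlinarith [sq_nonneg (n * b ^ 2 - m * (X ^ 2 / 5)),
    mul_le_mul_of_nonneg_right hnm (mul_nonneg (sq_nonneg b) (sq_nonneg X))]

/-- Monotonicity of the weighted energy of the coupled system `a' = c b`, `b' = -2 k Γ b + c a`
in the direction in which `b` is damped. -/
theorem antitoneOn_energy {s₀ s₁ k : ℝ} {a b c Γ : ℝ → ℂ} {m E : ℝ → ℝ} (ζ : ℂ)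
    (ha : ContinuousOn a (Icc s₀ s₁)) (hb : ContinuousOn b (Icc s₀ s₁))
    (hE : ContinuousOn E (Icc s₀ s₁))
    (ha' : ∀ s ∈ Ioo s₀ s₁, HasDerivAt a (c s * b s) s)
    (hb' : ∀ s ∈ Ioo s₀ s₁, HasDerivAt b (-(2 * k * Γ s) * b s + c s * a s) s)
    (hE' : ∀ s ∈ Ioo s₀ s₁, HasDerivAt E (m s) s)
    (hΓ : ∀ s ∈ Ioo s₀ s₁, 0 ≤ 4 * k * (Γ s).re)
    (hm : ∀ s ∈ Ioo s₀ s₁, 0 ≤ m s)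
    (hkey : ∀ s ∈ Ioo s₀ s₁, 5 * ‖c s‖ ^ 2 ≤ m s * (4 * k * (Γ s).re + m s)) :
    AntitoneOn (fun s => (‖a s - ζ‖ ^ 2 + ‖b s‖ ^ 2 + ‖ζ‖ ^ 2) * Real.exp (-E s))
      (Icc s₀ s₁) := by
  have hd : ∀ s ∈ Ioo s₀ s₁, HasDerivAt
      (fun s => (‖a s - ζ‖ ^ 2 + ‖b s‖ ^ 2 + ‖ζ‖ ^ 2) * Real.exp (-E s))
      ((2 * inner ℝ (a s - ζ) (c s * b s)
        + 2 * inner ℝ (b s) (-(2 * k * Γ s) * b s + c s * a s)) * Real.exp (-E s)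
        + (‖a s - ζ‖ ^ 2 + ‖b s‖ ^ 2 + ‖ζ‖ ^ 2) * (Real.exp (-E s) * (-m s))) s := by
    intro s hs
    exact ((((ha' s hs).sub_const ζ).norm_sq.add (hb' s hs).norm_sq).add_const _).mul
      (hE' s hs).neg.exp
  refine antitoneOn_of_deriv_nonpos (convex_Icc _ _) (by fun_prop) ?_ ?_
  · intro s hs
    rw [interior_Icc] at hs
    exact (hd s hs).differentiableAt.differentiableWithinAt
  intro s hs
  rw [interior_Icc] at hs
  rw [(hd s hs).deriv]
  have key : 2 * inner ℝ (a s - ζ) (c s * b s)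
        + 2 * inner ℝ (b s) (-(2 * k * Γ s) * b s + c s * a s)
        ≤ m s * (‖a s - ζ‖ ^ 2 + ‖b s‖ ^ 2 + ‖ζ‖ ^ 2) := by
    have e1 : inner ℝ (b s) (-(2 * k * Γ s) * b s + c s * a s)
        = -(2 * k * (Γ s).re) * ‖b s‖ ^ 2 + inner ℝ (b s) (c s * (a s - ζ))
          + inner ℝ (b s) (c s * ζ) := by
      rw [← Complex.normSq_eq_norm_sq, Complex.normSq_apply]
      simp [Complex.inner]
      ring
    have e2 : inner ℝ (a s - ζ) (c s * b s) ≤ ‖a s - ζ‖ * (‖c s‖ * ‖b s‖) := by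
      rw [← norm_mul]; exact real_inner_le_norm _ _
    have e3 : inner ℝ (b s) (c s * (a s - ζ)) ≤ ‖b s‖ * (‖c s‖ * ‖a s - ζ‖) := by
      rw [← norm_mul]; exact real_inner_le_norm _ _
    have e4 : inner ℝ (b s) (c s * ζ) ≤ ‖b s‖ * (‖c s‖ * ‖ζ‖) := by
      rw [← norm_mul]; exact real_inner_le_norm _ _
    have e5 := two_mul_mul_mul_le (n := 4 * k * (Γ s).re + m s) (m := m s) (c := ‖c s‖)
      (b := ‖b s‖) (X := 2 * ‖a s - ζ‖ + ‖ζ‖) (p := ‖a s - ζ‖ ^ 2 + ‖ζ‖ ^ 2)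
      (add_nonneg (hΓ s hs) (hm s hs)) (hm s hs)
      (by nlinarith [sq_nonneg (‖a s - ζ‖ - 2 * ‖ζ‖)]) (hkey s hs)
    rw [e1]
    nlinarith
  nlinarith [Real.exp_pos (-E s)]

/-- Coefficients of the Liouville–Green ansatz along a path: `g` is a square root of the potential,
`τ` the velocity, `c` half the logarithmic derivative of `g` and `F` the growing
Liouville–Green factor. -/
structure IsWKBPath (k s₀ s₁ : ℝ) (g F τ c : ℝ → ℂ) : Prop where
  cont_g : ContinuousOn g (Icc s₀ s₁)
  cont_F : ContinuousOn F (Icc s₀ s₁)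
  F_ne : ∀ s ∈ Icc s₀ s₁, F s ≠ 0
  deriv_g : ∀ s ∈ Ioo s₀ s₁, HasDerivAt g (2 * c s * g s) s
  deriv_F : ∀ s ∈ Ioo s₀ s₁, HasDerivAt F ((k * τ s * g s + c s) * F s) s

/-- `(W, Y)` solves the first order system `W' = τ Y`, `Y' = k² τ g² W`. -/
structure IsPathSol (k s₀ s₁ : ℝ) (g τ W Y : ℝ → ℂ) : Prop where
  cont_W : ContinuousOn W (Icc s₀ s₁)
  cont_Y : ContinuousOn Y (Icc s₀ s₁)
  deriv_W : ∀ s ∈ Ioo s₀ s₁, HasDerivAt W (τ s * Y s) s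
  deriv_Y : ∀ s ∈ Ioo s₀ s₁, HasDerivAt Y (k ^ 2 * τ s * g s ^ 2 * W s) s

/-- The squared distance to the pure growing Liouville–Green mode of amplitude `ζ`. -/
noncomputable def wkbEnergy (k : ℝ) (g F W Y : ℝ → ℂ) (ζ : ℂ) (s : ℝ) : ℝ :=
  ‖(k * g s * W s + Y s) / F s - ζ‖ ^ 2 + ‖(k * g s * W s - Y s) / F s‖ ^ 2 + ‖ζ‖ ^ 2

section
variable {k s₀ s₁ : ℝ} {g F τ c W Y : ℝ → ℂ}

theorem IsWKBPath.hasDerivAt_growing (hp : IsWKBPath k s₀ s₁ g F τ c)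
    (hs : IsPathSol k s₀ s₁ g τ W Y) {s : ℝ} (h : s ∈ Ioo s₀ s₁) :
    HasDerivAt (fun s => (k * g s * W s + Y s) / F s)
      (c s * ((k * g s * W s - Y s) / F s)) s := by
  have hF := hp.F_ne s (Ioo_subset_Icc_self h)
  convert! ((((hp.deriv_g s h).const_mul (k : ℂ)).mul (hs.deriv_W s h)).add (hs.deriv_Y s h)).div
    (hp.deriv_F s h) hF using 1
  simp only [Pi.add_apply, Pi.mul_apply]
  field_simp
  ring

theorem IsWKBPath.hasDerivAt_decaying (hp : IsWKBPath k s₀ s₁ g F τ c)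
    (hs : IsPathSol k s₀ s₁ g τ W Y) {s : ℝ} (h : s ∈ Ioo s₀ s₁) :
    HasDerivAt (fun s => (k * g s * W s - Y s) / F s)
      (-(2 * k * (τ s * g s)) * ((k * g s * W s - Y s) / F s)
        + c s * ((k * g s * W s + Y s) / F s)) s := by
  have hF := hp.F_ne s (Ioo_subset_Icc_self h)
  convert! ((((hp.deriv_g s h).const_mul (k : ℂ)).mul (hs.deriv_W s h)).sub (hs.deriv_Y s h)).div
    (hp.deriv_F s h) hF using 1
  simp only [Pi.mul_apply, Pi.sub_apply]
  field_simp
  ring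

theorem wkbEnergy_forward {m E : ℝ → ℝ} (ζ : ℂ) (hp : IsWKBPath k s₀ s₁ g F τ c)
    (hs : IsPathSol k s₀ s₁ g τ W Y) (hE : ContinuousOn E (Icc s₀ s₁))
    (hE' : ∀ s ∈ Ioo s₀ s₁, HasDerivAt E (m s) s)
    (hΓ : ∀ s ∈ Ioo s₀ s₁, 0 ≤ 4 * k * (τ s * g s).re)
    (hm : ∀ s ∈ Ioo s₀ s₁, 0 ≤ m s)
    (hkey : ∀ s ∈ Ioo s₀ s₁, 5 * ‖c s‖ ^ 2 ≤ m s * (4 * k * (τ s * g s).re + m s))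
    {s : ℝ} (h : s ∈ Icc s₀ s₁) :
    wkbEnergy k g F W Y ζ s ≤ Real.exp (E s - E s₀) * wkbEnergy k g F W Y ζ s₀ := by
  have hg := hp.cont_g
  have hF := hp.cont_F
  have hW := hs.cont_W
  have hY := hs.cont_Y
  have := antitoneOn_energy (k := k) (c := c) (Γ := fun s => τ s * g s) (m := m) (E := E) ζ
    (a := fun s => (k * g s * W s + Y s) / F s) (b := fun s => (k * g s * W s - Y s) / F s)
    (ContinuousOn.div (by fun_prop) hF hp.F_ne) (ContinuousOn.div (by fun_prop) hF hp.F_ne) hE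
    (fun s h => hp.hasDerivAt_growing hs h) (fun s h => hp.hasDerivAt_decaying hs h) hE' hΓ hm hkey
    (left_mem_Icc.2 (h.1.trans h.2)) h h.1
  simp only at this
  rw [Real.exp_sub, div_mul_eq_mul_div, le_div_iff₀ (Real.exp_pos _)]
  rw [Real.exp_neg, Real.exp_neg, ← div_eq_mul_inv, ← div_eq_mul_inv,
    div_le_div_iff₀ (Real.exp_pos _) (Real.exp_pos _)] at this
  unfold wkbEnergy
  linarith

theorem wkbEnergy_backward {m E : ℝ → ℝ} (ζ : ℂ) (hp : IsWKBPath k s₀ s₁ g F τ c)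
    (hs : IsPathSol k s₀ s₁ g τ W Y) (hE : ContinuousOn E (Icc s₀ s₁))
    (hE' : ∀ s ∈ Ioo s₀ s₁, HasDerivAt E (m s) s)
    (hΓ : ∀ s ∈ Ioo s₀ s₁, 0 ≤ 4 * k * -(τ s * g s).re)
    (hm : ∀ s ∈ Ioo s₀ s₁, 0 ≤ m s)
    (hkey : ∀ s ∈ Ioo s₀ s₁, 5 * ‖c s‖ ^ 2 ≤ m s * (4 * k * -(τ s * g s).re + m s))
    {s : ℝ} (h : s ∈ Icc s₀ s₁) :
    wkbEnergy k g F W Y ζ s ≤ Real.exp (E s₁ - E s) * wkbEnergy k g F W Y ζ s₁ := by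
  have hmap : MapsTo (fun s : ℝ => -s) (Icc (-s₁) (-s₀)) (Icc s₀ s₁) := by
    intro s hs; simp only [mem_Icc] at *; constructor <;> linarith [hs.1, hs.2]
  have hmap' : ∀ s ∈ Ioo (-s₁) (-s₀), -s ∈ Ioo s₀ s₁ := by
    intro s hs; simp only [mem_Ioo] at *; constructor <;> linarith [hs.1, hs.2]
  have hcomp : ∀ {G : Type} [NormedAddCommGroup G] [NormedSpace ℝ G] {f : ℝ → G} {f' : G} {s : ℝ},
      HasDerivAt f f' (-s) → HasDerivAt (fun s => f (-s)) (-f') s := by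
    intro G _ _ f f' s hf
    simpa [Function.comp_def] using hf.scomp s (hasDerivAt_neg s)
  have hp' : IsWKBPath k (-s₁) (-s₀) (fun s => g (-s)) (fun s => F (-s)) (fun s => -τ (-s))
      (fun s => -c (-s)) :=
    ⟨hp.cont_g.comp continuousOn_neg hmap, hp.cont_F.comp continuousOn_neg hmap,
      fun s hs => hp.F_ne _ (hmap hs),
      fun s hs => by convert! hcomp (hp.deriv_g _ (hmap' s hs)) using 1; ring,
      fun s hs => by convert! hcomp (hp.deriv_F _ (hmap' s hs)) using 1; ring⟩
  have hs' : IsPathSol k (-s₁) (-s₀) (fun s => g (-s)) (fun s => -τ (-s))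
      (fun s => W (-s)) (fun s => Y (-s)) :=
    ⟨hs.cont_W.comp continuousOn_neg hmap, hs.cont_Y.comp continuousOn_neg hmap,
      fun s h => by convert! hcomp (hs.deriv_W _ (hmap' s h)) using 1; ring,
      fun s h => by convert! hcomp (hs.deriv_Y _ (hmap' s h)) using 1; ring⟩
  have := wkbEnergy_forward (m := fun s => m (-s)) (E := fun s => -E (-s)) ζ hp' hs'
    (hE.comp continuousOn_neg hmap).neg
    (fun s h => by convert! (hcomp (hE' _ (hmap' s h))).neg using 1; simp)
    (fun s h => by simpa using hΓ _ (hmap' s h)) (fun s h => hm _ (hmap' s h))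
    (fun s h => by simpa using hkey _ (hmap' s h)) (s := -s)
    ⟨neg_le_neg h.2, neg_le_neg h.1⟩
  simpa [wkbEnergy, sub_eq_add_neg, add_comm] using this

end

/-! ### Potentials along rays -/

/-- `1 - r^α e^{iω}`. -/
noncomputable def rayH (α ω r : ℝ) : ℂ := 1 - ((r ^ α : ℝ) : ℂ) * Complex.exp (Complex.I * ω)

/-- The continuous square root of `e^{iA} r^α - e^{iB}` with value `-i e^{iB/2}` at `r = 0`. -/
noncomputable def rayG (α A B r : ℝ) : ℂ :=
  -Complex.I * Complex.exp (Complex.I * ((B / 2 : ℝ) : ℂ)) * rayH α (A - B) r ^ ((1 / 2 : ℝ) : ℂ)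

/-- Half the logarithmic derivative of `rayG`. -/
noncomputable def rayC (α ω r : ℝ) : ℂ :=
  -((α * r ^ (α - 1) : ℝ) : ℂ) * Complex.exp (Complex.I * ω) / (4 * rayH α ω r)

/-- The primitive of `rayG`. -/
noncomputable def rayS (α A B r : ℝ) : ℂ := ∫ s in (0 : ℝ)..r, rayG α A B s

/-- The Liouville–Green factor along a ray, with sign `ε` in the exponent. -/
noncomputable def rayF (α A B k ε r : ℝ) : ℂ :=
  rayH α (A - B) r ^ ((1 / 4 : ℝ) : ℂ) * Complex.exp (k * ε * rayS α A B r)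

/-- The density of the error-control function along a ray. -/
noncomputable def rayM (α A B k r : ℝ) : ℝ :=
  5 * ‖rayC α (A - B) r‖ ^ 2 / (‖rayC α (A - B) r‖ + k * |(rayG α A B r).re|)

theorem rayH_zero {α ω : ℝ} (hα : 0 < α) : rayH α ω 0 = 1 := by
  simp [rayH, Real.zero_rpow hα.ne']

theorem rayH_im (α ω r : ℝ) : (rayH α ω r).im = -(r ^ α * Real.sin ω) := by
  simp [rayH, Complex.exp_im]

theorem rayH_mem_slitPlane {α ω : ℝ} (hω : Real.sin ω ≠ 0) (r : ℝ) :
    rayH α ω r ∈ Complex.slitPlane := by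
  by_cases hr : r ^ α = 0
  · simp [rayH, hr]
  · refine Or.inr ?_
    rw [rayH_im]
    exact neg_ne_zero.2 (mul_ne_zero hr hω)

theorem rayH_ne_zero {α ω : ℝ} (hω : Real.sin ω ≠ 0) (r : ℝ) : rayH α ω r ≠ 0 :=
  Complex.slitPlane_ne_zero (rayH_mem_slitPlane hω r)

theorem continuous_rayH {α ω : ℝ} (hα : 0 < α) : Continuous (rayH α ω) := by
  have := Real.continuous_rpow_const hα.le
  unfold rayH
  fun_prop

theorem continuous_rayH_cpow {α ω : ℝ} (hα : 0 < α) (hω : Real.sin ω ≠ 0) (p : ℂ) :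
    Continuous (fun r => rayH α ω r ^ p) :=
  (continuous_rayH hα).cpow continuous_const (rayH_mem_slitPlane hω)

theorem continuous_rayG {α A B : ℝ} (hα : 0 < α) (hω : Real.sin (A - B) ≠ 0) :
    Continuous (rayG α A B) :=
  continuous_const.mul (continuous_rayH_cpow hα hω _)

theorem rayG_zero {α A B : ℝ} (hα : 0 < α) :
    rayG α A B 0 = -Complex.I * Complex.exp (Complex.I * ((B / 2 : ℝ) : ℂ)) := by
  simp [rayG, rayH_zero hα]

theorem rayG_sq (α A B r : ℝ) : rayG α A B r ^ 2 =
    Complex.exp (Complex.I * A) * ((r ^ α : ℝ) : ℂ) - Complex.exp (Complex.I * B) := by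
  have h1 : (rayH α (A - B) r ^ ((1 / 2 : ℝ) : ℂ)) ^ 2 = rayH α (A - B) r := by
    rw [← Complex.cpow_nat_mul]; norm_num
  have h2 : Complex.exp (Complex.I * ((B / 2 : ℝ) : ℂ)) ^ 2 = Complex.exp (Complex.I * B) := by
    rw [← Complex.exp_nat_mul]; congr 1; push_cast; ring
  have h3 : Complex.exp (Complex.I * A)
      = Complex.exp (Complex.I * B) * Complex.exp (Complex.I * ((A - B : ℝ) : ℂ)) := by
    rw [← Complex.exp_add]; congr 1; push_cast; ring
  rw [rayG, mul_pow, mul_pow, h1, h2, h3, rayH, neg_sq, Complex.I_sq]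
  ring

theorem norm_rayG (α A B r : ℝ) :
    ‖rayG α A B r‖ = ‖rayH α (A - B) r‖ ^ (1 / 2 : ℝ) := by
  have h1 : ‖Complex.exp (Complex.I * ((B / 2 : ℝ) : ℂ))‖ = 1 := by
    rw [mul_comm]; exact Complex.norm_exp_ofReal_mul_I _
  rw [rayG, norm_mul, norm_mul, h1, Complex.norm_cpow_real]
  simp

theorem rayG_ne_zero {α A B : ℝ} (hω : Real.sin (A - B) ≠ 0) (r : ℝ) : rayG α A B r ≠ 0 := by
  rw [← norm_pos_iff, norm_rayG]
  exact Real.rpow_pos_of_pos (norm_pos_iff.2 (rayH_ne_zero hω r)) _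

theorem norm_rayF (α A B k ε r : ℝ) :
    ‖rayF α A B k ε r‖
      = ‖rayH α (A - B) r‖ ^ (1 / 4 : ℝ) * Real.exp (k * ε * (rayS α A B r).re) := by
  rw [rayF, norm_mul, Complex.norm_cpow_real, Complex.norm_exp]
  congr 2
  simp [mul_assoc]

theorem rayF_ne_zero {α A B : ℝ} (hω : Real.sin (A - B) ≠ 0) (k ε r : ℝ) :
    rayF α A B k ε r ≠ 0 := by
  rw [← norm_pos_iff, norm_rayF]
  exact mul_pos (Real.rpow_pos_of_pos (norm_pos_iff.2 (rayH_ne_zero hω r)) _) (Real.exp_pos _)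

theorem rayF_zero {α A B : ℝ} (hα : 0 < α) (k ε : ℝ) : rayF α A B k ε 0 = 1 := by
  simp [rayF, rayH_zero hα, rayS]

theorem hasDerivAt_rayS {α A B : ℝ} (hα : 0 < α) (hω : Real.sin (A - B) ≠ 0) (r : ℝ) :
    HasDerivAt (rayS α A B) (rayG α A B r) r :=
  (continuous_rayG hα hω).integral_hasStrictDerivAt 0 r |>.hasDerivAt

theorem hasDerivAt_rayH {α ω r : ℝ} (hr : 0 < r) (hω : Real.sin ω ≠ 0) :
    HasDerivAt (rayH α ω) (4 * rayC α ω r * rayH α ω r) r := by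
  have h := ((Real.hasDerivAt_rpow_const (p := α) (Or.inl hr.ne')).ofReal_comp.mul_const
    (Complex.exp (Complex.I * ω))).const_sub 1
  convert! h using 1
  have := rayH_ne_zero (α := α) hω r
  rw [rayC]
  field_simp

theorem hasDerivAt_rayH_cpow {α ω r : ℝ} (hr : 0 < r) (hω : Real.sin ω ≠ 0) (p : ℂ) :
    HasDerivAt (fun r => rayH α ω r ^ p) (4 * p * rayC α ω r * rayH α ω r ^ p) r := by
  convert! ((hasDerivAt_id (rayH α ω r)).cpow_const (c := p)
    (rayH_mem_slitPlane hω r)).comp r (hasDerivAt_rayH (α := α) hr hω) using 1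
  have := rayH_ne_zero (α := α) hω r
  simp only [id]
  rw [Complex.cpow_sub _ _ this, Complex.cpow_one]
  field_simp

theorem hasDerivAt_rayG {α A B r : ℝ} (hr : 0 < r) (hω : Real.sin (A - B) ≠ 0) :
    HasDerivAt (rayG α A B) (2 * rayC α (A - B) r * rayG α A B r) r := by
  convert! (hasDerivAt_rayH_cpow (α := α) hr hω ((1 / 2 : ℝ) : ℂ)).const_mul
    (-Complex.I * Complex.exp (Complex.I * ((B / 2 : ℝ) : ℂ))) using 1
  rw [rayG]
  push_cast
  ring

theorem hasDerivAt_rayF {α A B r : ℝ} (hα : 0 < α) (hr : 0 < r) (hω : Real.sin (A - B) ≠ 0)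
    (k ε : ℝ) : HasDerivAt (rayF α A B k ε)
      ((k * ε * rayG α A B r + rayC α (A - B) r) * rayF α A B k ε r) r := by
  convert! (hasDerivAt_rayH_cpow (α := α) hr hω ((1 / 4 : ℝ) : ℂ)).mul
    (((hasDerivAt_rayS hα hω r).const_mul (k * ε : ℂ)).cexp) using 1
  rw [rayF]
  push_cast
  ring

theorem isWKBPath_ray {α A B s₀ s₁ : ℝ} (hα : 0 < α) (hω : Real.sin (A - B) ≠ 0) (h₀ : 0 ≤ s₀)
    (k ε : ℝ) : IsWKBPath k s₀ s₁ (fun r => ε * rayG α A B r) (rayF α A B k ε) 1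
      (rayC α (A - B)) where
  cont_g := (continuous_const.mul (continuous_rayG hα hω)).continuousOn
  cont_F := by
    have : Continuous (rayS α A B) :=
      continuous_iff_continuousAt.2 fun r => (hasDerivAt_rayS hα hω r).continuousAt
    have := continuous_rayH_cpow (ω := A - B) hα hω ((1 / 4 : ℝ) : ℂ)
    unfold rayF
    fun_prop
  F_ne s _ := rayF_ne_zero hω _ _ _
  deriv_g s hs := by
    convert! (hasDerivAt_rayG (α := α) (h₀.trans_lt hs.1) hω).const_mul (ε : ℂ) using 1
    ring
  deriv_F s hs := by
    convert! hasDerivAt_rayF hα (h₀.trans_lt hs.1) hω k ε using 1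
    simp [mul_assoc]

theorem abs_sin_le_norm_rayH (α ω r : ℝ) : |Real.sin ω| ≤ ‖rayH α ω r‖ := by
  have h : (rayH α ω r * Complex.exp (Complex.I * ((-ω : ℝ) : ℂ))).im = -Real.sin ω := by
    rw [rayH, sub_mul, mul_assoc, ← Complex.exp_add]
    simp [Complex.exp_im]
  have h1 : ‖Complex.exp (Complex.I * ((-ω : ℝ) : ℂ))‖ = 1 := by
    rw [mul_comm]; exact Complex.norm_exp_ofReal_mul_I _
  have h2 := Complex.abs_im_le_norm (rayH α ω r * Complex.exp (Complex.I * ((-ω : ℝ) : ℂ)))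
  rwa [h, abs_neg, norm_mul, h1, mul_one] at h2

theorem rpow_mul_abs_sin_le_norm_rayH (α ω : ℝ) {r : ℝ} (hr : 0 ≤ r) :
    r ^ α * |Real.sin ω| ≤ ‖rayH α ω r‖ := by
  have h2 := Complex.abs_im_le_norm (rayH α ω r)
  rwa [rayH_im, abs_neg, abs_mul, abs_of_nonneg (Real.rpow_nonneg hr _)] at h2

theorem norm_rayC {α r : ℝ} (ω : ℝ) (hα : 0 < α) (hr : 0 < r) :
    ‖rayC α ω r‖ = α * r ^ (α - 1) / (4 * ‖rayH α ω r‖) := by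
  have h1 : ‖Complex.exp (Complex.I * (ω : ℂ))‖ = 1 := by
    rw [mul_comm]; exact Complex.norm_exp_ofReal_mul_I _
  have h2 : ‖((α * r ^ (α - 1) : ℝ) : ℂ)‖ = α * r ^ (α - 1) :=
    Complex.norm_of_nonneg (mul_nonneg hα.le (Real.rpow_nonneg hr.le _))
  rw [rayC, norm_div, norm_mul, norm_neg, h1, h2]
  simp

theorem norm_rayC_pos {α ω r : ℝ} (hα : 0 < α) (hω : Real.sin ω ≠ 0) (hr : 0 < r) :
    0 < ‖rayC α ω r‖ := by
  rw [norm_rayC ω hα hr]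
  have := norm_pos_iff.2 (rayH_ne_zero (α := α) hω r)
  positivity

theorem norm_rayC_le {α ω r : ℝ} (hα : 0 < α) (hω : Real.sin ω ≠ 0) (hr : 0 < r) :
    ‖rayC α ω r‖ ≤ α / (4 * |Real.sin ω|) * r ^ (α - 1) := by
  rw [norm_rayC ω hα hr, div_mul_eq_mul_div]
  have := abs_pos.2 hω
  gcongr
  exact abs_sin_le_norm_rayH _ _ _

theorem norm_rayC_le_inv {α ω r : ℝ} (hα : 0 < α) (hω : Real.sin ω ≠ 0) (hr : 0 < r) :
    ‖rayC α ω r‖ ≤ α / (4 * |Real.sin ω|) * r⁻¹ := by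
  have hs := abs_pos.2 hω
  have hp := Real.rpow_pos_of_pos hr α
  calc ‖rayC α ω r‖ = α * r ^ (α - 1) / (4 * ‖rayH α ω r‖) := norm_rayC ω hα hr
    _ ≤ α * r ^ (α - 1) / (4 * (r ^ α * |Real.sin ω|)) := by
        gcongr
        exact rpow_mul_abs_sin_le_norm_rayH _ _ hr.le
    _ = α / (4 * |Real.sin ω|) * r⁻¹ := by
        rw [Real.rpow_sub_one hr.ne']
        field_simp

theorem rayM_nonneg (α A B r : ℝ) {k : ℝ} (hk : 0 ≤ k) : 0 ≤ rayM α A B k r := by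
  unfold rayM; positivity

theorem rayM_key (α A B r : ℝ) {k : ℝ} (hk : 0 ≤ k) :
    5 * ‖rayC α (A - B) r‖ ^ 2
      ≤ rayM α A B k r * (4 * k * |(rayG α A B r).re| + rayM α A B k r) := by
  rcases (norm_nonneg (rayC α (A - B) r)).eq_or_lt with h0 | h0
  · simp [rayM, ← h0]
  unfold rayM
  set c := ‖rayC α (A - B) r‖
  have hG := mul_nonneg hk (abs_nonneg (rayG α A B r).re)
  rw [mul_assoc 4]
  set G := k * |(rayG α A B r).re|
  have : 5 * c ^ 2 / (c + G) * (4 * G + 5 * c ^ 2 / (c + G)) - 5 * c ^ 2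
      = 5 * c ^ 2 * (3 * G ^ 2 + 2 * c * G + 4 * c ^ 2) / (c + G) ^ 2 := by
    field_simp; ring
  have h2 : 0 ≤ 5 * c ^ 2 * (3 * G ^ 2 + 2 * c * G + 4 * c ^ 2) / (c + G) ^ 2 := by positivity
  linarith

theorem continuousOn_rayM {α A B k : ℝ} (hα : 0 < α) (hω : Real.sin (A - B) ≠ 0) (hk : 0 ≤ k) :
    ContinuousOn (rayM α A B k) (Ioi 0) := by
  have h1 : ContinuousOn (rayC α (A - B)) (Ioi 0) := by
    have := (continuous_rayH (ω := A - B) hα).continuousOn (s := Ioi 0)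
    have h2 : ContinuousOn (fun r : ℝ => r ^ (α - 1)) (Ioi 0) :=
      continuousOn_id.rpow_const fun x hx => Or.inl (ne_of_gt hx)
    unfold rayC
    refine ContinuousOn.div (by fun_prop) (by fun_prop) fun r _ => ?_
    exact mul_ne_zero (by norm_num) (rayH_ne_zero hω r)
  have h3 : ContinuousOn (fun r => |(rayG α A B r).re|) (Ioi 0) :=
    (Complex.continuous_re.comp (continuous_rayG (α := α) hα hω)).abs.continuousOn
  unfold rayM
  refine ContinuousOn.div (by fun_prop) (by fun_prop) fun r hr => ?_
  have := norm_rayC_pos hα hω hr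
  positivity

theorem rayM_le_norm_rayC (α A B r : ℝ) {k : ℝ} (hk : 0 ≤ k) :
    rayM α A B k r ≤ 5 * ‖rayC α (A - B) r‖ := by
  rcases (norm_nonneg (rayC α (A - B) r)).eq_or_lt with h0 | h0
  · simp [rayM, ← h0]
  unfold rayM
  rw [div_le_iff₀ (by positivity)]
  have := mul_nonneg h0.le (mul_nonneg hk (abs_nonneg (rayG α A B r).re))
  nlinarith

theorem rayM_le_div (α A B r : ℝ) {k : ℝ} (hk : 0 < k) (hr : (rayG α A B r).re ≠ 0) :
    rayM α A B k r ≤ 5 * ‖rayC α (A - B) r‖ ^ 2 / (k * |(rayG α A B r).re|) := by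
  have := abs_pos.2 hr
  unfold rayM
  gcongr
  linarith [norm_nonneg (rayC α (A - B) r)]

theorem rayM_anti {α A B r k l : ℝ} (hα : 0 < α) (hω : Real.sin (A - B) ≠ 0) (hr : 0 < r)
    (hk : 0 ≤ k) (hkl : k ≤ l) : rayM α A B l r ≤ rayM α A B k r := by
  have := norm_rayC_pos hα hω hr
  unfold rayM
  gcongr

theorem abs_re_rayG_ge {α A B r : ℝ} (hA : 0 < 1 + Real.cos A) (hr : 0 < r)
    (hrA : 4 / (1 + Real.cos A) ≤ r ^ α) :
    √(1 + Real.cos A) / 2 * r ^ (α / 2) ≤ |(rayG α A B r).re| := by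
  have hq := rayG_sq α A B r
  have hre : (rayG α A B r).re ^ 2 - (rayG α A B r).im ^ 2
      = Real.cos A * r ^ α - Real.cos B := by
    have := congrArg Complex.re hq
    simp [pow_two, Complex.exp_re] at this
    linarith
  have h1 : ∀ x : ℝ, ‖Complex.exp (Complex.I * (x : ℂ))‖ = 1 := fun x => by
    rw [mul_comm]; exact Complex.norm_exp_ofReal_mul_I _
  have hno : r ^ α - 1 ≤ (rayG α A B r).re ^ 2 + (rayG α A B r).im ^ 2 := by
    have e1 : ‖rayG α A B r‖ ^ 2 = (rayG α A B r).re ^ 2 + (rayG α A B r).im ^ 2 := by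
      rw [← Complex.normSq_eq_norm_sq, Complex.normSq_apply]; ring
    rw [← e1, ← norm_pow, hq]
    have := norm_sub_norm_le (Complex.exp (Complex.I * A) * ((r ^ α : ℝ) : ℂ))
      (Complex.exp (Complex.I * B))
    rwa [norm_mul, h1, h1, Complex.norm_real, Real.norm_of_nonneg (Real.rpow_nonneg hr.le _),
      one_mul] at this
  have hB := Real.cos_le_one B
  rw [div_le_iff₀ hA] at hrA
  have hpos : 0 ≤ √(1 + Real.cos A) / 2 * r ^ (α / 2) := by
    have := Real.rpow_nonneg hr.le (α / 2); positivity
  rw [← abs_of_nonneg hpos, ← sq_le_sq]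
  have e : (r ^ (α / 2)) ^ 2 = r ^ α := by
    rw [← Real.rpow_natCast, ← Real.rpow_mul hr.le]; congr 1; push_cast; ring
  rw [mul_pow, div_pow, Real.sq_sqrt hA.le, e]
  nlinarith

theorem integrableOn_rayM_one {α A B : ℝ} (hα : 0 < α) (hω : Real.sin (A - B) ≠ 0)
    (hA : 0 < 1 + Real.cos A) : IntegrableOn (rayM α A B 1) (Ioi 0) := by
  set R : ℝ := (4 / (1 + Real.cos A)) ^ (1 / α) with hR
  have hR0 : 0 < R := by positivity
  have hRα : R ^ α = 4 / (1 + Real.cos A) := by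
    rw [hR, ← Real.rpow_mul (by positivity), one_div_mul_cancel hα.ne', Real.rpow_one]
  have hmeas : ∀ s ⊆ Ioi (0 : ℝ), MeasurableSet s →
      AEStronglyMeasurable (rayM α A B 1) (volume.restrict s) := fun s hs hm =>
    ((continuousOn_rayM hα hω zero_le_one).mono hs).aestronglyMeasurable hm
  have hs := abs_pos.2 hω
  rw [← Ioc_union_Ioi_eq_Ioi hR0.le]
  refine IntegrableOn.union ?_ ?_
  · have hi : IntegrableOn (fun r : ℝ => 5 * (α / (4 * |Real.sin (A - B)|) * r ^ (α - 1)))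
        (Ioc 0 R) := by
      have := (intervalIntegral.intervalIntegrable_rpow' (a := 0) (b := R)
        (show -1 < α - 1 by linarith)).1
      exact (this.const_mul _).const_mul _
    refine hi.mono' (hmeas _ Ioc_subset_Ioi_self measurableSet_Ioc) ?_
    filter_upwards [ae_restrict_mem measurableSet_Ioc] with r hr
    rw [Real.norm_of_nonneg (rayM_nonneg _ _ _ _ zero_le_one)]
    exact (rayM_le_norm_rayC _ _ _ _ zero_le_one).trans (by gcongr; exact norm_rayC_le hα hω hr.1)
  · have hi : IntegrableOn (fun r : ℝ => 5 * (α / (4 * |Real.sin (A - B)|)) ^ 2 /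
        (√(1 + Real.cos A) / 2) * r ^ (-2 - α / 2)) (Ioi R) :=
      (integrableOn_Ioi_rpow_of_lt (by linarith) hR0).const_mul _
    refine hi.mono' (hmeas _ (Ioi_subset_Ioi hR0.le) measurableSet_Ioi) ?_
    filter_upwards [ae_restrict_mem measurableSet_Ioi] with r hr
    have hr0 : 0 < r := hR0.trans hr
    have hge : √(1 + Real.cos A) / 2 * r ^ (α / 2) ≤ |(rayG α A B r).re| := by
      refine abs_re_rayG_ge hA hr0 ?_
      rw [← hRα]
      exact Real.rpow_le_rpow hR0.le (le_of_lt hr) hα.le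
    have hp := Real.rpow_pos_of_pos hr0 (α / 2)
    have hq := Real.sqrt_pos.2 hA
    have hne : (rayG α A B r).re ≠ 0 := by
      have : 0 < |(rayG α A B r).re| := lt_of_lt_of_le (by positivity) hge
      exact abs_pos.1 this
    rw [Real.norm_of_nonneg (rayM_nonneg _ _ _ _ zero_le_one)]
    refine (rayM_le_div _ _ _ _ one_pos hne).trans ?_
    rw [one_mul]
    calc 5 * ‖rayC α (A - B) r‖ ^ 2 / |(rayG α A B r).re|
        ≤ 5 * (α / (4 * |Real.sin (A - B)|) * r⁻¹) ^ 2 / (√(1 + Real.cos A) / 2 * r ^ (α / 2)) := by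
          gcongr
          exact norm_rayC_le_inv hα hω hr0
      _ = _ := by
          rw [Real.rpow_sub hr0, Real.rpow_neg hr0.le, Real.rpow_two]
          field_simp

theorem integrableOn_rayM {α A B k : ℝ} (hα : 0 < α) (hω : Real.sin (A - B) ≠ 0)
    (hA : 0 < 1 + Real.cos A) (hk : 1 ≤ k) : IntegrableOn (rayM α A B k) (Ioi 0) := by
  refine (integrableOn_rayM_one hα hω hA).mono'
    ((continuousOn_rayM hα hω (by linarith)).aestronglyMeasurable measurableSet_Ioi) ?_
  filter_upwards [ae_restrict_mem measurableSet_Ioi] with r hr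
  rw [Real.norm_of_nonneg (rayM_nonneg _ _ _ _ (by linarith))]
  exact rayM_anti hα hω hr zero_le_one hk

theorem re_rayG_ne_zero {α A B r : ℝ}
    (h : Real.sin A * r ^ α ≠ Real.sin B) : (rayG α A B r).re ≠ 0 := by
  intro h0
  have := congrArg Complex.im (rayG_sq α A B r)
  simp [pow_two, Complex.exp_im, Complex.exp_re, h0] at this
  exact h (by linarith)

/-- The total error control tends to zero for large `k`. -/
theorem tendsto_integral_rayM {α A B : ℝ} (hα : 0 < α) (hω : Real.sin (A - B) ≠ 0)
    (hA : 0 < 1 + Real.cos A) (hsA : Real.sin A ≠ 0) :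
    Filter.Tendsto (fun k => ∫ r in Ioi 0, rayM α A B k r) Filter.atTop (nhds 0) := by
  have hlim : ∀ᵐ r ∂(volume.restrict (Ioi (0 : ℝ))),
      Filter.Tendsto (fun k => rayM α A B k r) Filter.atTop (nhds 0) := by
    have hnull : ∀ᵐ r ∂(volume.restrict (Ioi (0 : ℝ))), r ≠ (Real.sin B / Real.sin A) ^ (1 / α) :=
      Measure.ae_ne _ _
    filter_upwards [hnull, ae_restrict_mem measurableSet_Ioi] with r hr hr0
    have hne : (rayG α A B r).re ≠ 0 := by
      refine re_rayG_ne_zero fun h => hr ?_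
      rw [← h, mul_div_cancel_left₀ _ hsA, ← Real.rpow_mul (le_of_lt hr0),
        mul_one_div_cancel hα.ne', Real.rpow_one]
    refine squeeze_zero' (Filter.eventually_atTop.2 ⟨0, fun k hk => rayM_nonneg _ _ _ _ hk⟩)
      (Filter.eventually_atTop.2 ⟨1, fun k hk => rayM_le_div _ _ _ _ (by linarith) hne⟩) ?_
    exact Filter.Tendsto.const_div_atTop
      (Filter.tendsto_id.atTop_mul_const (abs_pos.2 hne)) _
  have := tendsto_integral_filter_of_dominated_convergence (μ := volume.restrict (Ioi (0 : ℝ)))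
    (F := fun k r => rayM α A B k r) (f := fun _ => 0) (l := Filter.atTop) (rayM α A B 1) ?_ ?_
    (integrableOn_rayM_one hα hω hA) hlim
  · simpa using this
  · exact Filter.eventually_atTop.2 ⟨0, fun k hk =>
      (continuousOn_rayM hα hω hk).aestronglyMeasurable measurableSet_Ioi⟩
  · refine Filter.eventually_atTop.2 ⟨1, fun k hk => ?_⟩
    filter_upwards [ae_restrict_mem measurableSet_Ioi] with r hr
    rw [Real.norm_of_nonneg (rayM_nonneg _ _ _ _ (by linarith))]
    exact rayM_anti hα hω hr zero_le_one hk

theorem hasDerivAt_integral_rayM {α A B k r : ℝ} (hα : 0 < α) (hω : Real.sin (A - B) ≠ 0)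
    (hA : 0 < 1 + Real.cos A) (hk : 1 ≤ k) (hr : 0 < r) :
    HasDerivAt (fun r => ∫ s in (0 : ℝ)..r, rayM α A B k s) (rayM α A B k r) r := by
  have hc := continuousOn_rayM (k := k) hα hω (by linarith)
  refine intervalIntegral.integral_hasDerivAt_right ?_ ?_ (hc.continuousAt (Ioi_mem_nhds hr))
  · rw [intervalIntegrable_iff_integrableOn_Ioc_of_le hr.le]
    exact (integrableOn_rayM hα hω hA hk).mono_set Ioc_subset_Ioi_self
  · exact hc.stronglyMeasurableAtFilter isOpen_Ioi r hr

theorem continuousOn_integral_rayM {α A B k : ℝ} (hα : 0 < α) (hω : Real.sin (A - B) ≠ 0)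
    (hA : 0 < 1 + Real.cos A) (hk : 1 ≤ k) {s₁ : ℝ} :
    ContinuousOn (fun r => ∫ s in (0 : ℝ)..r, rayM α A B k s) (Icc 0 s₁) := by
  rcases lt_or_ge s₁ 0 with h | h
  · simp [Icc_eq_empty_of_lt h]
  have hi : IntegrableOn (rayM α A B k) (uIcc 0 s₁) := by
    rw [uIcc_of_le h, integrableOn_Icc_iff_integrableOn_Ioc]
    exact (integrableOn_rayM hα hω hA hk).mono_set Ioc_subset_Ioi_self
  simpa [uIcc_of_le h] using intervalIntegral.continuousOn_primitive_interval hi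

theorem integral_rayM_sub_le {α A B k s t : ℝ} (hα : 0 < α) (hω : Real.sin (A - B) ≠ 0)
    (hA : 0 < 1 + Real.cos A) (hk : 1 ≤ k) (hs : 0 ≤ s) (hst : s ≤ t) :
    (∫ r in (0 : ℝ)..t, rayM α A B k r) - (∫ r in (0 : ℝ)..s, rayM α A B k r)
      ≤ ∫ r in Ioi 0, rayM α A B k r := by
  have hi := integrableOn_rayM hα hω hA hk
  have h1 : ∀ a, 0 ≤ a → IntervalIntegrable (rayM α A B k) volume 0 a := fun a ha => by
    rw [intervalIntegrable_iff_integrableOn_Ioc_of_le ha]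
    exact hi.mono_set Ioc_subset_Ioi_self
  rw [intervalIntegral.integral_interval_sub_left (h1 t (hs.trans hst)) (h1 s hs),
    intervalIntegral.integral_of_le hst]
  refine setIntegral_mono_set hi (Filter.Eventually.of_forall fun r => ?_) ?_
  · exact rayM_nonneg _ _ _ _ (by linarith)
  · exact (Ioc_subset_Ioi_self.trans (Ioi_subset_Ioi hs)).eventuallyLE

/-! ### Propagation of Liouville–Green modes along rays -/

theorem pure_mode_bounds {p m f ζ : ℂ} (hf : f ≠ 0)
    (h : ‖p / f - ζ‖ ^ 2 + ‖m / f‖ ^ 2 + ‖ζ‖ ^ 2 ≤ 17 / 16 * ‖ζ‖ ^ 2) :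
    3 / 4 * ‖ζ‖ * ‖f‖ ≤ ‖p‖ ∧ ‖p‖ ≤ 5 / 4 * ‖ζ‖ * ‖f‖ ∧ ‖m‖ ≤ 1 / 4 * ‖ζ‖ * ‖f‖ := by
  have hf' := norm_pos_iff.2 hf
  have h1 : ‖p / f - ζ‖ ≤ 1 / 4 * ‖ζ‖ :=
    le_of_sq_le_sq (by nlinarith [sq_nonneg ‖m / f‖]) (by positivity)
  have h2 : ‖m / f‖ ≤ 1 / 4 * ‖ζ‖ :=
    le_of_sq_le_sq (by nlinarith [sq_nonneg ‖p / f - ζ‖]) (by positivity)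
  have h3 : ‖p / f‖ ≤ 5 / 4 * ‖ζ‖ := by
    have := norm_add_le (p / f - ζ) ζ
    rw [sub_add_cancel] at this; linarith
  have h4 : 3 / 4 * ‖ζ‖ ≤ ‖p / f‖ := by
    have := norm_sub_norm_le ζ (ζ - p / f)
    rw [sub_sub_cancel, norm_sub_rev] at this; linarith
  rw [norm_div] at h2 h3 h4
  exact ⟨(le_div_iff₀ hf').1 h4, (div_le_iff₀ hf').1 h3, (div_le_iff₀ hf').1 h2⟩

theorem IsPathSol.of_sq_eq {k s₀ s₁ : ℝ} {g g' τ W Y : ℝ → ℂ} (h : IsPathSol k s₀ s₁ g τ W Y)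
    (hg : ∀ s ∈ Ioo s₀ s₁, g s ^ 2 = g' s ^ 2) : IsPathSol k s₀ s₁ g' τ W Y where
  cont_W := h.cont_W
  cont_Y := h.cont_Y
  deriv_W := h.deriv_W
  deriv_Y s hs := hg s hs ▸ h.deriv_Y s hs

/-- Parameters for which the error control along the ray is at most `log (17/16)`. -/
structure RayControl (α A B k : ℝ) : Prop where
  alpha_pos : 0 < α
  sin_ne : Real.sin (A - B) ≠ 0
  cos_gt : 0 < 1 + Real.cos A
  one_le : 1 ≤ k
  control : Real.exp (∫ r in Ioi 0, rayM α A B k r) ≤ 17 / 16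

theorem eventually_rayControl {α A B : ℝ} (hα : 0 < α) (hω : Real.sin (A - B) ≠ 0)
    (hA : 0 < 1 + Real.cos A) (hsA : Real.sin A ≠ 0) :
    ∀ᶠ k in Filter.atTop, RayControl α A B k := by
  have h := (Real.continuous_exp.tendsto 0).comp (tendsto_integral_rayM hα hω hA hsA)
  rw [Real.exp_zero] at h
  filter_upwards [h.eventually_le_const (show (1 : ℝ) < 17 / 16 by norm_num),
    Filter.eventually_ge_atTop 1] with k h1 h2
  exact ⟨hα, hω, hA, h2, h1⟩

section
variable {α A B k s₀ s₁ : ℝ} {W Y : ℝ → ℂ}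

theorem RayControl.energy_forward (hc : RayControl α A B k) (h₀ : 0 ≤ s₀)
    (hs : IsPathSol k s₀ s₁ (rayG α A B) 1 W Y) {ε : ℝ} (hε : ε ^ 2 = 1)
    (hG : ∀ s ∈ Ioo s₀ s₁, 0 ≤ ε * (rayG α A B s).re) (ζ : ℂ) {s : ℝ} (h : s ∈ Icc s₀ s₁) :
    wkbEnergy k (fun r => ε * rayG α A B r) (rayF α A B k ε) W Y ζ s
      ≤ 17 / 16 * wkbEnergy k (fun r => ε * rayG α A B r) (rayF α A B k ε) W Y ζ s₀ := by
  have hk : 0 ≤ k := zero_le_one.trans hc.one_le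
  have hε' : |ε| = 1 := by
    rw [← sq_eq_sq₀ (abs_nonneg _) zero_le_one, sq_abs, hε, one_pow]
  have hs' : IsPathSol k s₀ s₁ (fun r => ε * rayG α A B r) 1 W Y := hs.of_sq_eq fun s _ => by
    rw [mul_pow, ← Complex.ofReal_pow, hε]; simp
  have hre : ∀ s, ((1 : ℝ → ℂ) s * (ε * rayG α A B s)).re = ε * (rayG α A B s).re := by simp
  have habs : ∀ s ∈ Ioo s₀ s₁, ε * (rayG α A B s).re = |(rayG α A B s).re| := fun s hs => by
    rw [← abs_of_nonneg (hG s hs), abs_mul, hε', one_mul]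
  refine (wkbEnergy_forward (m := rayM α A B k) (E := fun r => ∫ s in (0 : ℝ)..r, rayM α A B k s) ζ
    (isWKBPath_ray hc.alpha_pos hc.sin_ne h₀ k ε) hs'
    ((continuousOn_integral_rayM hc.alpha_pos hc.sin_ne hc.cos_gt hc.one_le).mono
      (Icc_subset_Icc_left h₀))
    (fun s hs => hasDerivAt_integral_rayM hc.alpha_pos hc.sin_ne hc.cos_gt hc.one_le
      (h₀.trans_lt hs.1)) ?_ (fun s _ => rayM_nonneg _ _ _ _ hk) ?_ h).trans ?_
  · intro s hs
    rw [hre, habs s hs]; positivity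
  · intro s hs
    rw [hre, habs s hs]; exact rayM_key _ _ _ _ hk
  · refine mul_le_mul_of_nonneg_right (le_trans ?_ hc.control) (by unfold wkbEnergy; positivity)
    exact Real.exp_le_exp.2
      (integral_rayM_sub_le hc.alpha_pos hc.sin_ne hc.cos_gt hc.one_le h₀ h.1)

theorem RayControl.energy_backward (hc : RayControl α A B k) (h₀ : 0 ≤ s₀)
    (hs : IsPathSol k s₀ s₁ (rayG α A B) 1 W Y) {ε : ℝ} (hε : ε ^ 2 = 1)
    (hG : ∀ s ∈ Ioo s₀ s₁, 0 ≤ -(ε * (rayG α A B s).re)) (ζ : ℂ) {s : ℝ} (h : s ∈ Icc s₀ s₁) :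
    wkbEnergy k (fun r => ε * rayG α A B r) (rayF α A B k ε) W Y ζ s
      ≤ 17 / 16 * wkbEnergy k (fun r => ε * rayG α A B r) (rayF α A B k ε) W Y ζ s₁ := by
  have hk : 0 ≤ k := zero_le_one.trans hc.one_le
  have hε' : |ε| = 1 := by
    rw [← sq_eq_sq₀ (abs_nonneg _) zero_le_one, sq_abs, hε, one_pow]
  have hs' : IsPathSol k s₀ s₁ (fun r => ε * rayG α A B r) 1 W Y := hs.of_sq_eq fun s _ => by
    rw [mul_pow, ← Complex.ofReal_pow, hε]; simp
  have hre : ∀ s, ((1 : ℝ → ℂ) s * (ε * rayG α A B s)).re = ε * (rayG α A B s).re := by simp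
  have habs : ∀ s ∈ Ioo s₀ s₁, -(ε * (rayG α A B s).re) = |(rayG α A B s).re| := fun s hs => by
    rw [← abs_of_nonneg (hG s hs), abs_neg, abs_mul, hε', one_mul]
  refine (wkbEnergy_backward (m := rayM α A B k) (E := fun r => ∫ s in (0 : ℝ)..r, rayM α A B k s) ζ
    (isWKBPath_ray hc.alpha_pos hc.sin_ne h₀ k ε) hs'
    ((continuousOn_integral_rayM hc.alpha_pos hc.sin_ne hc.cos_gt hc.one_le).mono
      (Icc_subset_Icc_left h₀))
    (fun s hs => hasDerivAt_integral_rayM hc.alpha_pos hc.sin_ne hc.cos_gt hc.one_le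
      (h₀.trans_lt hs.1)) ?_ (fun s _ => rayM_nonneg _ _ _ _ hk) ?_ h).trans ?_
  · intro s hs
    rw [hre, habs s hs]; positivity
  · intro s hs
    rw [hre, habs s hs]; exact rayM_key _ _ _ _ hk
  · refine mul_le_mul_of_nonneg_right (le_trans ?_ hc.control) (by unfold wkbEnergy; positivity)
    exact Real.exp_le_exp.2
      (integral_rayM_sub_le hc.alpha_pos hc.sin_ne hc.cos_gt hc.one_le (h₀.trans h.1) h.2)

/-- A solution which is a pure growing mode at `s₀` stays close to it. -/
theorem RayControl.growing (hc : RayControl α A B k) (h₀ : 0 ≤ s₀)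
    (hs : IsPathSol k s₀ s₁ (rayG α A B) 1 W Y)
    (hG : ∀ s ∈ Ioo s₀ s₁, 0 ≤ (rayG α A B s).re)
    (hpure : k * rayG α A B s₀ * W s₀ - Y s₀ = 0) {s : ℝ} (h : s ∈ Icc s₀ s₁) :
    let K := ‖k * rayG α A B s₀ * W s₀ + Y s₀‖ / ‖rayF α A B k 1 s₀‖
    3 / 4 * K * ‖rayF α A B k 1 s‖ ≤ ‖k * rayG α A B s * W s + Y s‖ ∧
    ‖k * rayG α A B s * W s + Y s‖ ≤ 5 / 4 * K * ‖rayF α A B k 1 s‖ ∧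
    ‖k * rayG α A B s * W s - Y s‖ ≤ 1 / 4 * K * ‖rayF α A B k 1 s‖ := by
  intro K
  have h1 := hc.energy_forward h₀ hs (ε := 1) (by norm_num) (by simpa using hG)
    ((k * rayG α A B s₀ * W s₀ + Y s₀) / rayF α A B k 1 s₀) h
  simp only [wkbEnergy, Complex.ofReal_one, one_mul, hpure, sub_self, zero_div, norm_zero] at h1
  have := pure_mode_bounds (rayF_ne_zero hc.sin_ne _ _ _)
    (h1.trans_eq (by ring))
  rwa [norm_div] at this

/-- A solution which is a pure decaying mode at `s₁` stays close to it. -/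
theorem RayControl.decaying (hc : RayControl α A B k) (h₀ : 0 ≤ s₀)
    (hs : IsPathSol k s₀ s₁ (rayG α A B) 1 W Y)
    (hG : ∀ s ∈ Ioo s₀ s₁, 0 ≤ (rayG α A B s).re)
    (hpure : k * rayG α A B s₁ * W s₁ + Y s₁ = 0) {s : ℝ} (h : s ∈ Icc s₀ s₁) :
    let K := ‖k * rayG α A B s₁ * W s₁ - Y s₁‖ / ‖rayF α A B k (-1) s₁‖
    3 / 4 * K * ‖rayF α A B k (-1) s‖ ≤ ‖k * rayG α A B s * W s - Y s‖ ∧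
    ‖k * rayG α A B s * W s - Y s‖ ≤ 5 / 4 * K * ‖rayF α A B k (-1) s‖ ∧
    ‖k * rayG α A B s * W s + Y s‖ ≤ 1 / 4 * K * ‖rayF α A B k (-1) s‖ := by
  intro K
  have e1 : ∀ s, (k : ℂ) * (((-1 : ℝ) : ℂ) * rayG α A B s) * W s + Y s
      = -(k * rayG α A B s * W s - Y s) := fun s => by push_cast; ring
  have e2 : ∀ s, (k : ℂ) * (((-1 : ℝ) : ℂ) * rayG α A B s) * W s - Y s
      = -(k * rayG α A B s * W s + Y s) := fun s => by push_cast; ring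
  have h1 := hc.energy_backward h₀ hs (ε := -1) (by norm_num) (by simpa using hG)
    (-(k * rayG α A B s₁ * W s₁ - Y s₁) / rayF α A B k (-1) s₁) h
  simp only [wkbEnergy, e1, e2, hpure, neg_zero, sub_self, zero_div, norm_zero] at h1
  have := pure_mode_bounds (rayF_ne_zero hc.sin_ne _ _ _) (h1.trans_eq (by ring))
  rwa [norm_div, norm_neg, norm_neg, norm_neg] at this

/-- Backward propagation of the energy where `Re g ≤ 0`. -/
theorem RayControl.energy_le (hc : RayControl α A B k) (h₀ : 0 ≤ s₀) (h₁ : s₀ ≤ s₁)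
    (hs : IsPathSol k s₀ s₁ (rayG α A B) 1 W Y)
    (hG : ∀ s ∈ Ioo s₀ s₁, (rayG α A B s).re ≤ 0) :
    (‖k * rayG α A B s₀ * W s₀ + Y s₀‖ ^ 2 + ‖k * rayG α A B s₀ * W s₀ - Y s₀‖ ^ 2)
        / ‖rayF α A B k 1 s₀‖ ^ 2
      ≤ 17 / 16 * ((‖k * rayG α A B s₁ * W s₁ + Y s₁‖ ^ 2
        + ‖k * rayG α A B s₁ * W s₁ - Y s₁‖ ^ 2) / ‖rayF α A B k 1 s₁‖ ^ 2) := by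
  have h1 := hc.energy_backward h₀ hs (ε := 1) (by norm_num) (by simpa using hG) 0
    (left_mem_Icc.2 h₁)
  simp only [wkbEnergy, Complex.ofReal_one, one_mul, sub_zero, norm_zero, norm_div, div_pow] at h1
  rw [add_div, add_div]
  linarith
end

/-! ### Fundamental solutions of `V'' = Λ (x^α - 1) V` -/

/-- Exponents of the generalised power series of the fundamental solutions. -/
noncomputable def fsExp (α e : ℝ) (n j : ℕ) : ℝ := e + 2 * n + α * j

/-- Coefficients of the generalised power series of the fundamental solutions. -/
noncomputable def fsCoef (Λ : ℂ) (α e : ℝ) : ℕ → ℕ → ℂ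
  | 0, 0 => 1
  | 0, _ + 1 => 0
  | n + 1, 0 => -Λ * fsCoef Λ α e n 0 /
      (fsExp α e (n + 1) 0 * (fsExp α e (n + 1) 0 - 1))
  | n + 1, j + 1 => Λ * (fsCoef Λ α e n j - fsCoef Λ α e n (j + 1)) /
      (fsExp α e (n + 1) (j + 1) * (fsExp α e (n + 1) (j + 1) - 1))

/-- The `n`-th Picard increment of a fundamental solution. -/
noncomputable def fsTerm (Λ : ℂ) (α e : ℝ) (n : ℕ) (x : ℂ) : ℂ :=
  ∑ j ∈ Finset.range (n + 1), fsCoef Λ α e n j * x ^ (fsExp α e n j : ℂ)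

/-- The derivative of `fsTerm`. -/
noncomputable def fsTermDeriv (Λ : ℂ) (α e : ℝ) (n : ℕ) (x : ℂ) : ℂ :=
  ∑ j ∈ Finset.range (n + 1), fsCoef Λ α e n j * (fsExp α e n j *
    x ^ ((fsExp α e n j - 1 : ℝ) : ℂ))

/-- The fundamental solution behaving like `x^e` at the origin, `e ∈ {0, 1}`. -/
noncomputable def fsol (Λ : ℂ) (α e : ℝ) (x : ℂ) : ℂ := ∑' n, fsTerm Λ α e n x

/-- The derivative of `fsol`. -/
noncomputable def fsolDeriv (Λ : ℂ) (α e : ℝ) (x : ℂ) : ℂ := ∑' n, fsTermDeriv Λ α e n x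

section
variable {Λ : ℂ} {α e : ℝ}

theorem fsCoef_eq_zero {n j : ℕ} (h : n < j) : fsCoef Λ α e n j = 0 := by
  induction n generalizing j with
  | zero => obtain ⟨j, rfl⟩ := Nat.exists_eq_succ_of_ne_zero (by omega : j ≠ 0); rfl
  | succ n ih =>
    obtain ⟨j, rfl⟩ := Nat.exists_eq_succ_of_ne_zero (by omega : j ≠ 0)
    simp only [fsCoef]
    rw [ih (by omega), ih (by omega)]
    simp

theorem fsExp_succ_ge (hα : 0 < α) (he : 0 ≤ e) (n j : ℕ) : 2 * (n : ℝ) + 2 ≤ fsExp α e (n + 1) j := by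
  unfold fsExp
  have : 0 ≤ α * j := by positivity
  push_cast
  linarith

theorem norm_div_fsExp_le (hα : 0 < α) (he : 0 ≤ e) (n j : ℕ) {z : ℂ} {b : ℝ} (hz : ‖z‖ ≤ b) :
    ‖z / (fsExp α e (n + 1) j * (fsExp α e (n + 1) j - 1))‖ ≤ b / (n + 1) := by
  have h1 := fsExp_succ_ge hα he n j
  set p := fsExp α e (n + 1) j
  have hn : (0 : ℝ) ≤ n := n.cast_nonneg
  have h2 : (n : ℝ) + 1 ≤ p * (p - 1) := by nlinarith
  have e1 : ((p : ℂ) * (p - 1)) = ((p * (p - 1) : ℝ) : ℂ) := by push_cast; ring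
  rw [e1, norm_div, Complex.norm_of_nonneg (by linarith)]
  have := (norm_nonneg z).trans hz
  gcongr

theorem norm_fsCoef_le (hα : 0 < α) (he : 0 ≤ e) (n j : ℕ) :
    ‖fsCoef Λ α e n j‖ ≤ (2 * ‖Λ‖) ^ n / n.factorial := by
  induction n generalizing j with
  | zero =>
    cases j <;> simp [fsCoef]
  | succ n ih =>
    have hrew : (2 * ‖Λ‖) ^ (n + 1) / ((n + 1).factorial : ℝ)
        = (‖Λ‖ * (2 * ((2 * ‖Λ‖) ^ n / n.factorial))) / (n + 1) := by
      rw [Nat.factorial_succ]; push_cast; field_simp; ring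
    rw [hrew]
    cases j with
    | zero =>
      refine norm_div_fsExp_le hα he n 0 ?_
      rw [norm_mul, norm_neg]
      gcongr
      linarith [ih 0, norm_nonneg (fsCoef Λ α e n 0)]
    | succ j =>
      refine norm_div_fsExp_le hα he n (j + 1) ?_
      rw [norm_mul]
      gcongr
      linarith [ih j, ih (j + 1), norm_sub_le (fsCoef Λ α e n j) (fsCoef Λ α e n (j + 1))]

theorem fsExp_nonneg (hα : 0 < α) (he : 0 ≤ e) (n j : ℕ) : 0 ≤ fsExp α e n j := by
  unfold fsExp; positivity

theorem fsExp_le (hα2 : α < 2) (he1 : e ≤ 1) {n j : ℕ} (h : j ≤ n) :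
    fsExp α e n j ≤ 1 + 4 * n := by
  have h1 : (j : ℝ) ≤ n := by exact_mod_cast h
  have h0 : (0 : ℝ) ≤ j := j.cast_nonneg
  unfold fsExp
  nlinarith

theorem fsExp_eq_zero_or_one_le (hα : 0 < α) (he : e = 0 ∨ e = 1) (n : ℕ) {j : ℕ} (hj : j ≤ n) :
    fsExp α e n j = 0 ∨ 1 ≤ fsExp α e n j := by
  rcases n with _ | n
  · obtain rfl : j = 0 := by omega
    rcases he with rfl | rfl <;> simp [fsExp]
  · right
    have he0 : 0 ≤ e := by rcases he with rfl | rfl <;> norm_num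
    have := fsExp_succ_ge hα he0 n j
    have hn : (0 : ℝ) ≤ n := n.cast_nonneg
    linarith

/-- Common bound for `fsTerm` and `fsTermDeriv` on the disc of radius `R`. -/
noncomputable def fsBound (Λ : ℂ) (R : ℝ) (n : ℕ) : ℝ :=
  R * ((20 * ‖Λ‖ * R ^ 4) ^ n / n.factorial)

theorem summable_fsBound (R : ℝ) : Summable (fsBound Λ R) :=
  (Real.summable_pow_div_factorial _).mul_left _

theorem sum_range_le_fsBound {R : ℝ} (hR : 1 ≤ R) (n : ℕ) {a : ℕ → ℂ}
    (ha : ∀ j ≤ n, ‖a j‖ ≤ (2 * ‖Λ‖) ^ n / n.factorial * ((1 + 4 * n) * R ^ (1 + 4 * n))) :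
    ‖∑ j ∈ Finset.range (n + 1), a j‖ ≤ fsBound Λ R n := by
  have h1 : ((n : ℝ) + 1) * (1 + 4 * n) ≤ 10 ^ n := by
    have h2 := one_add_mul_le_pow (show (-2 : ℝ) ≤ 1 by norm_num) n
    have h3 := one_add_mul_le_pow (show (-2 : ℝ) ≤ 4 by norm_num) n
    calc ((n : ℝ) + 1) * (1 + 4 * n) ≤ (1 + 1) ^ n * (1 + 4) ^ n := by
          gcongr <;> linarith
      _ = 10 ^ n := by rw [← mul_pow]; norm_num
  refine (norm_sum_le _ _).trans ((Finset.sum_le_card_nsmul _ _ _ fun j hj =>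
    ha j (by simpa [Nat.lt_succ_iff] using hj)).trans ?_)
  rw [Finset.card_range, nsmul_eq_mul]
  push_cast
  calc ((n : ℝ) + 1) * ((2 * ‖Λ‖) ^ n / n.factorial * ((1 + 4 * n) * R ^ (1 + 4 * n)))
      = (((n : ℝ) + 1) * (1 + 4 * n)) * ((2 * ‖Λ‖) ^ n / n.factorial * R ^ (1 + 4 * n)) := by ring
    _ ≤ 10 ^ n * ((2 * ‖Λ‖) ^ n / n.factorial * R ^ (1 + 4 * n)) := by gcongr
    _ = fsBound Λ R n := by
        have h2 : (20 * ‖Λ‖ * R ^ 4) ^ n = 10 ^ n * (2 * ‖Λ‖) ^ n * (R ^ 4) ^ n := by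
          rw [← mul_pow, ← mul_pow]; congr 1; ring
        rw [fsBound, pow_add, pow_mul, pow_one, h2]
        ring

theorem norm_fsTerm_le (hα : 0 < α) (hα2 : α < 2) (he : e = 0 ∨ e = 1) {R : ℝ} (hR : 1 ≤ R)
    (n : ℕ) {x : ℂ} (hx : ‖x‖ ≤ R) : ‖fsTerm Λ α e n x‖ ≤ fsBound Λ R n := by
  have he0 : 0 ≤ e := by rcases he with rfl | rfl <;> norm_num
  have he1 : e ≤ 1 := by rcases he with rfl | rfl <;> norm_num
  refine sum_range_le_fsBound hR n fun j hj => ?_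
  rw [norm_mul, Complex.norm_cpow_real]
  refine mul_le_mul (norm_fsCoef_le hα he0 n j) ?_ (by positivity) (by positivity)
  have hn : (0 : ℝ) ≤ n := n.cast_nonneg
  calc ‖x‖ ^ fsExp α e n j ≤ R ^ fsExp α e n j :=
        Real.rpow_le_rpow (norm_nonneg _) hx (fsExp_nonneg hα he0 n j)
    _ ≤ R ^ ((1 + 4 * n : ℕ) : ℝ) := by
        refine Real.rpow_le_rpow_of_exponent_le hR ?_
        push_cast; exact fsExp_le hα2 he1 hj
    _ = 1 * R ^ (1 + 4 * n) := by rw [Real.rpow_natCast, one_mul]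
    _ ≤ _ := by gcongr; linarith

theorem norm_fsTermDeriv_le (hα : 0 < α) (hα2 : α < 2) (he : e = 0 ∨ e = 1) {R : ℝ} (hR : 1 ≤ R)
    (n : ℕ) {x : ℂ} (hx : ‖x‖ ≤ R) : ‖fsTermDeriv Λ α e n x‖ ≤ fsBound Λ R n := by
  have he0 : 0 ≤ e := by rcases he with rfl | rfl <;> norm_num
  have he1 : e ≤ 1 := by rcases he with rfl | rfl <;> norm_num
  refine sum_range_le_fsBound hR n fun j hj => ?_
  rw [norm_mul]
  refine mul_le_mul (norm_fsCoef_le hα he0 n j) ?_ (by positivity) (by positivity)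
  rw [norm_mul, Complex.norm_cpow_real, Complex.norm_of_nonneg (fsExp_nonneg hα he0 n j)]
  rcases fsExp_eq_zero_or_one_le hα he n hj with h0 | h1
  · rw [h0]; simp; positivity
  refine mul_le_mul (fsExp_le hα2 he1 hj) ?_ (by positivity) (by positivity)
  calc ‖x‖ ^ (fsExp α e n j - 1) ≤ R ^ (fsExp α e n j - 1) :=
        Real.rpow_le_rpow (norm_nonneg _) hx (by linarith)
    _ ≤ R ^ ((1 + 4 * n : ℕ) : ℝ) := by
        refine Real.rpow_le_rpow_of_exponent_le hR ?_
        push_cast; linarith [fsExp_le hα2 he1 hj]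
    _ = R ^ (1 + 4 * n) := by rw [Real.rpow_natCast]

theorem hasDerivAt_cpow_real (p : ℝ) {x : ℂ} (hx : x ∈ Complex.slitPlane) :
    HasDerivAt (fun x : ℂ => x ^ (p : ℂ)) (p * x ^ ((p - 1 : ℝ) : ℂ)) x := by
  convert! (hasDerivAt_id x).cpow_const (c := (p : ℂ)) hx using 1
  push_cast; simp

theorem hasDerivAt_fsTerm (n : ℕ) {x : ℂ} (hx : x ∈ Complex.slitPlane) :
    HasDerivAt (fsTerm Λ α e n) (fsTermDeriv Λ α e n x) x := by
  unfold fsTerm fsTermDeriv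
  exact HasDerivAt.fun_sum fun j _ => (hasDerivAt_cpow_real _ hx).const_mul _

theorem hasDerivAt_fsTermDeriv_zero (he : e = 0 ∨ e = 1) {x : ℂ} :
    HasDerivAt (fsTermDeriv Λ α e 0) 0 x := by
  have : fsTermDeriv Λ α e 0 = fun _ => (e : ℂ) := by
    funext x
    rcases he with rfl | rfl <;> simp [fsTermDeriv, fsExp, fsCoef]
  rw [this]
  exact hasDerivAt_const _ _

theorem fsCoef_succ_mul (hα : 0 < α) (he : 0 ≤ e) (n j : ℕ) :
    fsCoef Λ α e (n + 1) j * (fsExp α e (n + 1) j * ((fsExp α e (n + 1) j - 1 : ℝ) : ℂ))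
      = Λ * ((if j = 0 then 0 else fsCoef Λ α e n (j - 1)) - fsCoef Λ α e n j) := by
  have h1 := fsExp_succ_ge hα he n j
  have hn : (0 : ℝ) ≤ n := n.cast_nonneg
  have h2 : (fsExp α e (n + 1) j : ℂ) ≠ 0 := by
    exact_mod_cast (by linarith : (0 : ℝ) < fsExp α e (n + 1) j).ne'
  have h3 : ((fsExp α e (n + 1) j : ℂ) - 1) ≠ 0 := by
    have : (0 : ℝ) < fsExp α e (n + 1) j - 1 := by linarith
    exact_mod_cast this.ne'
  cases j with
  | zero => simp only [fsCoef]; push_cast; field_simp; simp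
  | succ j => simp only [fsCoef]; push_cast; field_simp

theorem hasDerivAt_fsTermDeriv_succ (hα : 0 < α) (he : 0 ≤ e) (n : ℕ) {x : ℂ}
    (hx : x ∈ Complex.slitPlane) :
    HasDerivAt (fsTermDeriv Λ α e (n + 1)) (Λ * (x ^ (α : ℂ) - 1) * fsTerm Λ α e n x) x := by
  have hx0 := Complex.slitPlane_ne_zero hx
  have h1 : HasDerivAt (fsTermDeriv Λ α e (n + 1))
      (∑ j ∈ Finset.range (n + 1 + 1), fsCoef Λ α e (n + 1) j * (fsExp α e (n + 1) j *
        (((fsExp α e (n + 1) j - 1 : ℝ) : ℂ) *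
          x ^ ((fsExp α e (n + 1) j - 1 - 1 : ℝ) : ℂ)))) x := by
    unfold fsTermDeriv
    exact HasDerivAt.fun_sum fun j _ => ((hasDerivAt_cpow_real _ hx).const_mul _).const_mul _
  convert! h1 using 1
  have h2 : ∀ j, fsCoef Λ α e (n + 1) j * (fsExp α e (n + 1) j *
        (((fsExp α e (n + 1) j - 1 : ℝ) : ℂ) *
          x ^ ((fsExp α e (n + 1) j - 1 - 1 : ℝ) : ℂ)))
      = Λ * ((if j = 0 then 0 else fsCoef Λ α e n (j - 1)) * x ^ ((fsExp α e n j : ℝ) : ℂ))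
        - Λ * (fsCoef Λ α e n j * x ^ ((fsExp α e n j : ℝ) : ℂ)) := by
    intro j
    have e1 : fsExp α e (n + 1) j - 1 - 1 = fsExp α e n j := by
      unfold fsExp; push_cast; ring
    rw [e1, ← mul_assoc, ← mul_assoc, mul_assoc (fsCoef Λ α e (n + 1) j), fsCoef_succ_mul hα he]
    ring
  simp only [h2, Finset.sum_sub_distrib, ← Finset.mul_sum]
  rw [Finset.sum_range_succ' (fun j => (if j = 0 then 0 else fsCoef Λ α e n (j - 1)) *
      x ^ ((fsExp α e n j : ℝ) : ℂ)),
    Finset.sum_range_succ (fun j => fsCoef Λ α e n j * x ^ ((fsExp α e n j : ℝ) : ℂ)),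
    fsCoef_eq_zero (Nat.lt_succ_self n)]
  have h3 : ∀ j, x ^ ((fsExp α e n (j + 1) : ℝ) : ℂ)
      = x ^ (α : ℂ) * x ^ ((fsExp α e n j : ℝ) : ℂ) := by
    intro j
    rw [← Complex.cpow_add _ _ hx0]
    congr 1
    unfold fsExp; push_cast; ring
  have h4 : ∑ j ∈ Finset.range (n + 1), (if j + 1 = 0 then 0 else fsCoef Λ α e n (j + 1 - 1)) *
      x ^ ((fsExp α e n (j + 1) : ℝ) : ℂ) = x ^ (α : ℂ) * fsTerm Λ α e n x := by
    rw [fsTerm, Finset.mul_sum]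
    refine Finset.sum_congr rfl fun j _ => ?_
    rw [h3, if_neg (Nat.succ_ne_zero j), Nat.add_sub_cancel]
    ring
  rw [h4]
  simp only [if_true, fsTerm]
  ring

theorem summable_fsTerm (hα : 0 < α) (hα2 : α < 2) (he : e = 0 ∨ e = 1) (x : ℂ) :
    Summable fun n => fsTerm Λ α e n x :=
  Summable.of_norm_bounded (summable_fsBound (max 1 ‖x‖)) fun n =>
    norm_fsTerm_le hα hα2 he (le_max_left _ _) n (le_max_right _ _)

theorem hasDerivAt_tsum_of_norm_le {F F' : ℕ → ℂ → ℂ} {u : ℕ → ℝ} {R : ℝ} (hu : Summable u)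
    (hF : ∀ n, ∀ x ∈ Complex.slitPlane, HasDerivAt (F n) (F' n x) x)
    (hb : ∀ n x, ‖x‖ ≤ R → ‖F n x‖ ≤ u n) {x : ℂ} (hx : x ∈ Complex.slitPlane) (hxR : ‖x‖ < R) :
    HasDerivAt (fun x => ∑' n, F n x) (∑' n, F' n x) x := by
  have hU : IsOpen (Complex.slitPlane ∩ Metric.ball 0 R) :=
    Complex.isOpen_slitPlane.inter Metric.isOpen_ball
  have hxU : x ∈ Complex.slitPlane ∩ Metric.ball 0 R := ⟨hx, by simpa using hxR⟩
  have hd : ∀ n, DifferentiableOn ℂ (F n) (Complex.slitPlane ∩ Metric.ball 0 R) := fun n y hy =>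
    (hF n y hy.1).differentiableAt.differentiableWithinAt
  have hle : ∀ n, ∀ y ∈ Complex.slitPlane ∩ Metric.ball 0 R, ‖F n y‖ ≤ u n := fun n y hy =>
    hb n y (le_of_lt (by simpa using hy.2))
  have h1 := (Complex.differentiableOn_tsum_of_summable_norm hu hd hU hle).differentiableAt
    (hU.mem_nhds hxU)
  have h2 := Complex.hasSum_deriv_of_summable_norm hu hd hU hle hxU
  convert! h1.hasDerivAt using 1
  rw [← h2.tsum_eq]
  exact tsum_congr fun n => (hF n x hx).deriv.symm

theorem hasDerivAt_fsol (hα : 0 < α) (hα2 : α < 2) (he : e = 0 ∨ e = 1) {x : ℂ}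
    (hx : x ∈ Complex.slitPlane) : HasDerivAt (fsol Λ α e) (fsolDeriv Λ α e x) x :=
  hasDerivAt_tsum_of_norm_le (F := fsTerm Λ α e) (F' := fsTermDeriv Λ α e) (R := ‖x‖ + 1) (summable_fsBound (‖x‖ + 1))
    (fun n _ hy => hasDerivAt_fsTerm n hy)
    (fun n _ hy => norm_fsTerm_le hα hα2 he (by linarith [norm_nonneg x]) n hy) hx (by linarith)

theorem hasDerivAt_fsolDeriv (hα : 0 < α) (hα2 : α < 2) (he : e = 0 ∨ e = 1) {x : ℂ}
    (hx : x ∈ Complex.slitPlane) :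
    HasDerivAt (fsolDeriv Λ α e) (Λ * (x ^ (α : ℂ) - 1) * fsol Λ α e x) x := by
  have he0 : 0 ≤ e := by rcases he with rfl | rfl <;> norm_num
  obtain ⟨F', h0, h1⟩ : ∃ F' : ℕ → ℂ → ℂ, F' 0 = 0 ∧
      ∀ n x, F' (n + 1) x = Λ * (x ^ (α : ℂ) - 1) * fsTerm Λ α e n x :=
    ⟨fun n => Nat.casesOn n 0 fun n x => Λ * (x ^ (α : ℂ) - 1) * fsTerm Λ α e n x, rfl,
      fun _ _ => rfl⟩
  have h := hasDerivAt_tsum_of_norm_le (F := fsTermDeriv Λ α e) (F' := F')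
    (R := ‖x‖ + 1) (summable_fsBound (‖x‖ + 1))
    (fun n y hy => by
      cases n with
      | zero => rw [h0]; exact hasDerivAt_fsTermDeriv_zero he
      | succ n => rw [h1]; exact hasDerivAt_fsTermDeriv_succ hα he0 n hy)
    (fun n _ hy => norm_fsTermDeriv_le hα hα2 he (by linarith [norm_nonneg x]) n hy) hx
    (by linarith)
  have hs := (summable_fsTerm (Λ := Λ) hα hα2 he x).mul_left (Λ * (x ^ (α : ℂ) - 1))
  simp only [← h1] at hs
  have hsum : ∑' n, F' n x = Λ * (x ^ (α : ℂ) - 1) * fsol Λ α e x := by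
    rw [Summable.tsum_eq_zero_add ((summable_nat_add_iff (f := fun n => F' n x) 1).1 hs), h0]
    simp only [h1, Pi.zero_apply, zero_add]
    rw [tsum_mul_left, fsol]
  rw [← hsum]
  exact h

theorem continuousOn_cpow_real {p : ℝ} (hp : 0 ≤ p) :
    ContinuousOn (fun x : ℂ => x ^ (p : ℂ)) (insert 0 Complex.slitPlane) := by
  rcases hp.eq_or_lt with rfl | hp
  · simpa using continuousOn_const
  rintro x (rfl | hx)
  · exact (Complex.continuousAt_cpow_const_of_re_pos (Or.inl (by simp)) (by simpa)).continuousWithinAt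
  · exact (hasDerivAt_cpow_real p hx).continuousAt.continuousWithinAt

theorem continuousOn_fsTerm (hα : 0 < α) (he : 0 ≤ e) (n : ℕ) :
    ContinuousOn (fsTerm Λ α e n) (insert 0 Complex.slitPlane) :=
  continuousOn_finsetSum _ fun j _ =>
    continuousOn_const.mul (continuousOn_cpow_real (fsExp_nonneg hα he n j))

theorem continuousOn_fsTermDeriv (hα : 0 < α) (he : e = 0 ∨ e = 1) (n : ℕ) :
    ContinuousOn (fsTermDeriv Λ α e n) (insert 0 Complex.slitPlane) := by
  refine continuousOn_finsetSum _ fun j hj => continuousOn_const.mul ?_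
  rcases fsExp_eq_zero_or_one_le hα he n (j := j) (by simpa [Nat.lt_succ_iff] using hj) with h | h
  · rw [h]; simpa using continuousOn_const
  · exact continuousOn_const.mul (continuousOn_cpow_real (by linarith))

theorem continuousOn_tsum_of_norm_le {F : ℕ → ℂ → ℂ} {u : ℝ → ℕ → ℝ} (hu : ∀ R, Summable (u R))
    {s : Set ℂ} (hF : ∀ n, ContinuousOn (F n) s)
    (hb : ∀ R, 1 ≤ R → ∀ n x, ‖x‖ ≤ R → ‖F n x‖ ≤ u R n) :
    ContinuousOn (fun x => ∑' n, F n x) s := by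
  intro x hx
  have h1 : (1 : ℝ) ≤ ‖x‖ + 1 := by linarith [norm_nonneg x]
  have h : ContinuousOn (fun x => ∑' n, F n x) (s ∩ Metric.ball 0 (‖x‖ + 1)) :=
    continuousOn_tsum (fun n => (hF n).mono inter_subset_left) (hu (‖x‖ + 1))
      fun n y hy => hb _ h1 n y (le_of_lt (by simpa using hy.2))
  exact (h x ⟨hx, by simp⟩).mono_of_mem_nhdsWithin
    (Filter.inter_mem self_mem_nhdsWithin
      (mem_nhdsWithin_of_mem_nhds (Metric.isOpen_ball.mem_nhds (by simp))))

theorem continuousOn_fsol (hα : 0 < α) (hα2 : α < 2) (he : e = 0 ∨ e = 1) :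
    ContinuousOn (fsol Λ α e) (insert 0 Complex.slitPlane) :=
  continuousOn_tsum_of_norm_le (summable_fsBound (Λ := Λ))
    (continuousOn_fsTerm hα (by rcases he with rfl | rfl <;> norm_num))
    fun _ hR n _ hx => norm_fsTerm_le hα hα2 he hR n hx

theorem continuousOn_fsolDeriv (hα : 0 < α) (hα2 : α < 2) (he : e = 0 ∨ e = 1) :
    ContinuousOn (fsolDeriv Λ α e) (insert 0 Complex.slitPlane) :=
  continuousOn_tsum_of_norm_le (summable_fsBound (Λ := Λ)) (continuousOn_fsTermDeriv hα he)
    fun _ hR n _ hx => norm_fsTermDeriv_le hα hα2 he hR n hx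

theorem fsol_apply_zero (hα : 0 < α) (he : 0 ≤ e) : fsol Λ α e 0 = (0 : ℂ) ^ (e : ℂ) := by
  rw [fsol, tsum_eq_single 0]
  · simp [fsTerm, fsCoef, fsExp]
  · intro n hn
    obtain ⟨n, rfl⟩ := Nat.exists_eq_succ_of_ne_zero hn
    refine Finset.sum_eq_zero fun j _ => ?_
    have := fsExp_succ_ge hα he n j
    have h0 : (0 : ℝ) ≤ n := n.cast_nonneg
    rw [Complex.zero_cpow, mul_zero]
    exact_mod_cast (by linarith : (0 : ℝ) < fsExp α e (n + 1) j).ne'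

theorem fsolDeriv_apply_zero (hα : 0 < α) (he : e = 0 ∨ e = 1) : fsolDeriv Λ α e 0 = e := by
  have he0 : 0 ≤ e := by rcases he with rfl | rfl <;> norm_num
  rw [fsolDeriv, tsum_eq_single 0]
  · rcases he with rfl | rfl <;> simp [fsTermDeriv, fsCoef, fsExp]
  · intro n hn
    obtain ⟨n, rfl⟩ := Nat.exists_eq_succ_of_ne_zero hn
    refine Finset.sum_eq_zero fun j _ => ?_
    have := fsExp_succ_ge hα he0 n j
    have h0 : (0 : ℝ) ≤ n := n.cast_nonneg
    rw [Complex.zero_cpow, mul_zero, mul_zero]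
    exact_mod_cast (by linarith : (0 : ℝ) < fsExp α e (n + 1) j - 1).ne'

end

/-- `(V, V')` is a solution of `V'' = Λ (x^α - 1) V` on the slit plane, continuous up to `0`. -/
structure IsHolSol (Λ : ℂ) (α : ℝ) (V V' : ℂ → ℂ) : Prop where
  cont : ContinuousOn V (insert 0 Complex.slitPlane)
  cont' : ContinuousOn V' (insert 0 Complex.slitPlane)
  deriv : ∀ x ∈ Complex.slitPlane, HasDerivAt V (V' x) x
  deriv' : ∀ x ∈ Complex.slitPlane, HasDerivAt V' (Λ * (x ^ (α : ℂ) - 1) * V x) x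

theorem isHolSol_fsol (Λ : ℂ) {α e : ℝ} (hα : 0 < α) (hα2 : α < 2) (he : e = 0 ∨ e = 1) :
    IsHolSol Λ α (fsol Λ α e) (fsolDeriv Λ α e) :=
  ⟨continuousOn_fsol hα hα2 he, continuousOn_fsolDeriv hα hα2 he,
    fun _ hx => hasDerivAt_fsol hα hα2 he hx, fun _ hx => hasDerivAt_fsolDeriv hα hα2 he hx⟩

theorem IsHolSol.lincomb {Λ : ℂ} {α : ℝ} {V V' U U' : ℂ → ℂ} (hV : IsHolSol Λ α V V')
    (hU : IsHolSol Λ α U U') (a b : ℂ) :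
    IsHolSol Λ α (fun x => a * V x + b * U x) (fun x => a * V' x + b * U' x) where
  cont := (continuousOn_const.mul hV.cont).add (continuousOn_const.mul hU.cont)
  cont' := (continuousOn_const.mul hV.cont').add (continuousOn_const.mul hU.cont')
  deriv x hx := ((hV.deriv x hx).const_mul a).add ((hU.deriv x hx).const_mul b)
  deriv' x hx := by
    convert! ((hV.deriv' x hx).const_mul a).add ((hU.deriv' x hx).const_mul b) using 1
    ring

theorem zero_mem_closure_slitPlane : (0 : ℂ) ∈ closure Complex.slitPlane := by
  refine mem_closure_of_tendsto (f := fun n : ℕ => ((1 / ((n : ℝ) + 1) : ℝ) : ℂ))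
    (b := Filter.atTop) ?_ (Filter.Eventually.of_forall fun n => ?_)
  · have := (Complex.continuous_ofReal.tendsto 0).comp
      (tendsto_one_div_add_atTop_nhds_zero_nat (𝕜 := ℝ))
    rwa [Complex.ofReal_zero] at this
  · exact Complex.ofReal_mem_slitPlane.2 (by positivity)

theorem IsHolSol.wronskian {Λ : ℂ} {α : ℝ} {V V' U U' : ℂ → ℂ} (hV : IsHolSol Λ α V V')
    (hU : IsHolSol Λ α U U') {x : ℂ} (hx : x ∈ Complex.slitPlane) :
    V x * U' x - V' x * U x = V 0 * U' 0 - V' 0 * U 0 := by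
  set f : ℂ → ℂ := fun x => V x * U' x - V' x * U x with hf
  have hd : ∀ y ∈ Complex.slitPlane, HasDerivAt f 0 y := fun y hy => by
    convert! ((hV.deriv y hy).mul (hU.deriv' y hy)).sub ((hV.deriv' y hy).mul (hU.deriv y hy))
      using 1
    ring
  have hconst : ∀ y ∈ Complex.slitPlane, f y = f x := fun y hy =>
    Complex.isOpen_slitPlane.is_const_of_deriv_eq_zero
      (Complex.starConvex_one_slitPlane.isPathConnected (by simp)).isConnected.isPreconnected
      (fun z hz => (hd z hz).differentiableAt.differentiableWithinAt)
      (fun z hz => (hd z hz).deriv) hy hx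
  have hc : ContinuousWithinAt f Complex.slitPlane 0 :=
    (((hV.cont.mul hU.cont').sub (hV.cont'.mul hU.cont)) 0 (mem_insert _ _)).mono
      (subset_insert _ _)
  have : (nhdsWithin 0 Complex.slitPlane).NeBot :=
    mem_closure_iff_nhdsWithin_neBot.1 zero_mem_closure_slitPlane
  have h2 : Filter.Tendsto f (nhdsWithin 0 Complex.slitPlane) (nhds (f x)) :=
    tendsto_const_nhds.congr' (Filter.eventually_of_mem self_mem_nhdsWithin
      fun y hy => (hconst y hy).symm)
  exact tendsto_nhds_unique h2 hc

/-- Coordinates of the solution with given data at the origin. -/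
noncomputable def holSol (Λ : ℂ) (α : ℝ) (a b : ℂ) (x : ℂ) : ℂ :=
  a * fsol Λ α 0 x + b * fsol Λ α 1 x

/-- Derivative of `holSol`. -/
noncomputable def holSolDeriv (Λ : ℂ) (α : ℝ) (a b : ℂ) (x : ℂ) : ℂ :=
  a * fsolDeriv Λ α 0 x + b * fsolDeriv Λ α 1 x

theorem isHolSol_holSol (Λ : ℂ) {α : ℝ} (hα : 0 < α) (hα2 : α < 2) (a b : ℂ) :
    IsHolSol Λ α (holSol Λ α a b) (holSolDeriv Λ α a b) :=
  (isHolSol_fsol Λ hα hα2 (Or.inl rfl)).lincomb (isHolSol_fsol Λ hα hα2 (Or.inr rfl)) a b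

theorem holSol_zero {Λ : ℂ} {α : ℝ} (hα : 0 < α) (a b : ℂ) : holSol Λ α a b 0 = a := by
  simp [holSol, fsol_apply_zero hα]

theorem holSolDeriv_zero {Λ : ℂ} {α : ℝ} (hα : 0 < α) (a b : ℂ) :
    holSolDeriv Λ α a b 0 = b := by
  simp [holSolDeriv, fsolDeriv_apply_zero hα]

theorem exists_holSol_eq (Λ : ℂ) {α : ℝ} (hα : 0 < α) (hα2 : α < 2) {x : ℂ}
    (hx : x ∈ Complex.slitPlane) (p q : ℂ) :
    ∃ a b, holSol Λ α a b x = p ∧ holSolDeriv Λ α a b x = q := by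
  have h := (isHolSol_fsol Λ hα hα2 (Or.inl rfl)).wronskian
    (isHolSol_fsol Λ hα hα2 (Or.inr rfl)) hx
  simp only [fsol_apply_zero hα le_rfl, fsol_apply_zero hα zero_le_one,
    fsolDeriv_apply_zero hα (Or.inl rfl), fsolDeriv_apply_zero hα (Or.inr rfl)] at h
  simp only [Complex.ofReal_zero, Complex.ofReal_one, Complex.cpow_zero, mul_one, zero_mul,
    sub_zero] at h
  refine ⟨p * fsolDeriv Λ α 1 x - q * fsol Λ α 1 x, q * fsol Λ α 0 x - p * fsolDeriv Λ α 0 x,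
    ?_, ?_⟩
  · unfold holSol; linear_combination p * h
  · unfold holSolDeriv; linear_combination q * h

/-- The point of the ray of direction `η` at distance `r`. -/
noncomputable def rayPt (η r : ℝ) : ℂ := r * Complex.exp (Complex.I * η)

theorem rayPt_eq_exp {η r : ℝ} (hr : 0 < r) :
    rayPt η r = Complex.exp ((Real.log r : ℂ) + Complex.I * η) := by
  rw [rayPt, Complex.exp_add, ← Complex.ofReal_exp, Real.exp_log hr]

theorem log_rayPt {η r : ℝ} (hr : 0 < r) (hη : |η| < Real.pi) :
    Complex.log (rayPt η r) = (Real.log r : ℂ) + Complex.I * η := by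
  obtain ⟨h1, h2⟩ := abs_lt.1 hη
  rw [rayPt_eq_exp hr, Complex.log_exp] <;> simp <;> linarith

theorem rayPt_cpow {η r : ℝ} (hr : 0 < r) (hη : |η| < Real.pi) (α : ℝ) :
    rayPt η r ^ (α : ℂ) = ((r ^ α : ℝ) : ℂ) * Complex.exp (Complex.I * ((α * η : ℝ) : ℂ)) := by
  have h0 : rayPt η r ≠ 0 := by rw [rayPt_eq_exp hr]; exact Complex.exp_ne_zero _
  rw [Complex.cpow_def_of_ne_zero h0, log_rayPt hr hη, Real.rpow_def_of_pos hr,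
    Complex.ofReal_exp, ← Complex.exp_add]
  congr 1
  push_cast; ring

theorem rayPt_mem_slitPlane {η r : ℝ} (hr : 0 < r) (hη : |η| < Real.pi) :
    rayPt η r ∈ Complex.slitPlane := by
  have h0 : rayPt η r ≠ 0 := by rw [rayPt_eq_exp hr]; exact Complex.exp_ne_zero _
  refine Complex.mem_slitPlane_iff_arg.2 ⟨?_, h0⟩
  rw [← Complex.log_im, log_rayPt hr hη]
  simp only [Complex.add_im, Complex.ofReal_im, zero_add, Complex.mul_im, Complex.I_re,
    Complex.I_im, Complex.ofReal_re]
  have := (abs_lt.1 hη).2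
  intro h; linarith

theorem rayPt_mem_insert {η r : ℝ} (hr : 0 ≤ r) (hη : |η| < Real.pi) :
    rayPt η r ∈ insert 0 Complex.slitPlane := by
  rcases hr.eq_or_lt with rfl | hr
  · left; simp [rayPt]
  · exact Or.inr (rayPt_mem_slitPlane hr hη)

theorem hasDerivAt_rayPt (η r : ℝ) : HasDerivAt (rayPt η) (Complex.exp (Complex.I * η)) r := by
  have h := (hasDerivAt_id r).ofReal_comp.mul_const (Complex.exp (Complex.I * η))
  rw [Complex.ofReal_one, one_mul] at h
  exact h

section
variable {k ψ α : ℝ} {V V' : ℂ → ℂ}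

theorem IsHolSol.hasDerivAt_ray {Λ : ℂ} (hV : IsHolSol Λ α V V') {η r : ℝ} (hη : |η| < Real.pi)
    (hr : 0 < r) : HasDerivAt (fun r => V (rayPt η r))
      (Complex.exp (Complex.I * η) * V' (rayPt η r)) r := by
  rw [mul_comm]
  exact (hV.deriv _ (rayPt_mem_slitPlane hr hη)).comp r (hasDerivAt_rayPt η r)

theorem IsHolSol.hasDerivAt_ray_deriv
    (hV : IsHolSol ((k * Complex.exp (Complex.I * ψ)) ^ 2) α V V') {η r : ℝ}
    (hη : |η| < Real.pi) (hr : 0 < r) :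
    HasDerivAt (fun r => Complex.exp (Complex.I * η) * V' (rayPt η r))
      (k ^ 2 * (rayG α (2 * ψ + 2 * η + α * η) (2 * ψ + 2 * η) r) ^ 2 * V (rayPt η r)) r := by
  have h := ((hV.deriv' _ (rayPt_mem_slitPlane hr hη)).comp r (hasDerivAt_rayPt η r)).const_mul
    (Complex.exp (Complex.I * η))
  convert! h using 1
  have e1 : Complex.exp (Complex.I * ((2 * ψ + 2 * η + α * η : ℝ) : ℂ))
      = Complex.exp (Complex.I * ψ) ^ 2 * Complex.exp (Complex.I * η) ^ 2
        * Complex.exp (Complex.I * ((α * η : ℝ) : ℂ)) := by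
    rw [← Complex.exp_nat_mul, ← Complex.exp_nat_mul, ← Complex.exp_add, ← Complex.exp_add]
    congr 1; push_cast; ring
  have e2 : Complex.exp (Complex.I * ((2 * ψ + 2 * η : ℝ) : ℂ))
      = Complex.exp (Complex.I * ψ) ^ 2 * Complex.exp (Complex.I * η) ^ 2 := by
    rw [← Complex.exp_nat_mul, ← Complex.exp_nat_mul, ← Complex.exp_add]
    congr 1; push_cast; ring
  rw [rayG_sq, rayPt_cpow hr hη, e1, e2]
  ring

theorem IsHolSol.continuousOn_ray {Λ : ℂ} (hV : IsHolSol Λ α V V') {η : ℝ}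
    (hη : |η| < Real.pi) : ContinuousOn (fun r => V (rayPt η r)) (Ici 0) :=
  hV.cont.comp (fun r _ => (hasDerivAt_rayPt η r).continuousAt.continuousWithinAt)
    fun _ hr => rayPt_mem_insert hr hη

theorem IsHolSol.continuousOn_ray_deriv {Λ : ℂ} (hV : IsHolSol Λ α V V') {η : ℝ}
    (hη : |η| < Real.pi) : ContinuousOn
      (fun r => Complex.exp (Complex.I * η) * V' (rayPt η r)) (Ici 0) :=
  continuousOn_const.mul
    (hV.cont'.comp (fun r _ => (hasDerivAt_rayPt η r).continuousAt.continuousWithinAt)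
      fun _ hr => rayPt_mem_insert hr hη)

theorem IsHolSol.isPathSol_ray
    (hV : IsHolSol ((k * Complex.exp (Complex.I * ψ)) ^ 2) α V V') {η A B : ℝ}
    (hη : |η| < Real.pi) (hA : A = 2 * ψ + 2 * η + α * η) (hB : B = 2 * ψ + 2 * η)
    {s₀ s₁ : ℝ} (h₀ : 0 ≤ s₀) :
    IsPathSol k s₀ s₁ (rayG α A B) 1 (fun r => V (rayPt η r))
      (fun r => Complex.exp (Complex.I * η) * V' (rayPt η r)) where
  cont_W := (hV.continuousOn_ray hη).mono (Icc_subset_Ici_self.trans (Ici_subset_Ici.2 h₀))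
  cont_Y := (hV.continuousOn_ray_deriv hη).mono (Icc_subset_Ici_self.trans (Ici_subset_Ici.2 h₀))
  deriv_W s hs := by
    simpa using hV.hasDerivAt_ray hη (h₀.trans_lt hs.1)
  deriv_Y s hs := by
    subst hA hB
    simpa using hV.hasDerivAt_ray_deriv hη (h₀.trans_lt hs.1)
end

/-! ### The contour identity for the action integrals -/

theorem exp_mul_cpow {z : ℂ} (hz : z ≠ 0) {κ : ℝ} (h1 : -Real.pi < z.arg + κ)
    (h2 : z.arg + κ ≤ Real.pi) (p : ℂ) :
    (Complex.exp (Complex.I * κ) * z) ^ p = Complex.exp (Complex.I * κ * p) * z ^ p := by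
  have h0 : Complex.exp (Complex.I * κ) * z ≠ 0 := mul_ne_zero (Complex.exp_ne_zero _) hz
  have hl : Complex.log (Complex.exp (Complex.I * κ) * z) = Complex.I * κ + Complex.log z := by
    conv_lhs => rw [← Complex.exp_log hz, ← Complex.exp_add]
    rw [Complex.log_exp] <;> simp [Complex.log_im] <;> linarith
  rw [Complex.cpow_def_of_ne_zero h0, Complex.cpow_def_of_ne_zero hz, hl, ← Complex.exp_add]
  congr 1; ring

theorem exp_pi_mul_cpow_half {κ : ℝ} :
    Complex.exp (Complex.I * κ * ((1 / 2 : ℝ) : ℂ)) = Complex.exp (Complex.I * ((κ / 2 : ℝ) : ℂ)) := by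
  congr 1; push_cast; ring

theorem exp_I_mul_pi_div_two : Complex.exp (Complex.I * ((Real.pi / 2 : ℝ) : ℂ)) = Complex.I := by
  rw [mul_comm]; push_cast; exact Complex.exp_pi_div_two_mul_I

/-- On the upper half plane the principal square root of `z` is `i` times that of `-z`. -/
theorem cpow_half_of_im_pos {z : ℂ} (hz : 0 < z.im) :
    z ^ ((1 / 2 : ℝ) : ℂ) = Complex.I * (-z) ^ ((1 / 2 : ℝ) : ℂ) := by
  have hz0 : -z ≠ 0 := by
    intro h; rw [neg_eq_zero] at h; simp [h] at hz
  have ha : (-z).arg < 0 := Complex.arg_neg_iff.2 (by simpa using hz)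
  have h := exp_mul_cpow hz0 (κ := Real.pi) (by linarith [Complex.neg_pi_lt_arg (-z), Real.pi_pos])
    (by linarith) ((1 / 2 : ℝ) : ℂ)
  rw [exp_pi_mul_cpow_half, exp_I_mul_pi_div_two, mul_comm Complex.I, Complex.exp_pi_mul_I] at h
  simpa using h

theorem continuousOn_cpow_half_upper :
    ContinuousOn (fun z : ℂ => z ^ ((1 / 2 : ℝ) : ℂ)) {z | 0 ≤ z.im} := by
  have h1 : ContinuousOn (fun z : ℂ => Complex.exp (Complex.I * ((Real.pi / 4 : ℝ) : ℂ)) *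
      (-Complex.I * z) ^ ((1 / 2 : ℝ) : ℂ)) {z | 0 ≤ z.im} := by
    refine continuousOn_const.mul ?_
    refine (continuousOn_cpow_real (by norm_num : (0 : ℝ) ≤ 1 / 2)).comp (by fun_prop) ?_
    intro z hz
    by_cases h0 : z = 0
    · left; simp [h0]
    right
    rcases (show 0 ≤ z.im from hz).eq_or_lt with h | h
    · right
      simp
      intro hre
      exact h0 (Complex.ext hre h.symm)
    · left; simpa using h
  refine h1.congr fun z hz => ?_
  by_cases h0 : z = 0
  · simp [h0]
  have ha : 0 ≤ z.arg := Complex.arg_nonneg_iff.2 hz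
  have h := exp_mul_cpow h0 (κ := -(Real.pi / 2)) (by linarith [Real.pi_pos])
    (by linarith [Complex.arg_le_pi z, Real.pi_pos]) ((1 / 2 : ℝ) : ℂ)
  have e : Complex.exp (Complex.I * ((-(Real.pi / 2) : ℝ) : ℂ)) = -Complex.I := by
    rw [Complex.ofReal_neg, mul_neg, Complex.exp_neg, exp_I_mul_pi_div_two, Complex.inv_I]
  rw [e] at h
  simp only
  rw [h, ← mul_assoc, ← Complex.exp_add]
  convert (one_mul _).symm
  rw [← Complex.exp_zero]
  congr 1; push_cast; ring

theorem neg_rayH_im_nonneg {α η r : ℝ} (hr : 0 ≤ r) (h0 : 0 ≤ α * η) (h1 : α * η ≤ Real.pi) :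
    0 ≤ (-rayH α (α * η) r).im := by
  rw [Complex.neg_im, rayH_im, neg_neg]
  exact mul_nonneg (Real.rpow_nonneg hr _) (Real.sin_nonneg_of_nonneg_of_le_pi h0 h1)

theorem continuousOn_neg_rayH_cpow {α η : ℝ} (hα : 0 < α) (h0 : 0 ≤ α * η)
    (h1 : α * η ≤ Real.pi) :
    ContinuousOn (fun r => (-rayH α (α * η) r) ^ ((1 / 2 : ℝ) : ℂ)) (Ici 0) :=
  continuousOn_cpow_half_upper.comp (continuous_rayH hα).neg.continuousOn
    fun _ hr => neg_rayH_im_nonneg hr h0 h1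

/-- The Liouville–Green integrand in logarithmic coordinates. -/
noncomputable def logIntegrand (α : ℝ) (w : ℂ) : ℂ :=
  Complex.exp w * (Complex.exp (α * w) - 1) ^ ((1 / 2 : ℝ) : ℂ)

theorem logIntegrand_eq (α ρ η : ℝ) : logIntegrand α (ρ + η * Complex.I)
    = rayPt η (Real.exp ρ) * (-rayH α (α * η) (Real.exp ρ)) ^ ((1 / 2 : ℝ) : ℂ) := by
  unfold logIntegrand rayPt rayH
  rw [Complex.exp_add, ← Complex.ofReal_exp, mul_comm (η : ℂ)]
  congr 2
  rw [← Real.exp_mul, neg_sub, Complex.ofReal_exp, ← Complex.exp_add]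
  congr 2
  push_cast; ring

theorem exp_alpha_im (α : ℝ) (w : ℂ) : (Complex.exp (α * w) - 1).im
    = Real.exp (α * w.re) * Real.sin (α * w.im) := by
  simp [Complex.exp_im]

theorem rect_identity {α β ε T : ℝ} (hα : 0 < α) (hβ : 0 < β) (hαβ : α * β < Real.pi)
    (hε : 0 < ε) (hεT : ε ≤ T) :
    (∫ r in ε..T, (-rayH α 0 r) ^ ((1 / 2 : ℝ) : ℂ))
      - (∫ r in ε..T, Complex.exp (Complex.I * β) * (-rayH α (α * β) r) ^ ((1 / 2 : ℝ) : ℂ))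
      + Complex.I * (∫ η in (0 : ℝ)..β, rayPt η T * (-rayH α (α * η) T) ^ ((1 / 2 : ℝ) : ℂ))
      - Complex.I * (∫ η in (0 : ℝ)..β, rayPt η ε * (-rayH α (α * η) ε) ^ ((1 / 2 : ℝ) : ℂ))
      = 0 := by
  have hT : 0 < T := hε.trans_le hεT
  have hrect := Complex.integral_boundary_rect_eq_zero_of_continuousOn_of_differentiableOn
    (logIntegrand α) (Real.log ε : ℂ) ((Real.log T : ℂ) + β * Complex.I) ?_ ?_
  · simp only [Complex.ofReal_re, Complex.ofReal_im, Complex.add_re, Complex.mul_re, Complex.I_re,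
      mul_zero, Complex.I_im, sub_self, add_zero, Complex.add_im, Complex.mul_im, mul_one,
      zero_add, smul_eq_mul, logIntegrand_eq, Real.exp_log hε, Real.exp_log hT] at hrect
    have hsub : ∀ η : ℝ, 0 ≤ η → η ≤ β →
        (∫ x in Real.log ε..Real.log T, rayPt η (Real.exp x) *
          (-rayH α (α * η) (Real.exp x)) ^ ((1 / 2 : ℝ) : ℂ))
        = ∫ r in ε..T, Complex.exp (Complex.I * η) *
          (-rayH α (α * η) r) ^ ((1 / 2 : ℝ) : ℂ) := by
      intro η h0 h1
      have hc : ContinuousOn (fun r => Complex.exp (Complex.I * η) *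
          (-rayH α (α * η) r) ^ ((1 / 2 : ℝ) : ℂ)) (Ici 0) :=
        continuousOn_const.mul (continuousOn_neg_rayH_cpow hα (by positivity)
          (by nlinarith))
      have := intervalIntegral.integral_deriv_smul_comp'' (a := Real.log ε) (b := Real.log T)
        (f := Real.exp) (f' := Real.exp) (g := fun r => Complex.exp (Complex.I * η) *
          (-rayH α (α * η) r) ^ ((1 / 2 : ℝ) : ℂ)) Real.continuous_exp.continuousOn
        (fun x _ => (Real.hasDerivAt_exp x).hasDerivWithinAt) Real.continuous_exp.continuousOn
        (hc.mono (by rintro _ ⟨x, _, rfl⟩; exact (Real.exp_pos x).le))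
      rw [Real.exp_log hε, Real.exp_log hT] at this
      rw [← this]
      refine intervalIntegral.integral_congr fun x _ => ?_
      simp only [Function.comp, Complex.real_smul, rayPt]
      ring
    have hsub0 := hsub 0 le_rfl hβ.le
    rw [mul_zero] at hsub0
    rw [hsub0, hsub β hβ.le le_rfl] at hrect
    simpa using hrect
  · unfold logIntegrand
    refine Complex.continuous_exp.continuousOn.mul
      (continuousOn_cpow_half_upper.comp (by fun_prop) ?_)
    intro w hw
    rw [Complex.mem_reProdIm] at hw
    simp only [Complex.ofReal_im, Complex.add_im, Complex.mul_im, Complex.I_im, Complex.ofReal_re,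
      Complex.I_re, mul_one, mul_zero, add_zero, zero_add, uIcc_of_le hβ.le] at hw
    show 0 ≤ (Complex.exp (α * w) - 1).im
    rw [exp_alpha_im]
    exact mul_nonneg (Real.exp_pos _).le (Real.sin_nonneg_of_nonneg_of_le_pi
      (mul_nonneg hα.le hw.2.1) (by nlinarith [hw.2.2]))
  · intro w hw
    rw [Complex.mem_reProdIm] at hw
    simp only [Complex.ofReal_im, Complex.add_im, Complex.mul_im, Complex.I_im, Complex.ofReal_re,
      Complex.I_re, mul_one, mul_zero, add_zero, zero_add, min_eq_left hβ.le,
      max_eq_right hβ.le] at hw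
    have hs : Complex.exp (α * w) - 1 ∈ Complex.slitPlane := by
      right
      rw [exp_alpha_im]
      exact (mul_pos (Real.exp_pos _) (Real.sin_pos_of_pos_of_lt_pi
        (mul_pos hα hw.2.1) (by nlinarith [hw.2.2]))).ne'
    unfold logIntegrand
    refine (DifferentiableAt.mul (by fun_prop) ?_).differentiableWithinAt
    exact DifferentiableAt.cpow_const (by fun_prop) hs

theorem norm_rayPt {r : ℝ} (η : ℝ) (hr : 0 ≤ r) : ‖rayPt η r‖ = r := by
  rw [rayPt, norm_mul, mul_comm Complex.I, Complex.norm_exp_ofReal_mul_I, mul_one,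
    Complex.norm_of_nonneg hr]

theorem norm_rayH_le {r : ℝ} (α ω : ℝ) (hr : 0 ≤ r) : ‖rayH α ω r‖ ≤ 1 + r ^ α := by
  refine (norm_sub_le _ _).trans_eq ?_
  rw [norm_one, norm_mul, mul_comm Complex.I, Complex.norm_exp_ofReal_mul_I, mul_one,
    Complex.norm_of_nonneg (Real.rpow_nonneg hr _)]

theorem tendsto_integral_left {f : ℝ → ℂ} (hf : ContinuousOn f (Ici 0)) {T : ℝ} (hT : 0 < T) :
    Filter.Tendsto (fun ε => ∫ r in ε..T, f r) (nhdsWithin 0 (Ioi 0))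
      (nhds (∫ r in (0 : ℝ)..T, f r)) := by
  have hi : IntegrableOn f (uIcc 0 T) := by
    rw [uIcc_of_le hT.le]
    exact (hf.mono Icc_subset_Ici_self).integrableOn_Icc
  have h := intervalIntegral.continuousOn_primitive_interval_left hi 0 left_mem_uIcc
  rw [uIcc_of_le hT.le] at h
  exact h.mono_left (nhdsWithin_le_of_mem (Icc_mem_nhdsGT hT))

theorem contour_upper {α β T : ℝ} (hα : 0 < α) (hβ : 0 < β) (hαβ : α * β < Real.pi)
    (hT : 0 < T) :
    (∫ r in (0 : ℝ)..T, (-rayH α 0 r) ^ ((1 / 2 : ℝ) : ℂ))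
      - (∫ r in (0 : ℝ)..T, Complex.exp (Complex.I * β) *
          (-rayH α (α * β) r) ^ ((1 / 2 : ℝ) : ℂ))
      + Complex.I * (∫ η in (0 : ℝ)..β, rayPt η T * (-rayH α (α * η) T) ^ ((1 / 2 : ℝ) : ℂ))
      = 0 := by
  have h1 := tendsto_integral_left (f := fun r => (-rayH α 0 r) ^ ((1 / 2 : ℝ) : ℂ))
    (by simpa using continuousOn_neg_rayH_cpow (η := 0) hα (by simp) (by simp [Real.pi_pos.le])) hT
  have h2 := tendsto_integral_left (f := fun r => Complex.exp (Complex.I * β) *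
    (-rayH α (α * β) r) ^ ((1 / 2 : ℝ) : ℂ))
    (continuousOn_const.mul (continuousOn_neg_rayH_cpow hα (by positivity) hαβ.le)) hT
  have h3 : Filter.Tendsto (fun ε : ℝ => ∫ η in (0 : ℝ)..β,
      rayPt η ε * (-rayH α (α * η) ε) ^ ((1 / 2 : ℝ) : ℂ)) (nhdsWithin 0 (Ioi 0)) (nhds 0) := by
    have hb : Filter.Tendsto (fun ε : ℝ => ε * 2 * |β - 0|) (nhdsWithin 0 (Ioi 0)) (nhds 0) := by
      have : Filter.Tendsto (fun ε : ℝ => ε * 2 * |β - 0|) (nhds 0) (nhds (0 * 2 * |β - 0|)) :=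
        (Continuous.tendsto (by fun_prop) 0)
      simp only [zero_mul] at this
      exact this.mono_left nhdsWithin_le_nhds
    refine squeeze_zero_norm' ?_ hb
    filter_upwards [Ioc_mem_nhdsGT (zero_lt_one' ℝ)] with ε hε
    refine intervalIntegral.norm_integral_le_of_norm_le_const fun η _ => ?_
    rw [norm_mul, norm_rayPt η hε.1.le, Complex.norm_cpow_real, norm_neg]
    have hle : ‖rayH α (α * η) ε‖ ≤ 2 := (norm_rayH_le _ _ hε.1.le).trans (by
      linarith [Real.rpow_le_one hε.1.le hε.2 hα.le])
    refine mul_le_mul_of_nonneg_left ?_ hε.1.le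
    calc ‖rayH α (α * η) ε‖ ^ (1 / 2 : ℝ) ≤ 2 ^ (1 / 2 : ℝ) :=
          Real.rpow_le_rpow (norm_nonneg _) hle (by norm_num)
      _ ≤ 2 ^ (1 : ℝ) := Real.rpow_le_rpow_of_exponent_le (by norm_num) (by norm_num)
      _ = 2 := by norm_num
  have h4 := ((h1.sub h2).add_const (Complex.I * (∫ η in (0 : ℝ)..β,
    rayPt η T * (-rayH α (α * η) T) ^ ((1 / 2 : ℝ) : ℂ)))).sub (h3.const_mul Complex.I)
  have h5 := h4.congr' (f₂ := fun _ => (0 : ℂ)) (by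
    filter_upwards [Ioc_mem_nhdsGT hT] with ε hε
    exact rect_identity hα hβ hαβ hε.1 hε.2)
  simpa using tendsto_nhds_unique h5 tendsto_const_nhds

/-! ### The combined action identity and the arc -/

theorem conj_rayH (α ω r : ℝ) : (starRingEnd ℂ) (rayH α ω r) = rayH α (-ω) r := by
  simp [rayH, ← Complex.exp_conj]

theorem conj_rayPt (η r : ℝ) : (starRingEnd ℂ) (rayPt η r) = rayPt (-η) r := by
  simp [rayPt, ← Complex.exp_conj]

theorem conj_cpow_half {z : ℂ} (hz : z ∈ Complex.slitPlane) :
    (starRingEnd ℂ) (z ^ ((1 / 2 : ℝ) : ℂ)) = (starRingEnd ℂ) z ^ ((1 / 2 : ℝ) : ℂ) := by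
  rw [Complex.conj_cpow _ _ (Complex.slitPlane_arg_ne_pi hz), Complex.conj_ofReal]

/-- The square root of `x^α - 1` on the ray of angle `η`. -/
noncomputable def arcRoot (α T η : ℝ) : ℂ := (-rayH α (α * η) T) ^ ((1 / 2 : ℝ) : ℂ)

theorem sin_alpha_ne_zero {α η : ℝ} (hα : 0 < α) (hη : η ≠ 0) (h : α * |η| < Real.pi) :
    Real.sin (α * η) ≠ 0 := by
  rcases lt_or_gt_of_ne hη with h0 | h0
  · rw [abs_of_neg h0] at h
    exact (Real.sin_neg_of_neg_of_neg_pi_lt (by nlinarith) (by nlinarith)).ne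
  · rw [abs_of_pos h0] at h
    exact (Real.sin_pos_of_pos_of_lt_pi (by positivity) h).ne'

theorem neg_rayH_mem_slitPlane {α T η : ℝ} (hα : 0 < α) (hT : 1 < T) (h : α * |η| < Real.pi) :
    -rayH α (α * η) T ∈ Complex.slitPlane := by
  by_cases hη : η = 0
  · left
    have := Real.one_lt_rpow hT hα
    simp only [hη, rayH]
    simpa using this
  · right
    rw [Complex.neg_im, rayH_im, neg_neg]
    exact mul_ne_zero (Real.rpow_pos_of_pos (by linarith) _).ne' (sin_alpha_ne_zero hα hη h)

theorem contour_ray {α β T : ℝ} (hα : 0 < α) (hβ : 0 < β) (hαβ : α * β < Real.pi) (hT : 0 < T) :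
    (∫ r in (0 : ℝ)..T, (-rayH α 0 r) ^ ((1 / 2 : ℝ) : ℂ))
      - Complex.I * Complex.exp (Complex.I * β) *
          (∫ r in (0 : ℝ)..T, rayH α (α * β) r ^ ((1 / 2 : ℝ) : ℂ))
      + ∫ η in (0 : ℝ)..β, Complex.I * rayPt η T * arcRoot α T η = 0 := by
  have h := contour_upper hα hβ hαβ hT
  rw [← intervalIntegral.integral_const_mul] at h
  rw [← intervalIntegral.integral_const_mul]
  have e : (∫ r in (0 : ℝ)..T, Complex.exp (Complex.I * β) *
          (-rayH α (α * β) r) ^ ((1 / 2 : ℝ) : ℂ))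
      = ∫ r in (0 : ℝ)..T, Complex.I * Complex.exp (Complex.I * β) *
          rayH α (α * β) r ^ ((1 / 2 : ℝ) : ℂ) := by
    refine intervalIntegral.integral_congr_Ioo_of_le hT.le fun r hr => ?_
    have him : 0 < (-rayH α (α * β) r).im := by
      rw [Complex.neg_im, rayH_im, neg_neg]
      exact mul_pos (Real.rpow_pos_of_pos hr.1 _) (Real.sin_pos_of_pos_of_lt_pi (by positivity) hαβ)
    rw [cpow_half_of_im_pos him, neg_neg]
    ring
  rw [e] at h
  simpa only [arcRoot, mul_assoc] using h

theorem cpow_half_sub_conj {α : ℝ} (r : ℝ) :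
    (-rayH α 0 r) ^ ((1 / 2 : ℝ) : ℂ) - (starRingEnd ℂ) ((-rayH α 0 r) ^ ((1 / 2 : ℝ) : ℂ))
      = 2 * Complex.I * ((√(1 - r ^ α) : ℝ) : ℂ) := by
  have e : -rayH α 0 r = ((r ^ α - 1 : ℝ) : ℂ) := by simp [rayH]
  rw [e]
  rcases le_total 0 (r ^ α - 1) with h | h
  · rw [Real.sqrt_eq_zero_of_nonpos (by linarith), ← Complex.ofReal_cpow h, Complex.conj_ofReal]
    simp
  · rw [Complex.ofReal_cpow_of_nonpos h]
    have : Complex.exp (Real.pi * Complex.I * ((1 / 2 : ℝ) : ℂ)) = Complex.I := by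
      refine Eq.trans ?_ exp_I_mul_pi_div_two
      congr 1; push_cast; ring
    rw [this, ← Complex.ofReal_neg, ← Complex.ofReal_cpow (by linarith), map_mul, Complex.conj_I,
      Complex.conj_ofReal, Real.sqrt_eq_rpow, neg_sub]
    ring

theorem integral_sqrt_one_sub {α T : ℝ} (hα : 0 < α) (hT : 1 ≤ T) :
    (∫ r in (0 : ℝ)..T, √(1 - r ^ α)) = ∫ r in (0 : ℝ)..1, √(1 - r ^ α) := by
  have hc : Continuous fun r : ℝ => √(1 - r ^ α) := by
    have := Real.continuous_rpow_const hα.le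
    fun_prop
  rw [← intervalIntegral.integral_add_adjacent_intervals (hc.intervalIntegrable 0 1)
    (hc.intervalIntegrable 1 T)]
  have : (∫ r in (1 : ℝ)..T, √(1 - r ^ α)) = ∫ r in (1 : ℝ)..T, (0 : ℝ) := by
    refine intervalIntegral.integral_congr_Ioo_of_le hT fun r hr => ?_
    exact Real.sqrt_eq_zero_of_nonpos (by linarith [Real.one_le_rpow hr.1.le hα.le])
  rw [this]; simp

theorem continuousAt_arcRoot {α T η : ℝ} (hα : 0 < α) (hT : 1 < T) (h : α * |η| < Real.pi) :
    ContinuousAt (arcRoot α T) η := by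
  have : ContinuousAt (fun η => -rayH α (α * η) T) η := by
    unfold rayH; fun_prop
  exact this.cpow continuousAt_const (neg_rayH_mem_slitPlane hα hT h)

theorem action_identity {α β γ T : ℝ} (hα : 0 < α) (hβ : 0 < β) (hαβ : α * β < Real.pi)
    (hγ : 0 < γ) (hαγ : α * γ < Real.pi) (hT : 1 < T) :
    Complex.I * Complex.exp (Complex.I * β) *
        (∫ r in (0 : ℝ)..T, rayH α (α * β) r ^ ((1 / 2 : ℝ) : ℂ))
      + Complex.I * Complex.exp (Complex.I * ((-γ : ℝ) : ℂ)) *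
        (∫ r in (0 : ℝ)..T, rayH α (α * -γ) r ^ ((1 / 2 : ℝ) : ℂ))
      = 2 * Complex.I * ((∫ u in (0 : ℝ)..1, √(1 - u ^ α) : ℝ) : ℂ)
        + ∫ η in (-γ)..β, Complex.I * rayPt η T * arcRoot α T η := by
  have hT0 : 0 < T := by linarith
  have h1 := contour_ray hα hβ hαβ hT0
  have h2 := congrArg (starRingEnd ℂ) (contour_ray hα hγ hαγ hT0)
  rw [map_add, map_sub, map_mul, map_mul, map_zero, ← intervalIntegral.intervalIntegral_conj,
    ← intervalIntegral.intervalIntegral_conj, ← intervalIntegral.intervalIntegral_conj] at h2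
  have e1 : (∫ r in (0 : ℝ)..T, (starRingEnd ℂ) (rayH α (α * γ) r ^ ((1 / 2 : ℝ) : ℂ)))
      = ∫ r in (0 : ℝ)..T, rayH α (α * -γ) r ^ ((1 / 2 : ℝ) : ℂ) := by
    refine intervalIntegral.integral_congr fun r _ => ?_
    rw [conj_cpow_half (rayH_mem_slitPlane
      (Real.sin_pos_of_pos_of_lt_pi (by positivity) hαγ).ne' r), conj_rayH, mul_neg]
  have e2 : (∫ η in (0 : ℝ)..γ, (starRingEnd ℂ) (Complex.I * rayPt η T * arcRoot α T η))
      = -∫ η in (-γ)..0, Complex.I * rayPt η T * arcRoot α T η := by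
    rw [← neg_zero, ← intervalIntegral.integral_comp_neg, neg_zero,
      ← intervalIntegral.integral_neg]
    refine intervalIntegral.integral_congr fun η hη => ?_
    rw [uIcc_of_le hγ.le] at hη
    have hs := neg_rayH_mem_slitPlane (η := η) hα hT
      (by rw [abs_of_nonneg hη.1]; nlinarith [hη.2])
    simp only [arcRoot]
    rw [map_mul, map_mul, Complex.conj_I, conj_rayPt, conj_cpow_half hs, map_neg, conj_rayH,
      mul_neg]
    ring
  have e3 : (starRingEnd ℂ) (Complex.exp (Complex.I * γ))
      = Complex.exp (Complex.I * ((-γ : ℝ) : ℂ)) := by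
    rw [← Complex.exp_conj]; simp
  rw [e1, e2, e3, Complex.conj_I] at h2
  have hcr : ContinuousOn (fun r => (-rayH α 0 r) ^ ((1 / 2 : ℝ) : ℂ)) (uIcc 0 T) := by
    rw [uIcc_of_le hT0.le]
    have := continuousOn_neg_rayH_cpow (η := 0) hα (by simp) (by simp [Real.pi_pos.le])
    rw [mul_zero] at this
    exact this.mono Icc_subset_Ici_self
  have e4 : (∫ r in (0 : ℝ)..T, (-rayH α 0 r) ^ ((1 / 2 : ℝ) : ℂ))
      - (∫ r in (0 : ℝ)..T, (starRingEnd ℂ) ((-rayH α 0 r) ^ ((1 / 2 : ℝ) : ℂ)))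
      = 2 * Complex.I * ((∫ u in (0 : ℝ)..1, √(1 - u ^ α) : ℝ) : ℂ) := by
    have hcc : ContinuousOn (fun r => (starRingEnd ℂ) ((-rayH α 0 r) ^ ((1 / 2 : ℝ) : ℂ)))
        (uIcc 0 T) := Complex.continuous_conj.comp_continuousOn hcr
    rw [← intervalIntegral.integral_sub hcr.intervalIntegrable hcc.intervalIntegrable,
      ← integral_sqrt_one_sub hα hT.le, ← intervalIntegral.integral_ofReal,
      ← intervalIntegral.integral_const_mul]
    exact intervalIntegral.integral_congr fun r _ => cpow_half_sub_conj r
  have hca : ContinuousOn (fun η => Complex.I * rayPt η T * arcRoot α T η) (Icc (-γ) β) := by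
    intro η hη
    have hm : α * |η| < Real.pi := by
      rcases abs_cases η with ⟨h, _⟩ | ⟨h, _⟩ <;> rw [h] <;> nlinarith [hη.1, hη.2]
    have := continuousAt_arcRoot hα hT hm
    refine ContinuousAt.continuousWithinAt ?_
    unfold rayPt
    fun_prop
  rw [← intervalIntegral.integral_add_adjacent_intervals (b := 0)
    (ContinuousOn.intervalIntegrable_of_Icc (by linarith)
      (hca.mono (Icc_subset_Icc_right hβ.le)))
    (ContinuousOn.intervalIntegrable_of_Icc hβ.le
      (hca.mono (Icc_subset_Icc_left (by linarith)))), ← e4]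
  linear_combination h2 - h1

/-- The continuous square root of the potential along the arc of radius `T`. -/
noncomputable def arcG (α ψ T η : ℝ) : ℂ := -Complex.exp (Complex.I * ψ) * arcRoot α T η

/-- Half the logarithmic derivative of `arcG`. -/
noncomputable def arcC (α T η : ℝ) : ℂ :=
  Complex.I * α * ((T ^ α : ℝ) : ℂ) * Complex.exp (Complex.I * ((α * η : ℝ) : ℂ)) /
    (4 * -rayH α (α * η) T)

/-- The action along the arc of radius `T` starting at the angle `η₀`. -/
noncomputable def arcS (α ψ T η₀ η : ℝ) : ℂ :=
  ∫ s in η₀..η, Complex.I * rayPt s T * arcG α ψ T s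

/-- The Liouville–Green factor along the arc of radius `T`. -/
noncomputable def arcF (α ψ T η₀ k η : ℝ) : ℂ :=
  (-rayH α (α * η) T) ^ ((1 / 4 : ℝ) : ℂ) * Complex.exp (k * arcS α ψ T η₀ η)

theorem norm_arcF (α ψ T η₀ k η : ℝ) : ‖arcF α ψ T η₀ k η‖
    = ‖rayH α (α * η) T‖ ^ (1 / 4 : ℝ) * Real.exp (k * (arcS α ψ T η₀ η).re) := by
  rw [arcF, norm_mul, Complex.norm_cpow_real, norm_neg, Complex.norm_exp]
  simp

theorem arcRoot_sq (α T η : ℝ) : arcRoot α T η ^ 2 = -rayH α (α * η) T := by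
  rw [arcRoot, ← Complex.cpow_nat_mul]; norm_num

theorem arcG_sq (α ψ T η : ℝ) :
    arcG α ψ T η ^ 2 = Complex.exp (Complex.I * ψ) ^ 2 * -rayH α (α * η) T := by
  rw [arcG, mul_pow, arcRoot_sq, neg_sq]

theorem norm_arcG_sq (α ψ T η : ℝ) : ‖arcG α ψ T η‖ ^ 2 = ‖rayH α (α * η) T‖ := by
  rw [← norm_pow, arcG_sq, norm_mul, norm_neg, norm_pow, mul_comm Complex.I,
    Complex.norm_exp_ofReal_mul_I, one_pow, one_mul]

theorem hasDerivAt_neg_rayH_angle {α T η : ℝ} (h : -rayH α (α * η) T ≠ 0) :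
    HasDerivAt (fun η => -rayH α (α * η) T) (4 * arcC α T η * -rayH α (α * η) T) η := by
  have h0 : HasDerivAt (fun η : ℝ => Complex.I * ((α * η : ℝ) : ℂ)) (Complex.I * α) η := by
    have := (((hasDerivAt_id η).const_mul α).ofReal_comp).const_mul Complex.I
    simpa using this
  have h1 := ((h0.cexp.const_mul ((T ^ α : ℝ) : ℂ)).const_sub 1).neg
  convert! h1 using 1
  have h' := neg_ne_zero.1 h
  unfold arcC
  field_simp

theorem hasDerivAt_neg_rayH_angle_cpow {α T η : ℝ} (h : -rayH α (α * η) T ∈ Complex.slitPlane)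
    (p : ℂ) : HasDerivAt (fun η => (-rayH α (α * η) T) ^ p)
      (4 * p * arcC α T η * (-rayH α (α * η) T) ^ p) η := by
  have h0 := Complex.slitPlane_ne_zero h
  convert! ((hasDerivAt_id (-rayH α (α * η) T)).cpow_const (c := p) h).comp η
    (hasDerivAt_neg_rayH_angle h0) using 1
  have h' := neg_ne_zero.1 h0
  simp only [id]
  rw [Complex.cpow_sub _ _ h0, Complex.cpow_one]
  field_simp

theorem hasDerivAt_arcG {α ψ T η : ℝ} (h : -rayH α (α * η) T ∈ Complex.slitPlane) :
    HasDerivAt (arcG α ψ T) (2 * arcC α T η * arcG α ψ T η) η := by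
  convert! (hasDerivAt_neg_rayH_angle_cpow h ((1 / 2 : ℝ) : ℂ)).const_mul
    (-Complex.exp (Complex.I * ψ)) using 1
  rw [arcG, arcRoot]
  push_cast
  ring

theorem hasDerivAt_rayPt_angle (T η : ℝ) :
    HasDerivAt (fun η => rayPt η T) (Complex.I * rayPt η T) η := by
  have h0 : HasDerivAt (fun η : ℝ => Complex.I * (η : ℂ)) Complex.I η := by
    simpa using (hasDerivAt_id η).ofReal_comp.const_mul Complex.I
  convert! h0.cexp.const_mul (T : ℂ) using 1
  unfold rayPt
  ring

theorem abs_lt_of_mem_Icc {α γ β η : ℝ} (hα : 0 < α) (hγ : α * γ < Real.pi)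
    (hβ : α * β < Real.pi) (h : η ∈ Icc (-γ) β) : α * |η| < Real.pi := by
  rcases abs_cases η with ⟨h', _⟩ | ⟨h', _⟩ <;> rw [h'] <;> nlinarith [h.1, h.2]

theorem hasDerivAt_arcS {α ψ T γ β η : ℝ} (hα : 0 < α) (hT : 1 < T) (hγ : α * γ < Real.pi)
    (hβ : α * β < Real.pi) (h : η ∈ Icc (-γ) β) :
    HasDerivAt (arcS α ψ T (-γ)) (Complex.I * rayPt η T * arcG α ψ T η) η := by
  have hc : ∀ s : ℝ, α * |s| < Real.pi →
      ContinuousAt (fun s => Complex.I * rayPt s T * arcG α ψ T s) s := fun s hs =>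
    (continuousAt_const.mul (hasDerivAt_rayPt_angle T s).continuousAt).mul
      (hasDerivAt_arcG (neg_rayH_mem_slitPlane hα hT hs)).continuousAt
  have hη := abs_lt_of_mem_Icc hα hγ hβ h
  refine intervalIntegral.integral_hasDerivAt_right ?_ ?_ (hc η hη)
  · refine ContinuousOn.intervalIntegrable_of_Icc h.1 fun s hs => (hc s ?_).continuousWithinAt
    exact abs_lt_of_mem_Icc hα hγ hβ ⟨hs.1, hs.2.trans h.2⟩
  · have ho : IsOpen {s : ℝ | α * |s| < Real.pi} := isOpen_lt (by fun_prop) continuous_const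
    exact ContinuousOn.stronglyMeasurableAtFilter ho
      (fun s hs => (hc s hs).continuousWithinAt) η hη

theorem isWKBPath_arc {α ψ T γ β : ℝ} (hα : 0 < α) (hT : 1 < T) (hγ : α * γ < Real.pi)
    (hβ : α * β < Real.pi) (k : ℝ) :
    IsWKBPath k (-γ) β (arcG α ψ T) (arcF α ψ T (-γ) k) (fun η => Complex.I * rayPt η T)
      (arcC α T) := by
  have hs : ∀ η ∈ Icc (-γ) β, -rayH α (α * η) T ∈ Complex.slitPlane := fun η hη =>
    neg_rayH_mem_slitPlane hα hT (abs_lt_of_mem_Icc hα hγ hβ hη)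
  have hF : ∀ η ∈ Icc (-γ) β, HasDerivAt (arcF α ψ T (-γ) k)
      ((k * (Complex.I * rayPt η T) * arcG α ψ T η + arcC α T η) * arcF α ψ T (-γ) k η) η := by
    intro η hη
    convert! (hasDerivAt_neg_rayH_angle_cpow (hs η hη) ((1 / 4 : ℝ) : ℂ)).mul
      ((hasDerivAt_arcS (ψ := ψ) hα hT hγ hβ hη).const_mul (k : ℂ)).cexp using 1
    rw [arcF]
    push_cast
    ring
  refine ⟨fun η hη => (hasDerivAt_arcG (hs η hη)).continuousAt.continuousWithinAt,
    fun η hη => (hF η hη).continuousAt.continuousWithinAt, fun η hη => ?_,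
    fun η hη => hasDerivAt_arcG (hs η (Ioo_subset_Icc_self hη)),
    fun η hη => hF η (Ioo_subset_Icc_self hη)⟩
  have h0 := Complex.slitPlane_ne_zero (hs η hη)
  rw [arcF]
  exact mul_ne_zero (by rw [Complex.cpow_def_of_ne_zero h0]; exact Complex.exp_ne_zero _)
    (Complex.exp_ne_zero _)

theorem IsHolSol.isPathSol_arc {k ψ α : ℝ} {V V' : ℂ → ℂ}
    (hV : IsHolSol ((k * Complex.exp (Complex.I * ψ)) ^ 2) α V V') {γ β T : ℝ}
    (hγ : γ < Real.pi) (hβ : β < Real.pi) (hT : 0 < T) :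
    IsPathSol k (-γ) β (arcG α ψ T) (fun η => Complex.I * rayPt η T) (fun η => V (rayPt η T))
      (fun η => V' (rayPt η T)) := by
  have ha : ∀ η ∈ Icc (-γ) β, |η| < Real.pi := fun η hη =>
    abs_lt.2 ⟨by linarith [hη.1], by linarith [hη.2]⟩
  have h1 : ∀ η ∈ Icc (-γ) β, HasDerivAt (fun η => V (rayPt η T))
      (Complex.I * rayPt η T * V' (rayPt η T)) η := fun η hη => by
    rw [mul_comm]
    exact (hV.deriv _ (rayPt_mem_slitPlane hT (ha η hη))).comp η (hasDerivAt_rayPt_angle T η)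
  have h2 : ∀ η ∈ Icc (-γ) β, HasDerivAt (fun η => V' (rayPt η T))
      (k ^ 2 * (Complex.I * rayPt η T) * arcG α ψ T η ^ 2 * V (rayPt η T)) η := fun η hη => by
    convert! (hV.deriv' _ (rayPt_mem_slitPlane hT (ha η hη))).comp η
      (hasDerivAt_rayPt_angle T η) using 1
    rw [arcG_sq, rayPt_cpow hT (ha η hη), rayH]
    ring
  exact ⟨fun η hη => (h1 η hη).continuousAt.continuousWithinAt,
    fun η hη => (h2 η hη).continuousAt.continuousWithinAt,
    fun η hη => h1 η (Ioo_subset_Icc_self hη), fun η hη => h2 η (Ioo_subset_Icc_self hη)⟩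

theorem norm_arcC_le_one {α T η : ℝ} (hα : 0 < α) (hα2 : α < 2) (hT0 : 0 < T) (hT : 2 ≤ T ^ α) :
    ‖arcC α T η‖ ≤ 1 := by
  have hn : T ^ α - 1 ≤ ‖rayH α (α * η) T‖ := by
    have := norm_sub_norm_le (((T ^ α : ℝ) : ℂ) * Complex.exp (Complex.I * ((α * η : ℝ) : ℂ))) 1
    rw [norm_sub_rev, norm_mul, mul_comm Complex.I, Complex.norm_exp_ofReal_mul_I, mul_one,
      norm_one, Complex.norm_of_nonneg (by positivity), mul_comm _ Complex.I] at this
    exact this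
  rw [arcC, norm_div, norm_mul, norm_mul, norm_mul, norm_mul, norm_neg, mul_comm Complex.I ((_ : ℝ) : ℂ),
    Complex.norm_exp_ofReal_mul_I, Complex.norm_I, Complex.norm_of_nonneg hα.le,
    Complex.norm_of_nonneg (by positivity), div_le_one (mul_pos (by norm_num) (by linarith))]
  norm_num
  nlinarith

theorem re_cpow_half_nonneg (z : ℂ) : 0 ≤ (z ^ ((1 / 2 : ℝ) : ℂ)).re := by
  by_cases hz : z = 0
  · simp [hz]
  rw [Complex.cpow_def_of_ne_zero hz, Complex.exp_re]
  refine mul_nonneg (Real.exp_pos _).le (Real.cos_nonneg_of_mem_Icc ?_)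
  have e : (Complex.log z * ((1 / 2 : ℝ) : ℂ)).im = z.arg / 2 := by
    rw [Complex.im_mul_ofReal, Complex.log_im]; ring
  rw [e]
  constructor <;> linarith [Complex.neg_pi_lt_arg z, Complex.arg_le_pi z]

theorem re_arc_nonneg {α ψ T η s c : ℝ} (hT : 0 < T) (hs : s ≤ Real.sin (ψ + (1 + α / 2) * η))
    (hc : c ≤ Real.cos (α * η / 2)) (hc0 : 0 < c) (h1 : 1 ≤ T ^ α * s * c) :
    0 ≤ (Complex.I * rayPt η T * arcG α ψ T η).re := by
  set a : ℝ := T ^ (α / 2) with ha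
  have ha0 : 0 < a := Real.rpow_pos_of_pos hT _
  have ha2 : a ^ 2 = T ^ α := by
    rw [ha, ← Real.rpow_natCast, ← Real.rpow_mul hT.le]; congr 1; push_cast; ring
  set w₀ : ℂ := a * Complex.exp (((α * η / 2 : ℝ) : ℂ) * Complex.I) with hw₀
  set w := arcRoot α T η with hw
  have hw0re : w₀.re = a * Real.cos (α * η / 2) := by
    rw [hw₀, Complex.re_ofReal_mul, Complex.exp_ofReal_mul_I_re]
  have hsq : (w - w₀) * (w + w₀) = -1 := by
    have e : w₀ ^ 2 = ((T ^ α : ℝ) : ℂ) * Complex.exp (Complex.I * ((α * η : ℝ) : ℂ)) := by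
      rw [hw₀, mul_pow, ← Complex.exp_nat_mul, ← Complex.ofReal_pow, ha2]
      congr 2; push_cast; ring
    have := arcRoot_sq α T η
    rw [← hw, rayH, ← e] at this
    linear_combination this
  have hge : a * c ≤ ‖w + w₀‖ := by
    refine le_trans ?_ (Complex.re_le_norm _)
    rw [Complex.add_re, hw0re]
    have : 0 ≤ w.re := re_cpow_half_nonneg _
    nlinarith
  have hd : ‖w - w₀‖ ≤ a * s := by
    have h2 : ‖w - w₀‖ * ‖w + w₀‖ = 1 := by rw [← norm_mul, hsq]; simp
    have h3 : ‖w - w₀‖ * (a * c) ≤ (a * s) * (a * c) := by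
      calc _ ≤ ‖w - w₀‖ * ‖w + w₀‖ := by gcongr
        _ ≤ _ := by rw [h2, show a * s * (a * c) = a ^ 2 * s * c by ring, ha2]; exact h1
    exact le_of_mul_le_mul_right h3 (by positivity)
  have e : Complex.I * rayPt η T * arcG α ψ T η
      = T * (a * (-Complex.I * Complex.exp (((ψ + (1 + α / 2) * η : ℝ) : ℂ) * Complex.I))
        + -Complex.I * Complex.exp (((ψ + η : ℝ) : ℂ) * Complex.I) * (w - w₀)) := by
    have e1 : Complex.exp (((ψ + (1 + α / 2) * η : ℝ) : ℂ) * Complex.I)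
        = Complex.exp (((ψ + η : ℝ) : ℂ) * Complex.I) *
          Complex.exp (((α * η / 2 : ℝ) : ℂ) * Complex.I) := by
      rw [← Complex.exp_add]; congr 1; push_cast; ring
    have e2 : Complex.exp (((ψ + η : ℝ) : ℂ) * Complex.I)
        = Complex.exp (Complex.I * ψ) * Complex.exp (Complex.I * η) := by
      rw [← Complex.exp_add]; congr 1; push_cast; ring
    rw [e1, e2, arcG, rayPt, ← hw, hw₀]
    ring
  rw [e, Complex.re_ofReal_mul, Complex.add_re, Complex.re_ofReal_mul]
  have h4 : (-Complex.I * Complex.exp (((ψ + (1 + α / 2) * η : ℝ) : ℂ) * Complex.I)).re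
      = Real.sin (ψ + (1 + α / 2) * η) := by
    rw [neg_mul, Complex.neg_re, Complex.I_mul_re, Complex.exp_ofReal_mul_I_im, neg_neg]
  have h5 : |(-Complex.I * Complex.exp (((ψ + η : ℝ) : ℂ) * Complex.I) * (w - w₀)).re|
      ≤ ‖w - w₀‖ := by
    refine (Complex.abs_re_le_norm _).trans_eq ?_
    rw [norm_mul, norm_mul, Complex.norm_exp_ofReal_mul_I]; simp
  rw [h4]
  refine mul_nonneg hT.le ?_
  nlinarith [neg_abs_le (-Complex.I * Complex.exp (((ψ + η : ℝ) : ℂ) * Complex.I) * (w - w₀)).re]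

theorem parallelogram_modes (k : ℝ) (g w y : ℂ) :
    ‖k * g * w + y‖ ^ 2 + ‖k * g * w - y‖ ^ 2 = 2 * (k ^ 2 * ‖g‖ ^ 2 * ‖w‖ ^ 2 + ‖y‖ ^ 2) := by
  have := parallelogram_law_with_norm ℝ ((k : ℂ) * g * w) y
  rw [norm_mul, norm_mul, Complex.norm_real, Real.norm_eq_abs] at this
  have h2 := sq_abs k
  rw [← h2]
  linarith

/-- Propagation of the energy of a solution along a large arc. -/
theorem IsHolSol.arc_energy {k ψ α : ℝ} {V V' : ℂ → ℂ}
    (hV : IsHolSol ((k * Complex.exp (Complex.I * ψ)) ^ 2) α V V') (hα : 0 < α) (hα2 : α < 2)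
    (hk : 0 ≤ k) {γ β T s c : ℝ} (hγβ : -γ ≤ β) (hγ : γ < Real.pi) (hβ : β < Real.pi)
    (hαγ : α * γ < Real.pi)
    (hαβ : α * β < Real.pi) (hT : 1 < T) (hTα : 2 ≤ T ^ α)
    (hs : ∀ η ∈ Icc (-γ) β, s ≤ Real.sin (ψ + (1 + α / 2) * η))
    (hc : ∀ η ∈ Icc (-γ) β, c ≤ Real.cos (α * η / 2)) (hc0 : 0 < c)
    (h1 : 1 ≤ T ^ α * s * c) :
    (k ^ 2 * ‖rayH α (α * β) T‖ * ‖V (rayPt β T)‖ ^ 2 + ‖V' (rayPt β T)‖ ^ 2)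
        / (‖rayH α (α * β) T‖ ^ (1 / 4 : ℝ) * Real.exp (k * (arcS α ψ T (-γ) β).re)) ^ 2
      ≤ Real.exp (5 * (β + γ)) *
        ((k ^ 2 * ‖rayH α (α * -γ) T‖ * ‖V (rayPt (-γ) T)‖ ^ 2 + ‖V' (rayPt (-γ) T)‖ ^ 2)
        / (‖rayH α (α * -γ) T‖ ^ (1 / 4 : ℝ)) ^ 2) := by
  have hT0 : 0 < T := by linarith
  have hre : ∀ η ∈ Ioo (-γ) β, 0 ≤ 4 * k * (Complex.I * rayPt η T * arcG α ψ T η).re :=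
    fun η hη => mul_nonneg (by positivity)
      (re_arc_nonneg hT0 (hs η (Ioo_subset_Icc_self hη)) (hc η (Ioo_subset_Icc_self hη)) hc0 h1)
  have h := wkbEnergy_forward (m := fun _ => 5) (E := fun η => 5 * η) 0
    (isWKBPath_arc (ψ := ψ) hα hT hαγ hαβ k) (hV.isPathSol_arc hγ hβ hT0) (by fun_prop)
    (fun η _ => by simpa using (hasDerivAt_id η).const_mul (5 : ℝ)) hre
    (fun _ _ => by norm_num) (fun η hη => by
      have := norm_arcC_le_one (η := η) hα hα2 hT0 hTα
      have := hre η hη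
      nlinarith [norm_nonneg (arcC α T η)]) (right_mem_Icc.2 hγβ)
  have e : ∀ η, wkbEnergy k (arcG α ψ T) (arcF α ψ T (-γ) k) (fun η => V (rayPt η T))
      (fun η => V' (rayPt η T)) 0 η
      = 2 * ((k ^ 2 * ‖rayH α (α * η) T‖ * ‖V (rayPt η T)‖ ^ 2 + ‖V' (rayPt η T)‖ ^ 2)
        / ‖arcF α ψ T (-γ) k η‖ ^ 2) := fun η => by
    rw [wkbEnergy, sub_zero, norm_zero, norm_div, norm_div, div_pow, div_pow, ← norm_arcG_sq α ψ,
      mul_div_assoc', ← parallelogram_modes]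
    ring
  rw [e, e, norm_arcF, norm_arcF] at h
  have e0 : arcS α ψ T (-γ) (-γ) = 0 := by simp [arcS]
  rw [e0, Complex.zero_re, mul_zero, Real.exp_zero, mul_one,
    show 5 * β - 5 * -γ = 5 * (β + γ) by ring] at h
  linarith

/-! ### Signs of the real and imaginary parts of the square root -/

theorem pos_of_ne_zero_of_pos {f : ℝ → ℝ} (hf : Continuous f) (h0 : 0 < f 0)
    (hne : ∀ r, 0 ≤ r → f r ≠ 0) {r : ℝ} (hr : 0 ≤ r) : 0 < f r := by
  by_contra! h
  obtain ⟨s, hs, hs0⟩ := intermediate_value_Icc' hr hf.continuousOn ⟨h, h0.le⟩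
  exact hne s hs.1 hs0

theorem rayG_sq_re (α A B r : ℝ) : (rayG α A B r ^ 2).re
    = r ^ α * Real.cos A - Real.cos B := by
  rw [rayG_sq, mul_comm Complex.I, mul_comm Complex.I, Complex.sub_re, Complex.re_mul_ofReal,
    Complex.exp_ofReal_mul_I_re, Complex.exp_ofReal_mul_I_re]
  ring

theorem rayG_sq_im (α A B r : ℝ) : (rayG α A B r ^ 2).im
    = r ^ α * Real.sin A - Real.sin B := by
  rw [rayG_sq, mul_comm Complex.I, mul_comm Complex.I, Complex.sub_im, Complex.im_mul_ofReal,
    Complex.exp_ofReal_mul_I_im, Complex.exp_ofReal_mul_I_im]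
  ring

theorem two_mul_re_mul_im_rayG (α A B r : ℝ) :
    2 * ((rayG α A B r).re * (rayG α A B r).im) = r ^ α * Real.sin A - Real.sin B := by
  rw [← rayG_sq_im, sq, Complex.mul_im]; ring

theorem re_sq_sub_im_sq_rayG (α A B r : ℝ) :
    (rayG α A B r).re ^ 2 - (rayG α A B r).im ^ 2 = r ^ α * Real.cos A - Real.cos B := by
  rw [← rayG_sq_re, sq (rayG α A B r), Complex.mul_re]; ring

theorem re_rayG_zero {α A B : ℝ} (hα : 0 < α) : (rayG α A B 0).re = Real.sin (B / 2) := by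
  rw [rayG_zero hα, mul_comm Complex.I, neg_mul, Complex.neg_re, Complex.I_mul_re,
    Complex.exp_ofReal_mul_I_im, neg_neg]

theorem im_rayG_zero {α A B : ℝ} (hα : 0 < α) : (rayG α A B 0).im = -Real.cos (B / 2) := by
  rw [rayG_zero hα, mul_comm Complex.I, neg_mul, Complex.neg_im, Complex.I_mul_im,
    Complex.exp_ofReal_mul_I_re]

theorem re_rayG_pos {α A B r : ℝ} (hα : 0 < α) (hA : 0 < A) (hAB : A < B) (hB : B < Real.pi)
    (hr : 0 ≤ r) : 0 < (rayG α A B r).re := by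
  have hω : Real.sin (A - B) < 0 := Real.sin_neg_of_neg_of_neg_pi_lt (by linarith) (by linarith)
  have hsA : 0 < Real.sin A := Real.sin_pos_of_pos_of_lt_pi hA (by linarith)
  refine pos_of_ne_zero_of_pos (f := fun r => (rayG α A B r).re)
    (Complex.continuous_re.comp (continuous_rayG hα hω.ne)) ?_ (fun s _ h => ?_) hr
  · simp only [re_rayG_zero hα]
    exact Real.sin_pos_of_pos_of_lt_pi (by linarith) (by linarith)
  · have h1 := two_mul_re_mul_im_rayG α A B s
    have h2 := re_sq_sub_im_sq_rayG α A B s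
    simp only [h] at h1 h2
    have h3 : Real.sin B = s ^ α * Real.sin A := by linarith
    rw [Real.sin_sub, h3] at hω
    have h4 := congrArg (fun x => x * Real.sin A) h2
    nlinarith [mul_nonneg (sq_nonneg (rayG α A B s).im) hsA.le]

theorem im_rayG_neg {α A B r : ℝ} (hα : 0 < α) (hB : 0 < B) (hAB : B < A) (hA : A < Real.pi)
    (hr : 0 ≤ r) : (rayG α A B r).im < 0 := by
  have hω : 0 < Real.sin (A - B) := Real.sin_pos_of_pos_of_lt_pi (by linarith) (by linarith)
  have hsA : 0 < Real.sin A := Real.sin_pos_of_pos_of_lt_pi (by linarith) hA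
  have := pos_of_ne_zero_of_pos (f := fun r => -(rayG α A B r).im)
    (Complex.continuous_im.comp (continuous_rayG hα hω.ne')).neg ?_ (fun s _ h => ?_) hr
  · simpa using this
  · simp only [im_rayG_zero hα, neg_neg]
    exact Real.cos_pos_of_mem_Ioo ⟨by linarith, by linarith⟩
  · have h1 := two_mul_re_mul_im_rayG α A B s
    have h2 := re_sq_sub_im_sq_rayG α A B s
    rw [neg_eq_zero] at h
    simp only [h] at h1 h2
    have h3 : Real.sin B = s ^ α * Real.sin A := by linarith
    rw [Real.sin_sub, h3] at hω
    have h4 := congrArg (fun x => x * Real.sin A) h2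
    nlinarith [mul_nonneg (sq_nonneg (rayG α A B s).re) hsA.le]

theorem re_rayG_nonneg {α A B r : ℝ} (hα : 0 < α) (hB : 0 < B) (hAB : B < A) (hA : A < Real.pi)
    (hr : 0 ≤ r) (h : r ^ α * Real.sin A ≤ Real.sin B) : 0 ≤ (rayG α A B r).re := by
  have h1 := two_mul_re_mul_im_rayG α A B r
  have h2 := im_rayG_neg hα hB hAB hA hr
  by_contra! h3
  nlinarith [mul_pos_of_neg_of_neg h3 h2]

theorem re_rayG_nonpos {α A B r : ℝ} (hα : 0 < α) (hB : 0 < B) (hAB : B < A) (hA : A < Real.pi)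
    (hr : 0 ≤ r) (h : Real.sin B ≤ r ^ α * Real.sin A) : (rayG α A B r).re ≤ 0 := by
  have h1 := two_mul_re_mul_im_rayG α A B r
  have h2 := im_rayG_neg hα hB hAB hA hr
  by_contra! h3
  nlinarith [mul_neg_of_pos_of_neg h3 h2]

theorem rayS_eq (α A B T : ℝ) : rayS α A B T = -Complex.I *
    Complex.exp (Complex.I * ((B / 2 : ℝ) : ℂ)) *
      ∫ r in (0 : ℝ)..T, rayH α (A - B) r ^ ((1 / 2 : ℝ) : ℂ) := by
  rw [← intervalIntegral.integral_const_mul]; rfl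

theorem arcS_eq (α ψ T η₀ η : ℝ) : arcS α ψ T η₀ η = -Complex.exp (Complex.I * ψ) *
    ∫ s in η₀..η, Complex.I * rayPt s T * arcRoot α T s := by
  rw [← intervalIntegral.integral_const_mul, arcS]
  refine intervalIntegral.integral_congr fun s _ => ?_
  simp only [arcG]; ring

/-- The total action along the lower ray, the arc and the upper ray. -/
theorem re_total_action {α β γ ψ T A B A' B' : ℝ} (hα : 0 < α) (hβ : 0 < β)
    (hαβ : α * β < Real.pi) (hγ : 0 < γ) (hαγ : α * γ < Real.pi) (hT : 1 < T)
    (hA : A = 2 * ψ + 2 * β + α * β) (hB : B = 2 * ψ + 2 * β)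
    (hA' : A' = 2 * ψ + 2 * -γ + α * -γ) (hB' : B' = 2 * ψ + 2 * -γ) :
    -(rayS α A' B' T).re + (arcS α ψ T (-γ) β).re - (rayS α A B T).re
      = -2 * (Real.sin ψ * ∫ u in (0 : ℝ)..1, √(1 - u ^ α)) := by
  have h := action_identity hα hβ hαβ hγ hαγ hT
  have e : -rayS α A' B' T + arcS α ψ T (-γ) β - rayS α A B T
      = ((2 * ∫ u in (0 : ℝ)..1, √(1 - u ^ α) : ℝ) : ℂ) *
        (Complex.I * Complex.exp ((ψ : ℂ) * Complex.I)) := by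
    have e1 : Complex.exp (Complex.I * ((B / 2 : ℝ) : ℂ))
        = Complex.exp ((ψ : ℂ) * Complex.I) * Complex.exp (Complex.I * β) := by
      rw [← Complex.exp_add, hB]; congr 1; push_cast; ring
    have e2 : Complex.exp (Complex.I * ((B' / 2 : ℝ) : ℂ))
        = Complex.exp ((ψ : ℂ) * Complex.I) * Complex.exp (Complex.I * ((-γ : ℝ) : ℂ)) := by
      rw [← Complex.exp_add, hB']; congr 1; push_cast; ring
    rw [rayS_eq, rayS_eq, arcS_eq, e1, e2, show A - B = α * β by rw [hA, hB]; ring,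
      show A' - B' = α * -γ by rw [hA', hB']; ring, mul_comm Complex.I (ψ : ℂ)]
    push_cast at h ⊢
    linear_combination Complex.exp ((ψ : ℂ) * Complex.I) * h
  have := congrArg Complex.re e
  rw [Complex.re_ofReal_mul, Complex.I_mul_re, Complex.exp_ofReal_mul_I_im, Complex.sub_re,
    Complex.add_re, Complex.neg_re] at this
  rw [this]; ring

theorem holSol_smul (Λ : ℂ) (α : ℝ) (s a b x : ℂ) :
    holSol Λ α (s * a) (s * b) x = s * holSol Λ α a b x := by
  unfold holSol; ring

theorem holSolDeriv_smul (Λ : ℂ) (α : ℝ) (s a b x : ℂ) :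
    holSolDeriv Λ α (s * a) (s * b) x = s * holSolDeriv Λ α a b x := by
  unfold holSolDeriv; ring

/-! ### The solution recessive at infinity -/

/-- Admissible angles: `ψ` is the argument of the large parameter, the upper ray has angle `β` and
the lower ray has angle `-γ`. -/
structure WellAngles (α ψ β γ : ℝ) : Prop where
  alpha_pos : 0 < α
  alpha_lt_two : α < 2
  beta_pos : 0 < β
  psi_pos : 0 < ψ
  upper_lt : 2 * ψ + 2 * β + α * β < Real.pi
  gamma_eq : (α + 2) * γ = ψ

namespace WellAngles
variable {α ψ β γ : ℝ}

theorem gamma_pos (h : WellAngles α ψ β γ) : 0 < γ := by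
  have := h.psi_pos
  rw [← h.gamma_eq] at this
  exact pos_of_mul_pos_right this (by linarith [h.alpha_pos])

theorem alpha_mul_beta_pos (h : WellAngles α ψ β γ) : 0 < α * β := mul_pos h.alpha_pos h.beta_pos

theorem alpha_mul_gamma_pos (h : WellAngles α ψ β γ) : 0 < α * γ := mul_pos h.alpha_pos h.gamma_pos

theorem gamma_lt (h : WellAngles α ψ β γ) : γ < Real.pi := by
  nlinarith [h.gamma_eq, h.alpha_mul_gamma_pos, h.alpha_mul_beta_pos, h.upper_lt, h.beta_pos,
    h.gamma_pos]

theorem beta_lt (h : WellAngles α ψ β γ) : β < Real.pi := by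
  nlinarith [h.alpha_mul_beta_pos, h.upper_lt, h.beta_pos, h.psi_pos]

theorem alpha_mul_beta_lt (h : WellAngles α ψ β γ) : α * β < Real.pi := by
  nlinarith [h.upper_lt, h.beta_pos, h.psi_pos]

theorem alpha_mul_gamma_lt (h : WellAngles α ψ β γ) : α * γ < Real.pi := by
  nlinarith [h.gamma_eq, h.alpha_mul_beta_pos, h.upper_lt, h.beta_pos, h.gamma_pos, h.psi_pos]

theorem abs_beta_lt (h : WellAngles α ψ β γ) : |β| < Real.pi := by
  rw [abs_of_pos h.beta_pos]; exact h.beta_lt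

theorem abs_neg_gamma_lt (h : WellAngles α ψ β γ) : |-γ| < Real.pi := by
  rw [abs_neg, abs_of_pos h.gamma_pos]; exact h.gamma_lt

theorem lower_eq (h : WellAngles α ψ β γ) : ψ = 2 * ψ + 2 * -γ + α * -γ := by
  linarith [h.gamma_eq]

end WellAngles

/-- The solution which is a pure decaying mode at distance `T` on the lower ray. -/
theorem exists_holSol_lower {α ψ β γ k T : ℝ} (hw : WellAngles α ψ β γ)
    (hc : RayControl α ψ (2 * ψ + 2 * -γ) k) (hT : 0 < T) :
    ∃ m : ℂ, ‖m‖ ≤ 3 * k ∧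
      (k ^ 2 * ‖rayH α (α * -γ) T‖ *
          ‖holSol ((k * Complex.exp (Complex.I * ψ)) ^ 2) α 1 m (rayPt (-γ) T)‖ ^ 2
        + ‖holSolDeriv ((k * Complex.exp (Complex.I * ψ)) ^ 2) α 1 m (rayPt (-γ) T)‖ ^ 2)
        / (‖rayH α (α * -γ) T‖ ^ (1 / 4 : ℝ)) ^ 2
      ≤ 8 * k ^ 2 * Real.exp (-2 * k * (rayS α ψ (2 * ψ + 2 * -γ) T).re) := by
  have hα := hw.alpha_pos
  set B := 2 * ψ + 2 * -γ with hB
  set Λ : ℂ := (k * Complex.exp (Complex.I * ψ)) ^ 2 with hΛ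
  set e : ℂ := Complex.exp (Complex.I * ((-γ : ℝ) : ℂ)) with he
  have he1 : ‖e‖ = 1 := by rw [he, mul_comm, Complex.norm_exp_ofReal_mul_I]
  have he0 : e ≠ 0 := Complex.exp_ne_zero _
  have hk : 1 ≤ k := hc.one_le
  have hkc : (k : ℂ) ≠ 0 := by exact_mod_cast (by linarith : k ≠ 0)
  have hAB : ψ - B = α * -γ := by linarith [hw.lower_eq]
  obtain ⟨a, b, h1, h2⟩ := exists_holSol_eq Λ hα hw.alpha_lt_two
    (rayPt_mem_slitPlane hT hw.abs_neg_gamma_lt) 1 (-(k * rayG α ψ B T) / e)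
  have hV := isHolSol_holSol Λ hα hw.alpha_lt_two a b
  have hs : IsPathSol k 0 T (rayG α ψ B) 1 _ _ :=
    hV.isPathSol_ray (η := -γ) hw.abs_neg_gamma_lt hw.lower_eq rfl le_rfl
  have hG : ∀ s ∈ Ioo 0 T, 0 ≤ (rayG α ψ B s).re := fun s hs =>
    (re_rayG_pos hα hw.psi_pos (by linarith [hw.lower_eq, hw.alpha_mul_gamma_pos])
      (by linarith [hw.gamma_pos, hw.upper_lt, hw.alpha_mul_beta_pos, hw.beta_pos]) hs.1.le).le
  have hY : e * holSolDeriv Λ α a b (rayPt (-γ) T) = -(k * rayG α ψ B T) := by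
    rw [h2]; field_simp
  have hpure : k * rayG α ψ B T * holSol Λ α a b (rayPt (-γ) T)
      + e * holSolDeriv Λ α a b (rayPt (-γ) T) = 0 := by
    rw [h1, hY]; ring
  have hd := hc.decaying le_rfl hs hG hpure (left_mem_Icc.2 hT.le)
  simp only at hd
  set K := ‖k * rayG α ψ B T * holSol Λ α a b (rayPt (-γ) T)
      - e * holSolDeriv Λ α a b (rayPt (-γ) T)‖ / ‖rayF α ψ B k (-1) T‖ with hK
  have hF : 0 < ‖rayF α ψ B k (-1) T‖ := norm_pos_iff.2 (rayF_ne_zero hc.sin_ne _ _ _)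
  have hKpos : 0 < K := by
    refine div_pos (norm_pos_iff.2 ?_) hF
    rw [h1, hY]
    have := rayG_ne_zero (α := α) hc.sin_ne T
    rw [mul_one, sub_neg_eq_add, ← two_mul]
    exact mul_ne_zero two_ne_zero (mul_ne_zero hkc this)
  have hr0 : rayPt (-γ) 0 = 0 := by simp [rayPt]
  rw [hr0, holSol_zero hα, holSolDeriv_zero hα, rayF_zero hα, norm_one, mul_one, mul_one,
    mul_one] at hd
  obtain ⟨d1, d2, d3⟩ := hd
  have hg0 : ‖rayG α ψ B 0‖ = 1 := by rw [norm_rayG, rayH_zero hα]; simp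
  have hka : K / 2 ≤ 2 * k * ‖a‖ := by
    have e1 : 2 * (k * rayG α ψ B 0 * a)
        = (k * rayG α ψ B 0 * a - e * b) + (k * rayG α ψ B 0 * a + e * b) := by ring
    have e2 : ‖2 * (k * rayG α ψ B 0 * a)‖ = 2 * k * ‖a‖ := by
      rw [norm_mul, norm_mul, norm_mul, hg0, Complex.norm_of_nonneg (by linarith)]
      norm_num; ring
    have e3 := norm_sub_norm_le (k * rayG α ψ B 0 * a - e * b) (-(k * rayG α ψ B 0 * a + e * b))
    rw [sub_neg_eq_add, ← e1, e2, norm_neg] at e3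
    linarith
  have hb : ‖b‖ ≤ 3 / 4 * K := by
    have e1 : 2 * (e * b)
        = (k * rayG α ψ B 0 * a + e * b) - (k * rayG α ψ B 0 * a - e * b) := by ring
    have e2 : ‖2 * (e * b)‖ = 2 * ‖b‖ := by rw [norm_mul, norm_mul, he1]; norm_num
    have e3 := norm_sub_le (k * rayG α ψ B 0 * a + e * b) (k * rayG α ψ B 0 * a - e * b)
    rw [← e1, e2] at e3
    linarith
  have hapos : 0 < ‖a‖ := by
    by_contra! h
    nlinarith
  have ha0 : a ≠ 0 := norm_pos_iff.1 hapos
  refine ⟨a⁻¹ * b, ?_, ?_⟩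
  · rw [norm_mul, norm_inv, inv_mul_le_iff₀ hapos]
    linarith
  have hone : (1 : ℂ) = a⁻¹ * a := (inv_mul_cancel₀ ha0).symm
  rw [hone, holSol_smul, holSolDeriv_smul, norm_mul, norm_mul, norm_inv]
  have hE := parallelogram_modes k (rayG α ψ B T) (holSol Λ α a b (rayPt (-γ) T))
    (e * holSolDeriv Λ α a b (rayPt (-γ) T))
  have hM : ‖k * rayG α ψ B T * holSol Λ α a b (rayPt (-γ) T)
      - e * holSolDeriv Λ α a b (rayPt (-γ) T)‖ = K * ‖rayF α ψ B k (-1) T‖ := by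
    rw [hK, div_mul_cancel₀ _ hF.ne']
  have hg2 : ‖rayG α ψ B T‖ ^ 2 = ‖rayH α (α * -γ) T‖ := by
    rw [norm_rayG, hAB, ← Real.rpow_natCast, ← Real.rpow_mul (norm_nonneg _)]; norm_num
  rw [hpure, norm_zero, hM, hg2, norm_rayF, hAB, norm_mul e, he1, one_mul] at hE
  have hh : 0 < ‖rayH α (α * -γ) T‖ ^ (1 / 4 : ℝ) :=
    Real.rpow_pos_of_pos (norm_pos_iff.2 (rayH_ne_zero (hAB ▸ hc.sin_ne) T)) _
  have hexp : Real.exp (-2 * k * (rayS α ψ B T).re)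
      = Real.exp (k * -1 * (rayS α ψ B T).re) ^ 2 := by
    rw [← Real.exp_nat_mul]; congr 1; push_cast; ring
  rw [div_le_iff₀ (by positivity), hexp]
  set E := Real.exp (k * -1 * (rayS α ψ B T).re)
  set p := ‖rayH α (α * -γ) T‖ ^ (1 / 4 : ℝ)
  have hfin : k ^ 2 * ‖rayH α (α * -γ) T‖ * (‖a‖⁻¹ * ‖holSol Λ α a b (rayPt (-γ) T)‖) ^ 2
      + (‖a‖⁻¹ * ‖holSolDeriv Λ α a b (rayPt (-γ) T)‖) ^ 2
      = (K * ‖a‖⁻¹) ^ 2 * (p * E) ^ 2 / 2 := by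
    linear_combination (-(‖a‖⁻¹ ^ 2) / 2) * hE
  rw [hfin]
  have hKa : K * ‖a‖⁻¹ ≤ 4 * k := by
    rw [← div_eq_mul_inv, div_le_iff₀ hapos]; linarith
  have : (K * ‖a‖⁻¹) ^ 2 ≤ (4 * k) ^ 2 := pow_le_pow_left₀ (by positivity) hKa 2
  calc (K * ‖a‖⁻¹) ^ 2 * (p * E) ^ 2 / 2 ≤ (4 * k) ^ 2 * (p * E) ^ 2 / 2 := by gcongr
    _ = _ := by ring

/-- Radii for which the arc is a good path. -/
theorem WellAngles.exists_arc_radius {α ψ β γ : ℝ} (hw : WellAngles α ψ β γ) :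
    ∃ s c : ℝ, 0 < c ∧ (∀ η ∈ Icc (-γ) β, s ≤ Real.sin (ψ + (1 + α / 2) * η)) ∧
      (∀ η ∈ Icc (-γ) β, c ≤ Real.cos (α * η / 2)) ∧
      ∀ᶠ T : ℝ in Filter.atTop, 1 < T ∧ 2 ≤ T ^ α ∧ 1 ≤ T ^ α * s * c := by
  have hα := hw.alpha_pos
  have hβ := hw.beta_pos
  have hψ := hw.psi_pos
  have hγ := hw.gamma_pos
  have hs0 : 0 < Real.sin (ψ / 2) := Real.sin_pos_of_pos_of_lt_pi (by linarith)
    (by linarith [hw.upper_lt, hw.alpha_mul_beta_pos])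
  have hc0 : 0 < Real.cos (α * (β + γ) / 2) := Real.cos_pos_of_mem_Ioo
    ⟨by nlinarith [Real.pi_pos], by nlinarith [hw.upper_lt, hw.gamma_eq]⟩
  refine ⟨Real.sin (ψ / 2), Real.cos (α * (β + γ) / 2), hc0, fun η hη => ?_, fun η hη => ?_, ?_⟩
  · refine Real.sin_le_sin_of_le_of_le_pi_div_two (by linarith [Real.pi_pos]) ?_ ?_
    · nlinarith [hη.2, hw.upper_lt]
    · nlinarith [hη.1, hw.gamma_eq]
  · rw [← Real.cos_abs (α * η / 2)]
    refine Real.cos_le_cos_of_nonneg_of_le_pi (abs_nonneg _) ?_ ?_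
    · nlinarith [hw.upper_lt, hw.gamma_eq]
    · refine abs_le.2 ⟨?_, ?_⟩ <;> nlinarith [hη.1, hη.2]
  · have ht := tendsto_rpow_atTop hα
    filter_upwards [Filter.eventually_gt_atTop 1, ht.eventually_ge_atTop 2,
      ht.eventually_ge_atTop (1 / (Real.sin (ψ / 2) * Real.cos (α * (β + γ) / 2)))] with T h1 h2 h3
    refine ⟨h1, h2, ?_⟩
    rw [div_le_iff₀ (by positivity)] at h3
    linarith

/-- The energy of a solution at distance `r` on the upper ray. -/
noncomputable def rayEnergy (k α β : ℝ) (V V' : ℂ → ℂ) (r : ℝ) : ℝ :=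
  k ^ 2 * ‖rayH α (α * β) r‖ * ‖V (rayPt β r)‖ ^ 2 + ‖V' (rayPt β r)‖ ^ 2

section
variable {α ψ β γ k Z : ℝ}

theorem norm_rayG_sq (α A B r : ℝ) : ‖rayG α A B r‖ ^ 2 = ‖rayH α (A - B) r‖ := by
  rw [norm_rayG, ← Real.rpow_natCast, ← Real.rpow_mul (norm_nonneg _)]; norm_num

theorem exists_holSol_up_to (hw : WellAngles α ψ β γ)
    (hc : RayControl α ψ (2 * ψ + 2 * -γ) k)
    (hc' : RayControl α (2 * ψ + 2 * β + α * β) (2 * ψ + 2 * β) k) (hZ : 0 ≤ Z)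
    (hG : ∀ t, Z ≤ t → (rayG α (2 * ψ + 2 * β + α * β) (2 * ψ + 2 * β) t).re ≤ 0) :
    ∀ᶠ T in Filter.atTop, ∃ m : ℂ, ‖m‖ ≤ 3 * k ∧ ∀ t ∈ Icc Z T,
      rayEnergy k α β (holSol ((k * Complex.exp (Complex.I * ψ)) ^ 2) α 1 m)
          (holSolDeriv ((k * Complex.exp (Complex.I * ψ)) ^ 2) α 1 m) t
        ≤ 9 * Real.exp (5 * (β + γ)) * k ^ 2 * (‖rayH α (α * β) t‖ ^ (1 / 4 : ℝ)) ^ 2 *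
          Real.exp (2 * k * ((rayS α (2 * ψ + 2 * β + α * β) (2 * ψ + 2 * β) t).re
            - 2 * (Real.sin ψ * ∫ u in (0 : ℝ)..1, √(1 - u ^ α)))) := by
  have hα := hw.alpha_pos
  obtain ⟨s, c, hc0, hs, hcc, hev⟩ := hw.exists_arc_radius
  filter_upwards [hev] with T ⟨hT1, hT2, hT3⟩
  have hT0 : 0 < T := by linarith
  obtain ⟨m, hm, hlow⟩ := exists_holSol_lower hw hc hT0
  refine ⟨m, hm, fun t ht => ?_⟩
  set A := 2 * ψ + 2 * β + α * β with hA
  set B := 2 * ψ + 2 * β with hB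
  set Λ : ℂ := (k * Complex.exp (Complex.I * ψ)) ^ 2 with hΛ
  have hAB : A - B = α * β := by rw [hA, hB]; ring
  have hk : 1 ≤ k := hc.one_le
  have hV := isHolSol_holSol Λ hα hw.alpha_lt_two 1 m
  have harc := hV.arc_energy hα hw.alpha_lt_two (by linarith)
    (by linarith [hw.beta_pos, hw.gamma_pos]) hw.gamma_lt hw.beta_lt hw.alpha_mul_gamma_lt
    hw.alpha_mul_beta_lt hT1 hT2 hs hcc hc0 hT3
  have hup := hc'.energy_le (hZ.trans ht.1) ht.2
    (hV.isPathSol_ray (η := β) hw.abs_beta_lt rfl rfl (hZ.trans ht.1))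
    (fun r hr => hG r (ht.1.trans hr.1.le))
  have he1 : ‖Complex.exp (Complex.I * (β : ℂ))‖ = 1 := by
    rw [mul_comm, Complex.norm_exp_ofReal_mul_I]
  have hen : ∀ r, ‖k * rayG α A B r * holSol Λ α 1 m (rayPt β r)
        + Complex.exp (Complex.I * β) * holSolDeriv Λ α 1 m (rayPt β r)‖ ^ 2
      + ‖k * rayG α A B r * holSol Λ α 1 m (rayPt β r)
        - Complex.exp (Complex.I * β) * holSolDeriv Λ α 1 m (rayPt β r)‖ ^ 2
      = 2 * rayEnergy k α β (holSol Λ α 1 m) (holSolDeriv Λ α 1 m) r := fun r => by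
    rw [parallelogram_modes, norm_rayG_sq, hAB, norm_mul, he1, one_mul, rayEnergy]
  rw [hen, hen, norm_rayF, norm_rayF, hAB] at hup
  have htot := re_total_action hα hw.beta_pos hw.alpha_mul_beta_lt hw.gamma_pos
    hw.alpha_mul_gamma_lt hT1 hA hB hw.lower_eq rfl
  have hpos : ∀ r, 0 < ‖rayH α (α * β) r‖ ^ (1 / 4 : ℝ) := fun r =>
    Real.rpow_pos_of_pos (norm_pos_iff.2 (rayH_ne_zero (hAB ▸ hc'.sin_ne) r)) _
  have hfold : rayEnergy k α β (holSol Λ α 1 m) (holSolDeriv Λ α 1 m) T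
      / (‖rayH α (α * β) T‖ ^ (1 / 4 : ℝ) * Real.exp (k * (arcS α ψ T (-γ) β).re)) ^ 2
      ≤ Real.exp (5 * (β + γ)) * (8 * k ^ 2 *
        Real.exp (-2 * k * (rayS α ψ (2 * ψ + 2 * -γ) T).re)) :=
    harc.trans (mul_le_mul_of_nonneg_left hlow (Real.exp_pos _).le)
  rw [div_le_iff₀ (pow_pos (mul_pos (hpos T) (Real.exp_pos _)) 2)] at hfold
  rw [div_le_iff₀ (pow_pos (mul_pos (hpos t) (Real.exp_pos _)) 2)] at hup
  have hdiv : 2 * rayEnergy k α β (holSol Λ α 1 m) (holSolDeriv Λ α 1 m) T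
      / (‖rayH α (α * β) T‖ ^ (1 / 4 : ℝ) * Real.exp (k * 1 * (rayS α A B T).re)) ^ 2
      ≤ 16 * Real.exp (5 * (β + γ)) * k ^ 2 *
        Real.exp (-4 * k * (Real.sin ψ * ∫ u in (0 : ℝ)..1, √(1 - u ^ α))) := by
    rw [div_le_iff₀ (pow_pos (mul_pos (hpos T) (Real.exp_pos _)) 2)]
    refine (mul_le_mul_of_nonneg_left hfold zero_le_two).trans_eq ?_
    have e : Real.exp (-2 * k * (rayS α ψ (2 * ψ + 2 * -γ) T).re) *
        Real.exp (k * (arcS α ψ T (-γ) β).re) ^ 2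
        = Real.exp (-4 * k * (Real.sin ψ * ∫ u in (0 : ℝ)..1, √(1 - u ^ α))) *
          Real.exp (k * 1 * (rayS α A B T).re) ^ 2 := by
      rw [← Real.exp_nat_mul, ← Real.exp_nat_mul, ← Real.exp_add, ← Real.exp_add]
      congr 1
      push_cast
      linear_combination 2 * k * htot
    rw [mul_pow, mul_pow]
    linear_combination 16 * Real.exp (5 * (β + γ)) * k ^ 2 *
      (‖rayH α (α * β) T‖ ^ (1 / 4 : ℝ)) ^ 2 * e
  have e2 : Real.exp (2 * k * ((rayS α A B t).re
      - 2 * (Real.sin ψ * ∫ u in (0 : ℝ)..1, √(1 - u ^ α))))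
      = Real.exp (-4 * k * (Real.sin ψ * ∫ u in (0 : ℝ)..1, √(1 - u ^ α))) *
        Real.exp (k * 1 * (rayS α A B t).re) ^ 2 := by
    rw [← Real.exp_nat_mul, ← Real.exp_add]
    congr 1; push_cast; ring
  rw [e2]
  have h3 := hup.trans (mul_le_mul_of_nonneg_right (mul_le_mul_of_nonneg_left hdiv
    (by norm_num : (0 : ℝ) ≤ 17 / 16)) (sq_nonneg _))
  rw [mul_pow] at h3
  have hX : 0 ≤ Real.exp (5 * (β + γ)) * k ^ 2 *
      Real.exp (-4 * k * (Real.sin ψ * ∫ u in (0 : ℝ)..1, √(1 - u ^ α))) *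
      ((‖rayH α (α * β) t‖ ^ (1 / 4 : ℝ)) ^ 2 * Real.exp (k * 1 * (rayS α A B t).re) ^ 2) := by
    positivity
  linarith

/-- The normalised solution which is recessive at infinity along the upper ray. -/
theorem exists_recessive (hw : WellAngles α ψ β γ)
    (hc : RayControl α ψ (2 * ψ + 2 * -γ) k)
    (hc' : RayControl α (2 * ψ + 2 * β + α * β) (2 * ψ + 2 * β) k) (hZ : 0 ≤ Z)
    (hG : ∀ t, Z ≤ t → (rayG α (2 * ψ + 2 * β + α * β) (2 * ψ + 2 * β) t).re ≤ 0) :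
    ∃ m : ℂ, ‖m‖ ≤ 3 * k ∧ ∀ t, Z ≤ t →
      rayEnergy k α β (holSol ((k * Complex.exp (Complex.I * ψ)) ^ 2) α 1 m)
          (holSolDeriv ((k * Complex.exp (Complex.I * ψ)) ^ 2) α 1 m) t
        ≤ 9 * Real.exp (5 * (β + γ)) * k ^ 2 * (‖rayH α (α * β) t‖ ^ (1 / 4 : ℝ)) ^ 2 *
          Real.exp (2 * k * ((rayS α (2 * ψ + 2 * β + α * β) (2 * ψ + 2 * β) t).re
            - 2 * (Real.sin ψ * ∫ u in (0 : ℝ)..1, √(1 - u ^ α)))) := by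
  obtain ⟨N, hN⟩ := Filter.eventually_atTop.1 (exists_holSol_up_to hw hc hc' hZ hG)
  choose m hm hb using fun n : ℕ => hN (N + n) (by simp)
  obtain ⟨m₀, hm₀, φ, hφ, hlim⟩ := tendsto_subseq_of_bounded
    (Metric.isBounded_closedBall (x := (0 : ℂ)) (r := 3 * k))
    (fun n => mem_closedBall_zero_iff.2 (hm n))
  refine ⟨m₀, ?_, fun t ht => ?_⟩
  · rw [Metric.isClosed_closedBall.closure_eq] at hm₀
    exact mem_closedBall_zero_iff.1 hm₀
  · have hcont : Continuous fun m : ℂ => rayEnergy k α β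
        (holSol ((k * Complex.exp (Complex.I * ψ)) ^ 2) α 1 m)
        (holSolDeriv ((k * Complex.exp (Complex.I * ψ)) ^ 2) α 1 m) t := by
      unfold rayEnergy holSol holSolDeriv
      fun_prop
    refine le_of_tendsto ((hcont.tendsto m₀).comp hlim) ?_
    have h1 : Filter.Tendsto (fun n : ℕ => N + (φ n : ℝ)) Filter.atTop Filter.atTop :=
      Filter.tendsto_atTop_add_const_left _ _
        (tendsto_natCast_atTop_atTop.comp hφ.tendsto_atTop)
    filter_upwards [h1.eventually_ge_atTop t] with n hn
    exact hb (φ n) t ⟨ht, hn⟩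
end

section
variable {α ψ β γ k Z A B : ℝ} {W Y w y : ℝ → ℂ}

theorem IsPathSol.sub_mul {s₀ s₁ : ℝ} {g τ : ℝ → ℂ} (hW : IsPathSol k s₀ s₁ g τ W Y)
    (hw : IsPathSol k s₀ s₁ g τ w y) (ρ : ℂ) :
    IsPathSol k s₀ s₁ g τ (fun s => W s - ρ * w s) (fun s => Y s - ρ * y s) where
  cont_W := hW.cont_W.sub (continuousOn_const.mul hw.cont_W)
  cont_Y := hW.cont_Y.sub (continuousOn_const.mul hw.cont_Y)
  deriv_W s hs := by
    convert! (hW.deriv_W s hs).sub ((hw.deriv_W s hs).const_mul ρ) using 1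
    ring
  deriv_Y s hs := by
    convert! (hW.deriv_Y s hs).sub ((hw.deriv_Y s hs).const_mul ρ) using 1
    ring

/-- A solution is controlled by its decaying mode at the left end and its growing mode at the
right end. -/
theorem RayControl.two_point (hc : RayControl α A B k) (hZ : 0 ≤ Z)
    (hW : IsPathSol k 0 Z (rayG α A B) 1 W Y) (hw : IsPathSol k 0 Z (rayG α A B) 1 w y)
    (hG : ∀ s ∈ Ioo 0 Z, 0 ≤ (rayG α A B s).re)
    (hpure : k * rayG α A B Z * w Z + y Z = 0) (hne : k * rayG α A B Z * w Z - y Z ≠ 0)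
    {t : ℝ} (ht : t ∈ Icc 0 Z) :
    ‖k * rayG α A B t * W t‖ ≤ ‖k * rayG α A B 0 * W 0 - Y 0‖ * ‖rayF α A B k (-1) t‖
      + ‖k * rayG α A B Z * W Z + Y Z‖ / ‖rayF α A B k 1 Z‖ * ‖rayF α A B k 1 t‖ := by
  have h0 : (0 : ℝ) ∈ Icc 0 Z := left_mem_Icc.2 hZ
  have hZm : Z ∈ Icc 0 Z := right_mem_Icc.2 hZ
  have hF0 : ∀ ε, ‖rayF α A B k ε 0‖ = 1 := fun ε => by
    rw [rayF_zero hc.alpha_pos, norm_one]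
  have hFpos : ∀ ε s, 0 < ‖rayF α A B k ε s‖ := fun ε s =>
    norm_pos_iff.2 (rayF_ne_zero hc.sin_ne _ _ _)
  obtain ⟨hd, -, -⟩ := hc.decaying le_rfl hw hG hpure h0
  obtain ⟨-, hd1, hd2⟩ := hc.decaying le_rfl hw hG hpure ht
  set K := ‖k * rayG α A B Z * w Z - y Z‖ / ‖rayF α A B k (-1) Z‖ with hK
  have hKpos : 0 < K := div_pos (norm_pos_iff.2 hne) (hFpos _ _)
  rw [hF0, mul_one] at hd
  have hm0 : k * rayG α A B 0 * w 0 - y 0 ≠ 0 := by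
    rw [← norm_pos_iff]; linarith
  set ρ := (k * rayG α A B 0 * W 0 - Y 0) / (k * rayG α A B 0 * w 0 - y 0) with hρ
  have hρm : ρ * (k * rayG α A B 0 * w 0 - y 0) = k * rayG α A B 0 * W 0 - Y 0 :=
    div_mul_cancel₀ _ hm0
  have hρn : ‖ρ‖ * (3 / 4 * K) ≤ ‖k * rayG α A B 0 * W 0 - Y 0‖ := by
    rw [← hρm, norm_mul]
    exact mul_le_mul_of_nonneg_left hd (norm_nonneg _)
  have hX := hW.sub_mul hw ρ
  have hXp : k * rayG α A B 0 * (W 0 - ρ * w 0) - (Y 0 - ρ * y 0) = 0 := by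
    linear_combination -hρm
  have hXZ : k * rayG α A B Z * (W Z - ρ * w Z) + (Y Z - ρ * y Z)
      = k * rayG α A B Z * W Z + Y Z := by linear_combination -ρ * hpure
  obtain ⟨hg, -, -⟩ := hc.growing le_rfl hX hG hXp hZm
  obtain ⟨-, hg1, hg2⟩ := hc.growing le_rfl hX hG hXp ht
  rw [hF0, div_one] at hg hg1 hg2
  rw [hXZ] at hg
  set L := ‖k * rayG α A B 0 * (W 0 - ρ * w 0) + (Y 0 - ρ * y 0)‖ with hL
  have hLn : 3 / 4 * L ≤ ‖k * rayG α A B Z * W Z + Y Z‖ / ‖rayF α A B k 1 Z‖ := by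
    rwa [le_div_iff₀ (hFpos _ _)]
  have hhalf : ∀ a b : ℂ, 2 * ‖a‖ ≤ ‖a + b‖ + ‖a - b‖ := fun a b => by
    have := norm_add_le (a + b) (a - b)
    rwa [show a + b + (a - b) = 2 * a by ring, norm_mul, Complex.norm_ofNat] at this
  have hw1 := hhalf (k * rayG α A B t * w t) (y t)
  have hX1 := hhalf (k * rayG α A B t * (W t - ρ * w t)) (Y t - ρ * y t)
  have hsplit : k * rayG α A B t * W t
      = ρ * (k * rayG α A B t * w t) + k * rayG α A B t * (W t - ρ * w t) := by ring
  rw [hsplit]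
  refine (norm_add_le _ _).trans (add_le_add ?_ ?_)
  · rw [norm_mul]
    calc ‖ρ‖ * ‖k * rayG α A B t * w t‖ ≤ ‖ρ‖ * (3 / 4 * K * ‖rayF α A B k (-1) t‖) :=
          mul_le_mul_of_nonneg_left (by linarith) (norm_nonneg _)
      _ = ‖ρ‖ * (3 / 4 * K) * ‖rayF α A B k (-1) t‖ := by ring
      _ ≤ _ := mul_le_mul_of_nonneg_right hρn (norm_nonneg _)
  · calc ‖k * rayG α A B t * (W t - ρ * w t)‖ ≤ 3 / 4 * L * ‖rayF α A B k 1 t‖ := by linarith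
      _ ≤ _ := mul_le_mul_of_nonneg_right hLn (norm_nonneg _)

/-- Both pointwise bounds for the recessive solution on the upper ray. -/
theorem exists_recessive_bounds (hw : WellAngles α ψ β γ)
    (hc : RayControl α ψ (2 * ψ + 2 * -γ) k) (hA : A = 2 * ψ + 2 * β + α * β)
    (hB : B = 2 * ψ + 2 * β) (hc' : RayControl α A B k) (hZ : 0 < Z)
    (hG : ∀ t ∈ Icc 0 Z, 0 ≤ (rayG α A B t).re) (hG' : ∀ t, Z ≤ t → (rayG α A B t).re ≤ 0)
    {R : ℝ} (hR : R = Real.sin ψ * ∫ u in (0 : ℝ)..1, √(1 - u ^ α)) :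
    ∃ W Y : ℝ → ℂ, ContinuousOn W (Ici 0) ∧ (∀ t, 0 < t → HasDerivAt W (Y t) t) ∧
      (∀ t, 0 < t → HasDerivAt Y (k ^ 2 * rayG α A B t ^ 2 * W t) t) ∧ W 0 = 1 ∧
      (∀ t ∈ Icc 0 Z, ‖W t‖ ≤ 5 * Real.exp (5 * (β + γ)) * ‖rayH α (A - B) t‖ ^ (-(1 / 4 : ℝ)) *
        (Real.exp (k * ((rayS α A B t).re - 2 * R)) + Real.exp (-(k * (rayS α A B t).re)))) ∧
      ∀ t, Z < t → ‖W t‖ ≤ 5 * Real.exp (5 * (β + γ)) * ‖rayH α (A - B) t‖ ^ (-(1 / 4 : ℝ)) *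
        Real.exp (k * ((rayS α A B t).re - 2 * R)) := by
  have hα := hw.alpha_pos
  obtain ⟨m, hm, hb⟩ := exists_recessive hw hc (hA ▸ hB ▸ hc') hZ.le (hA ▸ hB ▸ hG')
  rw [← hA, ← hB, ← hR] at hb
  set Λ : ℂ := (k * Complex.exp (Complex.I * ψ)) ^ 2 with hΛ
  have hAB : A - B = α * β := by rw [hA, hB]; ring
  have hk : 1 ≤ k := hc.one_le
  have hk0 : 0 < k := by linarith
  have hV := isHolSol_holSol Λ hα hw.alpha_lt_two 1 m
  have hpt0 : rayPt β 0 = 0 := by simp [rayPt]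
  have he1 : ‖Complex.exp (Complex.I * (β : ℂ))‖ = 1 := by
    rw [mul_comm, Complex.norm_exp_ofReal_mul_I]
  have hhpos : ∀ r, 0 < ‖rayH α (α * β) r‖ := fun r =>
    norm_pos_iff.2 (rayH_ne_zero (hAB ▸ hc'.sin_ne) r)
  set D := 5 * Real.exp (5 * (β + γ)) with hD
  have hexp1 : 1 ≤ Real.exp (5 * (β + γ)) :=
    Real.one_le_exp (by linarith [hw.beta_pos, hw.gamma_pos])
  have hDpos : 0 < D := by positivity
  have hD2 : 18 * Real.exp (5 * (β + γ)) ≤ D ^ 2 := by rw [hD]; nlinarith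
  have hbsq : ∀ t, Z ≤ t → 2 * rayEnergy k α β (holSol Λ α 1 m) (holSolDeriv Λ α 1 m) t ≤
      (D * k * ‖rayH α (α * β) t‖ ^ (1 / 4 : ℝ) *
        Real.exp (k * ((rayS α A B t).re - 2 * R))) ^ 2 := fun t ht => by
    have e : Real.exp (2 * k * ((rayS α A B t).re - 2 * R))
        = Real.exp (k * ((rayS α A B t).re - 2 * R)) ^ 2 := by
      rw [← Real.exp_nat_mul]; congr 1; push_cast; ring
    have h1 := hb t ht
    rw [e] at h1
    calc _ ≤ 18 * Real.exp (5 * (β + γ)) * (k ^ 2 * (‖rayH α (α * β) t‖ ^ (1 / 4 : ℝ)) ^ 2 *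
          Real.exp (k * ((rayS α A B t).re - 2 * R)) ^ 2) := by linarith
      _ ≤ D ^ 2 * (k ^ 2 * (‖rayH α (α * β) t‖ ^ (1 / 4 : ℝ)) ^ 2 *
          Real.exp (k * ((rayS α A B t).re - 2 * R)) ^ 2) :=
          mul_le_mul_of_nonneg_right hD2 (by positivity)
      _ = _ := by ring
  have hconv : ∀ (t x : ℝ) (v : ℂ), ‖k * rayG α A B t * v‖ ≤
      D * k * ‖rayH α (α * β) t‖ ^ (1 / 4 : ℝ) * x →
      ‖v‖ ≤ D * ‖rayH α (α * β) t‖ ^ (-(1 / 4 : ℝ)) * x := fun t x v h => by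
    rw [norm_mul, norm_mul, norm_rayG, hAB, Complex.norm_real, Real.norm_of_nonneg hk0.le] at h
    have e1 : ‖rayH α (α * β) t‖ ^ (1 / 2 : ℝ)
        = ‖rayH α (α * β) t‖ ^ (1 / 4 : ℝ) * ‖rayH α (α * β) t‖ ^ (1 / 4 : ℝ) := by
      rw [← Real.rpow_add (hhpos t)]; norm_num
    rw [e1] at h
    rw [Real.rpow_neg (norm_nonneg _)]
    have hp := Real.rpow_pos_of_pos (hhpos t) (1 / 4 : ℝ)
    set p := ‖rayH α (α * β) t‖ ^ (1 / 4 : ℝ)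
    have h2 : p * ‖v‖ ≤ D * x := by
      refine le_of_mul_le_mul_left ?_ (mul_pos hk0 hp)
      linarith
    rw [show D * p⁻¹ * x = D * x / p by ring, le_div_iff₀ hp]
    linarith
  refine ⟨fun r => holSol Λ α 1 m (rayPt β r),
    fun r => Complex.exp (Complex.I * β) * holSolDeriv Λ α 1 m (rayPt β r),
    hV.continuousOn_ray hw.abs_beta_lt, fun t ht => hV.hasDerivAt_ray hw.abs_beta_lt ht,
    fun t ht => ?_, ?_, fun t ht => ?_, fun t ht => ?_⟩
  · rw [hA, hB]
    exact hV.hasDerivAt_ray_deriv hw.abs_beta_lt ht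
  · simp only [hpt0, holSol_zero hα]
  · obtain ⟨a, b, hab, hab'⟩ := exists_holSol_eq Λ hα hw.alpha_lt_two
      (rayPt_mem_slitPlane hZ hw.abs_beta_lt) 1
      (-(Complex.exp (Complex.I * β))⁻¹ * (k * rayG α A B Z))
    have hgZ : rayG α A B Z ≠ 0 := rayG_ne_zero hc'.sin_ne Z
    have heZ : Complex.exp (Complex.I * (β : ℂ)) *
        (-(Complex.exp (Complex.I * β))⁻¹ * (k * rayG α A B Z)) = -(k * rayG α A B Z) := by
      rw [← mul_assoc, mul_neg, mul_inv_cancel₀ (Complex.exp_ne_zero _)]; ring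
    have h2 := hc'.two_point hZ.le (hV.isPathSol_ray hw.abs_beta_lt hA hB le_rfl)
      ((isHolSol_holSol Λ hα hw.alpha_lt_two a b).isPathSol_ray hw.abs_beta_lt hA hB le_rfl)
      (fun s hs => hG s (Ioo_subset_Icc_self hs))
      (by rw [hab, hab', heZ]; ring)
      (by
        rw [hab, hab', heZ, mul_one, sub_neg_eq_add, ← two_mul]
        exact mul_ne_zero two_ne_zero (mul_ne_zero (by exact_mod_cast hk0.ne') hgZ)) ht
    simp only [hpt0, holSol_zero hα, holSolDeriv_zero hα, mul_one] at h2
    have hM : ‖k * rayG α A B 0 - Complex.exp (Complex.I * β) * m‖ ≤ D * k := by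
      refine (norm_sub_le _ _).trans ?_
      rw [norm_mul, norm_mul, he1, norm_rayG, rayH_zero hα, norm_one, Real.one_rpow,
        Complex.norm_real, Real.norm_of_nonneg hk0.le]
      rw [hD]; nlinarith
    have hP : ‖k * rayG α A B Z * holSol Λ α 1 m (rayPt β Z)
        + Complex.exp (Complex.I * β) * holSolDeriv Λ α 1 m (rayPt β Z)‖ ≤
        D * k * ‖rayH α (α * β) Z‖ ^ (1 / 4 : ℝ) *
          Real.exp (k * ((rayS α A B Z).re - 2 * R)) := by
      refine le_of_sq_le_sq ?_ (by positivity)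
      refine le_trans ?_ (hbsq Z le_rfl)
      have := parallelogram_modes k (rayG α A B Z) (holSol Λ α 1 m (rayPt β Z))
        (Complex.exp (Complex.I * β) * holSolDeriv Λ α 1 m (rayPt β Z))
      rw [norm_rayG_sq, hAB, norm_mul (Complex.exp _), he1, one_mul] at this
      rw [rayEnergy]
      nlinarith [sq_nonneg ‖k * rayG α A B Z * holSol Λ α 1 m (rayPt β Z)
        - Complex.exp (Complex.I * β) * holSolDeriv Λ α 1 m (rayPt β Z)‖]
    have hPF : ‖k * rayG α A B Z * holSol Λ α 1 m (rayPt β Z)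
        + Complex.exp (Complex.I * β) * holSolDeriv Λ α 1 m (rayPt β Z)‖ / ‖rayF α A B k 1 Z‖
        ≤ D * k * Real.exp (-(2 * k * R)) := by
      rw [div_le_iff₀ (norm_pos_iff.2 (rayF_ne_zero hc'.sin_ne _ _ _)), norm_rayF, hAB]
      refine hP.trans_eq ?_
      rw [show k * ((rayS α A B Z).re - 2 * R) = -(2 * k * R) + k * 1 * (rayS α A B Z).re by ring,
        Real.exp_add]
      ring
    rw [hAB]
    refine hconv t _ _ (h2.trans ?_)
    refine (add_le_add (mul_le_mul_of_nonneg_right hM (norm_nonneg _))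
      (mul_le_mul_of_nonneg_right hPF (norm_nonneg _))).trans_eq ?_
    rw [norm_rayF, norm_rayF, hAB,
      show k * ((rayS α A B t).re - 2 * R) = -(2 * k * R) + k * 1 * (rayS α A B t).re by ring,
      show -(k * (rayS α A B t).re) = k * -1 * (rayS α A B t).re by ring, Real.exp_add]
    ring
  · rw [hAB]
    refine hconv t _ _ (le_of_sq_le_sq ?_ (by positivity))
    refine le_trans ?_ (hbsq t ht.le)
    rw [rayEnergy, norm_mul, norm_mul, mul_pow, mul_pow, norm_rayG_sq, hAB, Complex.norm_real,
      Real.norm_of_nonneg hk0.le]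
    have : 0 ≤ k ^ 2 * ‖rayH α (α * β) t‖ * ‖holSol Λ α 1 m (rayPt β t)‖ ^ 2 := by positivity
    nlinarith [sq_nonneg ‖holSolDeriv Λ α 1 m (rayPt β t)‖]
end

theorem one_add_cos_pos {x : ℝ} (h0 : 0 ≤ x) (h1 : x < Real.pi) : 0 < 1 + Real.cos x := by
  have := Real.cos_lt_cos_of_nonneg_of_le_pi h0 le_rfl h1
  rw [Real.cos_pi] at this
  linarith

/-- Functions obeying the recessive Liouville–Green bound are square integrable. -/
theorem integrableOn_sq_of_recessive {α A B k Z R D : ℝ} {W : ℝ → ℂ} (hα : 0 < α)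
    (hω : Real.sin (A - B) ≠ 0) (hA : 0 < 1 + Real.cos A) (hk : 0 < k) (hD : 0 ≤ D)
    (hG : ∀ t, Z ≤ t → (rayG α A B t).re ≤ 0) (hW : ContinuousOn W (Ici 0))
    (hb : ∀ t, Z < t → ‖W t‖ ≤ D * ‖rayH α (A - B) t‖ ^ (-(1 / 4 : ℝ)) *
        Real.exp (k * ((rayS α A B t).re - 2 * R))) :
    IntegrableOn (fun t => ‖W t‖ ^ 2) (Ioi 0) := by
  set c := √(1 + Real.cos A) / 2 with hc
  have hcpos : 0 < c := half_pos (Real.sqrt_pos.2 hA)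
  obtain ⟨T, hT⟩ := Filter.eventually_atTop.1
    (((tendsto_rpow_atTop hα).eventually_ge_atTop (4 / (1 + Real.cos A))).and
      ((Filter.eventually_ge_atTop 1).and (Filter.eventually_gt_atTop Z)))
  have hre : ∀ t, T ≤ t → (rayG α A B t).re ≤ -c := fun t ht => by
    obtain ⟨h1, h2, h3⟩ := hT t ht
    have h4 := abs_re_rayG_ge (B := B) hA (by linarith) h1
    rw [abs_of_nonpos (hG t h3.le)] at h4
    have h5 : (1 : ℝ) ≤ t ^ (α / 2) := Real.one_le_rpow h2 (by linarith)
    nlinarith [mul_le_mul_of_nonneg_left h5 hcpos.le]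
  have hder : ∀ t, HasDerivAt (fun s => (rayS α A B s).re) (rayG α A B t).re t := fun t =>
    (Complex.reCLM.hasFDerivAt.comp_hasDerivAt t (hasDerivAt_rayS hα hω t))
  have hS : ∀ t, T ≤ t → (rayS α A B t).re - (rayS α A B T).re ≤ -c * (t - T) := fun t ht =>
    (convex_Ici T).image_sub_le_mul_sub_of_deriv_le
      (fun s _ => (hder s).continuousAt.continuousWithinAt)
      (fun s _ => (hder s).differentiableAt.differentiableWithinAt)
      (fun s hs => by
        rw [interior_Ici] at hs
        rw [(hder s).deriv]
        exact hre s (le_of_lt hs)) T self_mem_Ici t ht ht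
  have hh : ∀ t, T ≤ t → ‖rayH α (A - B) t‖ ^ (-(1 / 4 : ℝ)) ≤ (c ^ 2) ^ (-(1 / 4 : ℝ)) :=
    fun t ht => by
      refine Real.rpow_le_rpow_of_nonpos (by positivity) ?_ (by norm_num)
      rw [← norm_rayG_sq]
      refine pow_le_pow_left₀ hcpos.le ?_ 2
      have := Complex.abs_re_le_norm (rayG α A B t)
      have h2 := neg_abs_le (rayG α A B t).re
      linarith [hre t ht]
  refine integrable_of_isBigO_exp_neg (b := 2 * k * c) (by positivity) (hW.norm.pow 2) ?_
  refine Asymptotics.IsBigO.of_bound ((D * (c ^ 2) ^ (-(1 / 4 : ℝ)) *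
    Real.exp (k * ((rayS α A B T).re + c * T - 2 * R))) ^ 2) ?_
  filter_upwards [Filter.eventually_ge_atTop T] with t ht
  have e : Real.exp (-(2 * k * c) * t) = Real.exp (-(k * c * t)) ^ 2 := by
    rw [← Real.exp_nat_mul]; congr 1; push_cast; ring
  rw [norm_pow, norm_norm, Real.norm_of_nonneg (Real.exp_pos _).le, e, ← mul_pow]
  refine pow_le_pow_left₀ (norm_nonneg _) ((hb t (hT t ht).2.2).trans ?_) 2
  rw [mul_assoc (D * (c ^ 2) ^ (-(1 / 4 : ℝ))), ← Real.exp_add]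
  refine mul_le_mul (mul_le_mul_of_nonneg_left (hh t ht) hD) (Real.exp_le_exp.2 ?_)
    (Real.exp_pos _).le (by positivity)
  nlinarith [mul_le_mul_of_nonneg_left (hS t ht) hk.le]

theorem WellAngles.eventually_rayControl_upper {α ψ β γ A B : ℝ} (hw : WellAngles α ψ β γ)
    (hA : A = 2 * ψ + 2 * β + α * β) (hB : B = 2 * ψ + 2 * β) :
    ∀ᶠ k in Filter.atTop, RayControl α A B k := by
  have h1 := hw.alpha_mul_beta_pos
  have h2 := hw.upper_lt
  have h3 := hw.psi_pos
  have h4 := hw.beta_pos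
  refine eventually_rayControl hw.alpha_pos ?_ (one_add_cos_pos (by linarith) (by linarith))
    (Real.sin_pos_of_pos_of_lt_pi (by linarith) (by linarith)).ne'
  exact (Real.sin_pos_of_pos_of_lt_pi (by linarith) (by linarith)).ne'

theorem WellAngles.eventually_rayControl_lower {α ψ β γ : ℝ} (hw : WellAngles α ψ β γ) :
    ∀ᶠ k in Filter.atTop, RayControl α ψ (2 * ψ + 2 * -γ) k := by
  have h1 := hw.alpha_mul_beta_pos
  have h2 := hw.upper_lt
  have h3 := hw.psi_pos
  have h4 := hw.beta_pos
  have h5 := hw.gamma_eq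
  have h6 := hw.gamma_pos
  refine eventually_rayControl hw.alpha_pos ?_ (one_add_cos_pos (by linarith) (by linarith))
    (Real.sin_pos_of_pos_of_lt_pi (by linarith) (by linarith)).ne'
  rw [show ψ - (2 * ψ + 2 * -γ) = -(α * γ) by linear_combination h5, Real.sin_neg]
  exact neg_ne_zero.2
    (ne_of_gt (Real.sin_pos_of_pos_of_lt_pi hw.alpha_mul_gamma_pos (by linarith)))

/-- The substitution turning the angles of the potential into those of the contour. -/
theorem wellAngles_of_bounds {α θ δ φ : ℝ} (hα0 : 0 < α) (hα2 : α < 2) (hθ1 : t0 α ≤ θ)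
    (hθ2 : θ < min Real.pi (Real.pi * α)) (hδ2 : δ < (Real.pi * min 1 α - θ) / 2)
    (hφ1 : t0 α - δ < φ) (hφ2 : φ < t0 α) :
    WellAngles α ((φ - θ) / α + φ / 2) ((θ - φ) / α) (((φ - θ) / α + φ / 2) / (α + 2)) := by
  have hα := hα0.ne'
  have hpi := Real.pi_pos
  have ht0 : t0 α * (α + 2) = 2 * Real.pi * α := by
    rw [t0]; exact div_mul_cancel₀ _ (by linarith)
  have hθπ : θ < Real.pi := hθ2.trans_le (min_le_left _ _)
  have hθα : θ < Real.pi * α := hθ2.trans_le (min_le_right _ _)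
  have hδ : δ < (Real.pi * α - θ) / 2 := by
    have := mul_le_mul_of_nonneg_left (min_le_right 1 α) hpi.le
    linarith
  refine ⟨hα0, hα2, div_pos (by linarith) hα0, ?_, ?_, by field_simp⟩
  · have h1 : 0 < φ * (α + 2) - 2 * θ := by nlinarith
    rw [show (φ - θ) / α + φ / 2 = (φ * (α + 2) - 2 * θ) / (2 * α) by field_simp; ring]
    positivity
  · rw [show 2 * ((φ - θ) / α + φ / 2) + 2 * ((θ - φ) / α) + α * ((θ - φ) / α) = θ by
      field_simp; ring]
    exact hθπ

/-- with `c = e^{iθ}`, `μ = e^{iφ}`, `q(t) = c t^α − μ`,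
`Z₀ = (sin φ / sin θ)^{1/α}`, `g` the continuous branch of `√q` on `[0,∞)` with
`g(0) = −i e^{iφ/2}`, `S(t) = ∫₀^t g` and `R₀ = sin((φ−θ)/α + φ/2)·∫₀¹ √(1−u^α) du`:
there are `k₀, C > 0` so that for every `k ≥ k₀` there is a square-integrable solution
`W` of `W'' = k²(c t^α − μ)W` on `(0,∞)` with
`|W(t)| ≤ C|q(t)|^{−1/4}(e^{k(Re S(t) − 2R₀)} + e^{−k Re S(t)})` on `[0,Z₀]`,
`|W(t)| ≤ C|q(t)|^{−1/4} e^{k(Re S(t) − 2R₀)}` for `t > Z₀`, and `|W(0)| ≥ 1/C`. -/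
theorem stmt14 (α θ δ φ : ℝ) (hα0 : 0 < α) (hα2 : α < 2)
    (hθ1 : t0 α ≤ θ) (hθ2 : θ < min Real.pi (Real.pi * α))
    (hδ1 : 0 < δ) (hδ2 : δ < (Real.pi * min 1 α - θ) / 2)
    (hφ1 : t0 α - δ < φ) (hφ2 : φ < t0 α)
    (q : ℝ → ℂ)
    (hq : ∀ t : ℝ, q t = Complex.exp (Complex.I * (θ : ℂ)) * ((t ^ α : ℝ) : ℂ)
      - Complex.exp (Complex.I * (φ : ℂ)))
    (Z₀ : ℝ) (hZ₀ : Z₀ = (Real.sin φ / Real.sin θ) ^ (1 / α))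
    (g : ℝ → ℂ) (hgcont : ContinuousOn g (Set.Ici 0))
    (hgsq : ∀ t : ℝ, 0 ≤ t → g t ^ 2 = q t)
    (hg0 : g 0 = -Complex.I * Complex.exp (Complex.I * ((φ / 2 : ℝ) : ℂ)))
    (S : ℝ → ℂ) (hS : ∀ t : ℝ, S t = ∫ s in (0 : ℝ)..t, g s)
    (R₀ : ℝ)
    (hR₀ : R₀ = Real.sin ((φ - θ) / α + φ / 2) * ∫ u in (0 : ℝ)..1, Real.sqrt (1 - u ^ α)) :
    ∃ k₀ > (0 : ℝ), ∃ C > (0 : ℝ), ∀ k : ℝ, k₀ ≤ k →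
      ∃ W : ℝ → ℂ,
        ContinuousOn W (Set.Ici 0) ∧
        (∃ W' : ℝ → ℂ,
          (∀ t ∈ Set.Ioi (0 : ℝ), HasDerivAt W (W' t) t) ∧
          (∀ t ∈ Set.Ioi (0 : ℝ), HasDerivAt W' (((k : ℂ) ^ 2) * q t * W t) t)) ∧
        MeasureTheory.IntegrableOn (fun t => ‖W t‖ ^ 2) (Set.Ioi 0) ∧
        (∀ t ∈ Set.Icc (0 : ℝ) Z₀,
          ‖W t‖ ≤ C * ‖q t‖ ^ (-(1 / 4 : ℝ)) *
            (Real.exp (k * ((S t).re - 2 * R₀)) + Real.exp (-(k * (S t).re)))) ∧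
        (∀ t : ℝ, Z₀ < t →
          ‖W t‖ ≤ C * ‖q t‖ ^ (-(1 / 4 : ℝ)) * Real.exp (k * ((S t).re - 2 * R₀))) ∧
        1 / C ≤ ‖W 0‖ := by
  have hw := wellAngles_of_bounds hα0 hα2 hθ1 hθ2 hδ2 hφ1 hφ2
  set ψ := (φ - θ) / α + φ / 2 with hψ
  set β := (θ - φ) / α with hβ
  set γ := ψ / (α + 2) with hγ
  have hB : φ = 2 * ψ + 2 * β := by rw [hψ, hβ]; ring
  have hA : θ = 2 * ψ + 2 * β + α * β := by
    rw [← hB, hβ]; field_simp; ring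
  have hαβ := hw.alpha_mul_beta_pos
  have hφ0 : 0 < φ := by linarith [hw.psi_pos, hw.beta_pos]
  have hφθ : φ < θ := by linarith
  have hθπ : θ < Real.pi := hA ▸ hw.upper_lt
  have hsθ : 0 < Real.sin θ := Real.sin_pos_of_pos_of_lt_pi (by linarith) hθπ
  have hsφ : 0 < Real.sin φ := Real.sin_pos_of_pos_of_lt_pi hφ0 (by linarith)
  have hω : Real.sin (θ - φ) ≠ 0 :=
    (Real.sin_pos_of_pos_of_lt_pi (by linarith) (by linarith)).ne'
  have hZpos : 0 < Z₀ := hZ₀ ▸ Real.rpow_pos_of_pos (div_pos hsφ hsθ) _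
  have hZα : Z₀ ^ α = Real.sin φ / Real.sin θ := by
    rw [hZ₀, ← Real.rpow_mul (div_pos hsφ hsθ).le, one_div_mul_cancel hα0.ne', Real.rpow_one]
  have hZs : Z₀ ^ α * Real.sin θ = Real.sin φ := by rw [hZα, div_mul_cancel₀ _ hsθ.ne']
  have hG : ∀ t ∈ Icc 0 Z₀, 0 ≤ (rayG α θ φ t).re := fun t ht =>
    re_rayG_nonneg hα0 hφ0 hφθ hθπ ht.1 (hZs ▸ mul_le_mul_of_nonneg_right
      (Real.rpow_le_rpow ht.1 ht.2 hα0.le) hsθ.le)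
  have hG' : ∀ t, Z₀ ≤ t → (rayG α θ φ t).re ≤ 0 := fun t ht =>
    re_rayG_nonpos hα0 hφ0 hφθ hθπ (hZpos.le.trans ht) (hZs ▸ mul_le_mul_of_nonneg_right
      (Real.rpow_le_rpow hZpos.le ht hα0.le) hsθ.le)
  have hgray : EqOn g (rayG α θ φ) (Ici 0) :=
    isPreconnected_Ici.eq_of_sq_eq hgcont (continuous_rayG hα0 hω).continuousOn
      (fun t ht => by
        rw [Pi.pow_apply, Pi.pow_apply, hgsq t ht, rayG_sq, hq])
      (fun _ => rayG_ne_zero hω _) self_mem_Ici (by rw [hg0, rayG_zero hα0])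
  have hSray : ∀ t, 0 ≤ t → S t = rayS α θ φ t := fun t ht => by
    rw [hS, rayS]
    refine intervalIntegral.integral_congr fun s hs => hgray ?_
    rw [uIcc_of_le ht] at hs
    exact hs.1
  have hqray : ∀ t, q t = rayG α θ φ t ^ 2 := fun t => by rw [hq, rayG_sq]
  have hqnorm : ∀ t, ‖q t‖ = ‖rayH α (θ - φ) t‖ := fun t => by
    rw [hqray, norm_pow, norm_rayG_sq]
  obtain ⟨k₀, hk₀⟩ := Filter.eventually_atTop.1
    (hw.eventually_rayControl_lower.and (hw.eventually_rayControl_upper hA hB))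
  have hC1 : 1 ≤ 5 * Real.exp (5 * (β + γ)) := by
    have := Real.one_le_exp (x := 5 * (β + γ)) (by linarith [hw.beta_pos, hw.gamma_pos])
    linarith
  refine ⟨max k₀ 1, by positivity, 5 * Real.exp (5 * (β + γ)), by positivity, fun k hk => ?_⟩
  obtain ⟨hc, hc'⟩ := hk₀ k ((le_max_left _ _).trans hk)
  obtain ⟨W, Y, hWc, hWd, hYd, hW0, hb1, hb2⟩ :=
    exists_recessive_bounds hw hc hA hB hc' hZpos hG hG' hR₀
  refine ⟨W, hWc, ⟨Y, hWd, fun t ht => hqray t ▸ hYd t ht⟩,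
    integrableOn_sq_of_recessive hα0 hω hc'.cos_gt (by linarith [hc.one_le]) (by linarith) hG' hWc
      hb2, fun t ht => ?_, fun t ht => ?_, ?_⟩
  · rw [hqnorm, hSray t ht.1]
    exact hb1 t ht
  · rw [hqnorm, hSray t (hZpos.le.trans ht.le)]
    exact hb2 t ht
  · rw [hW0, norm_one]
    exact (div_le_one (by linarith)).2 hC1
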